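/- arXiv:math/9910160 — 4 statements merged into one kernel-verified Lean document; each statement's English description precedes it below -/
import Mathlib

section
/- For every p with 2 ≤ p ≤ ∞, every n ≥ 1, and every continuous function f : B_{ℓ_pⁿ} → ℝ with ω₂(f;B_{ℓ_pⁿ}) ≤ 1, there exists an affine function φ on ℝⁿ such that sup_{x∈B_{ℓ_pⁿ}} |f(x) − φ(x)| ≤ 1602. (Theorem 3.8(c): sup_{2≤p≤∞} sup_n w₂(ℓ_pⁿ) ≤ 1602.) -/
open Finset

/-- `diffBound m K f c` says that the `m`-th modulus of smoothness of `f` on `K` is at most `c`,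
i.e. `|Δ_h^m f(x)| ≤ c` whenever `x, x+h, …, x+mh ∈ K`. -/
def diffBound {E : Type*} [AddCommGroup E] [Module ℝ E] (m : ℕ) (K : Set E) (f : E → ℝ)
    (c : ℝ) : Prop :=
  ∀ x h : E, (∀ j : ℕ, j ≤ m → x + (j : ℝ) • h ∈ K) →
    |∑ j ∈ Finset.range (m + 1), (-1 : ℝ) ^ (m - j) * (m.choose j : ℝ) * f (x + (j : ℝ) • h)| ≤ c

/-- The closed unit ball of `ℓ_pⁿ` (for real `p > 0`). -/
noncomputable def lpBall (n : ℕ) (p : ℝ) : Set (Fin n → ℝ) := {x | ∑ i, |x i| ^ p ≤ 1}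

/-- The closed unit ball of `ℓ_∞ⁿ`. -/
def lInftyBall (n : ℕ) : Set (Fin n → ℝ) := {x | ∀ i, |x i| ≤ 1}


theorem perm_step {V : Type} [Fintype V] [DecidableEq V] (U A : Finset V) (a : V) (ha : a ∉ A) :
    (#{σ : Equiv.Perm V | ∀ i ∈ insert a A, σ i ∈ U} : ℝ) * Fintype.card V ≤
      (#{σ : Equiv.Perm V | ∀ i ∈ A, σ i ∈ U} : ℝ) * #U := by
  set G : Finset (Equiv.Perm V) := {σ : Equiv.Perm V | ∀ i ∈ A, σ i ∈ U} with hG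
  set G' : Finset (Equiv.Perm V) := {σ : Equiv.Perm V | ∀ i ∈ insert a A, σ i ∈ U} with hG'
  have h1 : ∀ b ∈ Aᶜ, #{σ ∈ G | σ b ∈ U} = #G' := by
    intro b hb
    rw [mem_compl] at hb
    refine Finset.card_bij' (fun σ _ => σ * Equiv.swap a b) (fun σ _ => σ * Equiv.swap a b)
      ?_ ?_ ?_ ?_
    · intro σ hσ
      simp only [hG, hG', mem_filter, mem_univ, true_and, mem_insert, forall_eq_or_imp,
        Equiv.Perm.mul_apply, Equiv.swap_apply_left] at hσ ⊢
      refine ⟨hσ.2, fun i hi => ?_⟩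
      rw [Equiv.swap_apply_of_ne_of_ne (by rintro rfl; exact ha hi) (by rintro rfl; exact hb hi)]
      exact hσ.1 i hi
    · intro σ hσ
      simp only [hG, hG', mem_filter, mem_univ, true_and, mem_insert, forall_eq_or_imp,
        Equiv.Perm.mul_apply, Equiv.swap_apply_right] at hσ ⊢
      refine ⟨fun i hi => ?_, hσ.1⟩
      rw [Equiv.swap_apply_of_ne_of_ne (by rintro rfl; exact ha hi) (by rintro rfl; exact hb hi)]
      exact hσ.2 i hi
    · intro σ _; simp [mul_assoc]
    · intro σ _; simp [mul_assoc]
  have h2 : ∀ σ ∈ G, #{b ∈ Aᶜ | σ b ∈ U} + #A = #U := by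
    intro σ hσ
    simp only [hG, mem_filter, mem_univ, true_and] at hσ
    have : #({b | σ b ∈ U} : Finset V) = #U := by
      refine Finset.card_bij' (fun b _ => σ b) (fun b _ => σ.symm b) ?_ ?_ ?_ ?_ <;> simp
    rw [← this, ← Finset.card_union_of_disjoint]
    · congr 1
      ext b
      simp only [mem_union, mem_filter, mem_compl, mem_univ, true_and]
      constructor
      · rintro (h | h)
        · exact h.2
        · exact hσ b h
      · intro h
        by_cases hb : b ∈ A
        · exact Or.inr hb
        · exact Or.inl ⟨hb, h⟩
    · rw [Finset.disjoint_left]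
      intro b hb hb'
      simp only [mem_filter, mem_compl] at hb
      exact hb.1 hb'
  have h3 : ∑ b ∈ Aᶜ, #{σ ∈ G | σ b ∈ U} = ∑ σ ∈ G, #{b ∈ Aᶜ | σ b ∈ U} := by
    simp only [Finset.card_filter]
    exact Finset.sum_comm
  rw [Finset.sum_congr rfl h1, Finset.sum_const, smul_eq_mul] at h3
  have h4 : ∑ σ ∈ G, (#{b ∈ Aᶜ | σ b ∈ U} + #A) = #G * #U := by
    rw [Finset.sum_congr rfl h2, Finset.sum_const, smul_eq_mul]
  rw [Finset.sum_add_distrib, Finset.sum_const, smul_eq_mul, ← h3] at h4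
  have h5 : #Aᶜ + #A = Fintype.card V := Finset.card_compl_add_card A
  have h6 : 0 < #Aᶜ := Finset.card_pos.mpr ⟨a, by simpa using ha⟩
  have h7 : #U ≤ Fintype.card V := Finset.card_le_univ U
  rw [← h5] at h7 ⊢
  have h4' : (#Aᶜ : ℝ) * #G' + #G * #A = #G * #U := by exact_mod_cast h4
  have h7' : (#U : ℝ) ≤ #Aᶜ + #A := by exact_mod_cast h7
  have h6' : (0:ℝ) < #Aᶜ := by exact_mod_cast h6
  push_cast
  refine le_of_mul_le_mul_left ?_ h6'
  have h8 : (0:ℝ) ≤ #G * #A := by positivity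
  nlinarith [mul_nonneg h8 (sub_nonneg.mpr h7')]

theorem perm_count {V : Type} [Fintype V] [DecidableEq V] (U A : Finset V) :
    (#{σ : Equiv.Perm V | ∀ i ∈ A, σ i ∈ U} : ℝ) * (Fintype.card V : ℝ) ^ #A ≤
      (Fintype.card (Equiv.Perm V) : ℝ) * (#U : ℝ) ^ #A := by
  induction A using Finset.induction_on with
  | empty => simp
  | insert a A ha ih =>
    have h := perm_step U A a ha
    rw [Finset.card_insert_of_notMem ha, pow_succ, pow_succ]
    have h1 : (0:ℝ) ≤ (Fintype.card V : ℝ) ^ #A := by positivity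
    have h2 : (0:ℝ) ≤ #U := by positivity
    nlinarith [mul_le_mul_of_nonneg_right h h1, mul_le_mul_of_nonneg_right ih h2]

theorem fact_lower (s : ℕ) : (s : ℝ) ^ s ≤ 4 ^ s * (s.factorial : ℝ) := by
  have h := Real.pow_div_factorial_le_exp (s:ℝ) (by positivity) s
  rw [div_le_iff₀ (by positivity)] at h
  refine h.trans ?_
  gcongr
  have : Real.exp (s:ℝ) = (Real.exp 1) ^ s := by rw [← Real.exp_nat_mul]; simp
  rw [this]
  gcongr
  linarith [Real.exp_one_lt_d9]

theorem term_bound (R s : ℕ) (hs : 64 * s ≤ R) (hR : 0 < R) :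
    ((16 * R).choose s : ℝ) * (R.choose s : ℝ) * ((s : ℝ) / R) ^ (4 * s) ≤ (1 / 16) ^ s := by
  have hRr : (0:ℝ) < R := by exact_mod_cast hR
  have h1 : ((16 * R).choose s : ℝ) ≤ (16 * R) ^ s / s.factorial := by
    have := Nat.choose_le_pow_div (α := ℝ) s (16 * R)
    exact_mod_cast this
  have h2 : (R.choose s : ℝ) ≤ R ^ s / s.factorial := Nat.choose_le_pow_div (α := ℝ) s R
  have hf := fact_lower s
  have hfp : (0:ℝ) < s.factorial := by positivity
  have h3 : ((s:ℝ)^s / s.factorial) ≤ 4 ^ s := by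
    rw [div_le_iff₀ hfp]; exact hf
  have hsr : 64 * (s:ℝ) ≤ R := by exact_mod_cast hs
  have h4 : (s:ℝ) / R ≤ 1 / 64 := by
    rw [div_le_iff₀ hRr]; linarith
  calc _ ≤ ((16 * R) ^ s / s.factorial) * (R ^ s / s.factorial) * ((s : ℝ) / R) ^ (4 * s) := by
        gcongr
    _ = 16 ^ s * ((s:ℝ)^s / s.factorial) * ((s:ℝ)^s / s.factorial) * (((s:ℝ)/R) ^ s) ^ 2 := by
        rw [pow_mul', div_pow, mul_pow]
        field_simp
    _ ≤ 16 ^ s * 4 ^ s * 4 ^ s * ((1 / 64) ^ s) ^ 2 := by gcongr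
    _ = (1 / 16) ^ s := by
        rw [← pow_mul, mul_comm s 2, pow_mul, ← mul_pow, ← mul_pow, ← mul_pow]; norm_num

theorem concentrator (κ : Type) [Fintype κ] [DecidableEq κ] [Nonempty κ] :
    ∃ π : Fin 4 → Equiv.Perm (κ × Fin 16), ∀ A : Finset (κ × Fin 16),
      64 * #A ≤ Fintype.card κ →
      #A ≤ #(A.biUnion fun i => univ.image fun a => (π a i).1) := by
  classical
  by_contra hcon
  push Not at hcon
  set R := Fintype.card κ with hRdef
  have hR : 0 < R := Fintype.card_pos
  let Bad : Finset (κ × Fin 16) → Finset κ → Finset (Fin 4 → Equiv.Perm (κ × Fin 16)) :=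
    fun A T => Fintype.piFinset fun _ => {σ | ∀ i ∈ A, σ i ∈ T ×ˢ univ}
  set P := Fintype.card (Equiv.Perm (κ × Fin 16)) with hP
  have hPpos : (0:ℝ) < P := by
    have : 0 < P := Fintype.card_pos
    exact_mod_cast this
  have hcover : (univ : Finset (Fin 4 → Equiv.Perm (κ × Fin 16))) ⊆
      (Icc 1 (R / 64)).biUnion fun s => (powersetCard s univ).biUnion fun A =>
        (powersetCard s univ).biUnion fun T => Bad A T := by
    intro π _
    obtain ⟨A, hA1, hA2⟩ := hcon π
    obtain ⟨T, hT1, hT2⟩ := Finset.exists_superset_card_eq hA2.le (by omega)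
    simp only [mem_biUnion, mem_Icc, mem_powersetCard, subset_univ, true_and]
    refine ⟨#A, ⟨by omega, by omega⟩, A, rfl, T, hT2, ?_⟩
    simp only [Bad, Fintype.mem_piFinset, mem_filter, mem_univ, true_and, mem_product, and_true]
    intro a i hi
    apply hT1
    simp only [mem_biUnion, mem_image, mem_univ, true_and]
    exact ⟨i, hi, a, rfl⟩
  have hbad : ∀ s, ∀ A ∈ powersetCard s (univ : Finset (κ × Fin 16)),
      ∀ T ∈ powersetCard s (univ : Finset κ), (#(Bad A T) : ℝ) ≤ P ^ 4 * ((s:ℝ) / R) ^ (4 * s) := by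
    intro s A hA T hT
    simp only [mem_powersetCard, subset_univ, true_and] at hA hT
    have h := perm_count (T ×ˢ (univ : Finset (Fin 16))) A
    rw [hA, card_product, hT, Fintype.card_prod, card_univ, Fintype.card_fin, ← hRdef] at h
    simp only [Bad, Fintype.card_piFinset, prod_const, card_univ, Fintype.card_fin]
    push_cast at h ⊢
    rw [pow_mul', ← mul_pow]
    gcongr
    have hRr : (0:ℝ) < R := by exact_mod_cast hR
    rw [div_pow, ← mul_div_assoc, le_div_iff₀ (by positivity)]
    rw [mul_pow, mul_pow] at h
    have h16 : (0:ℝ) < 16 ^ s := by positivity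
    refine le_of_mul_le_mul_right ?_ h16
    calc _ = _ := by ring
      _ ≤ _ := h
      _ = _ := by ring
  have hcard : ((P:ℝ) ^ 4) ≤ ∑ s ∈ Icc 1 (R / 64), (P:ℝ) ^ 4 * (1 / 16) ^ s := by
    have h1 := Finset.card_le_card hcover
    have h2 : ((P:ℝ) ^ 4) = ((#(univ : Finset (Fin 4 → Equiv.Perm (κ × Fin 16))) : ℕ) : ℝ) := by
      rw [card_univ, Fintype.card_fun, Fintype.card_fin]; push_cast; rfl
    rw [h2]
    refine (Nat.cast_le.mpr h1).trans ?_
    refine (Nat.cast_le.mpr card_biUnion_le).trans ?_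
    push_cast
    refine Finset.sum_le_sum fun s hs => ?_
    refine (Nat.cast_le.mpr card_biUnion_le).trans ?_
    push_cast
    have h3 : ∀ A ∈ powersetCard s (univ : Finset (κ × Fin 16)),
        ((#((powersetCard s univ).biUnion fun T => Bad A T) : ℕ) : ℝ) ≤
          (R.choose s : ℝ) * (P ^ 4 * ((s:ℝ) / R) ^ (4 * s)) := by
      intro A hA
      refine (Nat.cast_le.mpr card_biUnion_le).trans ?_
      push_cast
      refine (Finset.sum_le_sum (hbad s A hA)).trans ?_
      rw [sum_const, card_powersetCard, card_univ, nsmul_eq_mul]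
    refine (Finset.sum_le_sum h3).trans ?_
    rw [sum_const, card_powersetCard, card_univ, nsmul_eq_mul, Fintype.card_prod, Fintype.card_fin,
      ← hRdef, mul_comm R 16]
    simp only [mem_Icc] at hs
    have h4 := term_bound R s (by omega) hR
    have h5 : (0:ℝ) ≤ (P:ℝ)^4 := by positivity
    calc _ = (P:ℝ)^4 * (((16 * R).choose s : ℝ) * (R.choose s : ℝ) * ((s : ℝ) / R) ^ (4 * s)) := by
          ring
      _ ≤ (P:ℝ)^4 * (1/16)^s := mul_le_mul_of_nonneg_left h4 h5
      _ ≤ _ := by rw [h2]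
  rw [← Finset.mul_sum] at hcard
  have hgeo : ∀ m : ℕ, ∑ s ∈ Icc 1 m, ((1:ℝ) / 16) ^ s ≤ 1 / 15 - (1/15) * (1/16)^m := by
    intro m
    induction m with
    | zero => simp
    | succ m ih =>
      rw [Finset.sum_Icc_succ_top (by omega), pow_succ]
      linarith
  have h8 := hgeo (R / 64)
  have h9 : (0:ℝ) < (1/16:ℝ)^(R/64) := by positivity
  have h10 : (0:ℝ) < (P:ℝ)^4 := by positivity
  nlinarith

theorem ball_solid {n : ℕ} {p : ℝ} (hp : 2 ≤ p) {x y : Fin n → ℝ} (h : ∀ i, |x i| ≤ |y i|)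
    (hy : y ∈ lpBall n p) : x ∈ lpBall n p := by
  simp only [lpBall, Set.mem_ofPred_eq] at hy ⊢
  refine le_trans (Finset.sum_le_sum fun i _ => ?_) hy
  exact Real.rpow_le_rpow (abs_nonneg _) (h i) (by linarith)

theorem ball_smul {n : ℕ} {p : ℝ} (hp : 2 ≤ p) {x : Fin n → ℝ} (hx : x ∈ lpBall n p) {t : ℝ}
    (ht : |t| ≤ 1) : t • x ∈ lpBall n p := by
  refine ball_solid hp (fun i => ?_) hx
  simp only [Pi.smul_apply, smul_eq_mul, abs_mul]
  exact mul_le_of_le_one_left (abs_nonneg _) ht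

theorem ball_zero {n : ℕ} {p : ℝ} (hp : 2 ≤ p) : (0 : Fin n → ℝ) ∈ lpBall n p := by
  simp only [lpBall, Set.mem_ofPred_eq, Pi.zero_apply, abs_zero]
  rw [Real.zero_rpow (by linarith)]
  simp

theorem ball_neg {n : ℕ} {p : ℝ} {x : Fin n → ℝ} (hx : x ∈ lpBall n p) : -x ∈ lpBall n p := by
  simpa [lpBall] using hx

theorem ball_convex {n : ℕ} {p : ℝ} (hp : 2 ≤ p) : Convex ℝ (lpBall n p) := by
  have h := convexOn_rpow (p := p) (by linarith)
  intro x hx y hy a b ha hb hab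
  simp only [lpBall, Set.mem_ofPred_eq] at hx hy ⊢
  calc ∑ i, |(a • x + b • y) i| ^ p ≤ ∑ i, (a * |x i| ^ p + b * |y i| ^ p) := by
        refine Finset.sum_le_sum fun i _ => ?_
        have h1 := h.2 (abs_nonneg (x i) : |x i| ∈ Set.Ici (0:ℝ))
          (abs_nonneg (y i) : |y i| ∈ Set.Ici (0:ℝ)) ha hb hab
        simp only [smul_eq_mul] at h1
        refine le_trans ?_ h1
        refine Real.rpow_le_rpow (abs_nonneg _) ?_ (by linarith)
        simp only [Pi.add_apply, Pi.smul_apply, smul_eq_mul]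
        refine (abs_add_le _ _).trans ?_
        rw [abs_mul, abs_mul, abs_of_nonneg ha, abs_of_nonneg hb]
    _ = a * ∑ i, |x i| ^ p + b * ∑ i, |y i| ^ p := by
        rw [Finset.sum_add_distrib, Finset.mul_sum, Finset.mul_sum]
    _ ≤ 1 := by nlinarith

theorem ball_mid {n : ℕ} {p : ℝ} (hp : 2 ≤ p) {x y : Fin n → ℝ} (hx : x ∈ lpBall n p)
    (hy : y ∈ lpBall n p) : (1 / 2 : ℝ) • (x + y) ∈ lpBall n p := by
  have := ball_convex hp hx hy (a := 1/2) (b := 1/2) (by norm_num) (by norm_num) (by norm_num)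
  rwa [smul_add]

theorem ball_scale {n : ℕ} {p : ℝ} (hp : 2 ≤ p) {z : Fin n → ℝ} {u : ℝ} (hu : 1 ≤ u)
    (hz : ∑ i, |z i| ^ p ≤ u ^ 2) : u⁻¹ • z ∈ lpBall n p := by
  simp only [lpBall, Set.mem_ofPred_eq, Pi.smul_apply, smul_eq_mul, abs_mul]
  have hu0 : 0 < u := by linarith
  have h1 : ∀ i, (|u⁻¹| * |z i|) ^ p = (u ^ p)⁻¹ * |z i| ^ p := by
    intro i
    rw [abs_of_pos (inv_pos.mpr hu0), Real.mul_rpow (by positivity) (abs_nonneg _),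
      Real.inv_rpow hu0.le]
  simp only [h1, ← Finset.mul_sum]
  have h2 : u ^ 2 ≤ u ^ p := by
    rw [← Real.rpow_natCast]
    exact Real.rpow_le_rpow_of_exponent_le hu (by exact_mod_cast hp)
  rw [inv_mul_le_iff₀ (by positivity)]
  linarith

structure Hyp (n : ℕ) (p : ℝ) (f : (Fin n → ℝ) → ℝ) (K : ℝ) : Prop where
  hp : 2 ≤ p
  mid : ∀ x ∈ lpBall n p, ∀ y ∈ lpBall n p, |f x + f y - 2 * f ((1 / 2 : ℝ) • (x + y))| ≤ 1
  f0 : f 0 = 0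
  bd : ∀ x ∈ lpBall n p, |f x| ≤ K

theorem limit_bound {a M : ℝ} (h : ∀ j : ℕ, a ≤ 1 + M * (1 / 2) ^ j) : a ≤ 1 := by
  have ht : Filter.Tendsto (fun j : ℕ => 1 + M * (1 / 2 : ℝ) ^ j) Filter.atTop (nhds (1 + M * 0)) :=
    ((tendsto_pow_atTop_nhds_zero_of_lt_one (by norm_num) (by norm_num)).const_mul M).const_add 1
  have := ge_of_tendsto' ht h
  linarith

theorem Hyp.hom {n : ℕ} {p : ℝ} {f : (Fin n → ℝ) → ℝ} {K : ℝ} (H : Hyp n p f K) {x : Fin n → ℝ}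
    (hx : x ∈ lpBall n p) {t : ℝ} (ht0 : 0 ≤ t) (ht1 : t ≤ 1) : |f (t • x) - t * f x| ≤ 1 := by
  have key : ∀ j : ℕ, ∀ t : ℝ, 0 ≤ t → t ≤ 1 →
      |f (t • x) - t * f x| ≤ 1 + 2 * K * (1 / 2) ^ j := by
    have hball : ∀ s : ℝ, 0 ≤ s → s ≤ 1 → s • x ∈ lpBall n p := fun s h0 h1 =>
      ball_smul H.hp hx (by rw [abs_le]; constructor <;> linarith)
    intro j
    induction j with
    | zero =>
      intro t h0 h1
      have a1 := abs_le.mp (H.bd _ (hball t h0 h1))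
      have a2 := abs_le.mp (H.bd _ hx)
      rw [abs_le]
      constructor <;> nlinarith
    | succ j ih =>
      intro t h0 h1
      rw [pow_succ]
      rcases le_total t (1/2) with h | h
      · have a1 := H.mid _ (hball (2 * t) (by linarith) (by linarith)) 0 (ball_zero H.hp)
        have e : (1 / 2 : ℝ) • ((2 * t) • x + 0) = t • x := by
          rw [add_zero, smul_smul]; congr 1; ring
        rw [e, H.f0] at a1
        have a2 := ih (2 * t) (by linarith) (by linarith)
        rw [abs_le] at a1 a2 ⊢
        constructor <;> linarith
      · have a1 := H.mid _ (hball (2 * t - 1) (by linarith) (by linarith)) x hx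
        have e : (1 / 2 : ℝ) • ((2 * t - 1) • x + x) = t • x := by
          ext i; simp; ring
        rw [e] at a1
        have a2 := ih (2 * t - 1) (by linarith) (by linarith)
        rw [abs_le] at a1 a2 ⊢
        constructor <;> linarith
  exact limit_bound fun j => key j t ht0 ht1

theorem ball_avg {n : ℕ} {p : ℝ} (hp : 2 ≤ p) (k : ℕ) (x : ℕ → Fin n → ℝ)
    (hx : ∀ i, x i ∈ lpBall n p) :
    ((1 / 2 : ℝ) ^ k) • ∑ i ∈ range (2 ^ k), x i ∈ lpBall n p := by
  induction k generalizing x with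
  | zero => simpa using hx 0
  | succ k ih =>
    have h1 := ih x hx
    have h2 := ih (fun i => x (2 ^ k + i)) (fun i => hx _)
    have h := ball_mid hp h1 h2
    rw [pow_succ 2 k, mul_two, Finset.sum_range_add]
    convert h using 1
    rw [← smul_add, smul_smul, pow_succ, mul_comm]

theorem Hyp.avg {n : ℕ} {p : ℝ} {f : (Fin n → ℝ) → ℝ} {K : ℝ} (H : Hyp n p f K) (k : ℕ)
    (x : ℕ → Fin n → ℝ) (hx : ∀ i, x i ∈ lpBall n p) :
    |2 ^ k * f (((1 / 2 : ℝ) ^ k) • ∑ i ∈ range (2 ^ k), x i) - ∑ i ∈ range (2 ^ k), f (x i)|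
      ≤ 2 ^ k * (k / 2) := by
  induction k generalizing x with
  | zero => simp
  | succ k ih =>
    have h1 := ih x hx
    have h2 := ih (fun i => x (2 ^ k + i)) (fun i => hx _)
    have h := H.mid _ (ball_avg H.hp k x hx) _
      (ball_avg H.hp k (fun i => x (2 ^ k + i)) (fun i => hx _))
    rw [← smul_add, smul_smul, mul_comm (1/2:ℝ), ← pow_succ, ← Finset.sum_range_add] at h
    have e : (2:ℕ) ^ (k + 1) = 2 ^ k + 2 ^ k := by ring
    rw [e, Finset.sum_range_add (fun i => f (x i))]
    have hpos : (0:ℝ) < 2 ^ k := by positivity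
    have h3 := mul_le_mul_of_nonneg_left h hpos.le
    rw [← abs_of_pos hpos, ← abs_mul, abs_of_pos hpos] at h3
    push_cast
    rw [pow_succ (2:ℝ) k]
    rw [abs_le] at h1 h2 h3 ⊢
    constructor <;> linarith

theorem Hyp.avgF {n : ℕ} {p : ℝ} {f : (Fin n → ℝ) → ℝ} {K : ℝ} (H : Hyp n p f K) (k : ℕ)
    {ι : Type} [Fintype ι] (hι : Fintype.card ι = 2 ^ k)
    (x : ι → Fin n → ℝ) (hx : ∀ i, x i ∈ lpBall n p) :
    |2 ^ k * f (((1 / 2 : ℝ) ^ k) • ∑ i, x i) - ∑ i, f (x i)| ≤ 2 ^ k * (k / 2) := by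
  let e : ι ≃ Fin (2 ^ k) := Fintype.equivFinOfCardEq hι
  let y : ℕ → Fin n → ℝ := fun m => if h : m < 2 ^ k then x (e.symm ⟨m, h⟩) else 0
  have hy : ∀ m, y m ∈ lpBall n p := by
    intro m
    by_cases h : m < 2 ^ k
    · simp only [y, h, dite_true]; exact hx _
    · simp only [y, h, dite_false]; exact ball_zero H.hp
  have h := H.avg k y hy
  have e1 : ∑ i ∈ range (2 ^ k), y i = ∑ i, x i := by
    rw [Finset.sum_range]
    rw [← Equiv.sum_comp e.symm x]
    refine Finset.sum_congr rfl fun i _ => ?_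
    simp [y]
  have e2 : ∑ i ∈ range (2 ^ k), f (y i) = ∑ i, f (x i) := by
    rw [Finset.sum_range]
    rw [← Equiv.sum_comp e.symm (fun i => f (x i))]
    refine Finset.sum_congr rfl fun i _ => ?_
    simp [y]
  rwa [e1, e2] at h

theorem at_most_one {ι : Type} [Fintype ι] {p : ℝ} (hp : 2 ≤ p) (y : ι → ℝ)
    (hy : ∀ i j, y i ≠ 0 → y j ≠ 0 → i = j) : |∑ i, y i| ^ p ≤ ∑ i, |y i| ^ p := by
  by_cases h : ∃ i, y i ≠ 0
  · obtain ⟨i, hi⟩ := h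
    rw [Finset.sum_eq_single i]
    · exact Finset.single_le_sum (f := fun i => |y i| ^ p)
        (fun j _ => Real.rpow_nonneg (abs_nonneg _) _) (mem_univ i)
    · intro j _ hj
      by_contra hne
      exact hj (hy j i hne hi)
    · simp
  · push Not at h
    simp only [h, sum_const_zero, abs_zero]
    rw [Real.zero_rpow (by linarith)]
    simp

theorem exists_sel {κ : Type} [Fintype κ] [DecidableEq κ]
    (π : Fin 4 → Equiv.Perm (κ × Fin 16)) (hπ : ∀ A : Finset (κ × Fin 16),
      64 * #A ≤ Fintype.card κ →
      #A ≤ #(A.biUnion fun i => univ.image fun a => (π a i).1)) (A : Finset (κ × Fin 16))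
    (hA : 64 * #A ≤ Fintype.card κ) :
    ∃ a : κ × Fin 16 → Fin 4, ∀ v ∈ A, ∀ w ∈ A, (π (a v) v).1 = (π (a w) w).1 → v = w := by
  classical
  have hall := (Finset.all_card_le_biUnion_card_iff_exists_injective
    (fun v : {v // v ∈ A} => (univ.image fun a => (π a v.1).1 : Finset κ))).mp (by
      intro s
      have hsub : s.map (Function.Embedding.subtype _) ⊆ A := by
        intro v hv
        simp only [mem_map, Function.Embedding.subtype_apply] at hv
        obtain ⟨w, _, rfl⟩ := hv
        exact w.2
      have h := hπ (s.map (Function.Embedding.subtype _)) (by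
        have := card_le_card hsub
        omega)
      rw [card_map] at h
      refine h.trans (card_le_card ?_)
      intro j hj
      simp only [mem_biUnion, mem_map, Function.Embedding.subtype_apply] at hj ⊢
      obtain ⟨v, ⟨w, hw, rfl⟩, hj⟩ := hj
      exact ⟨w, hw, hj⟩)
  obtain ⟨g, hg, hg2⟩ := hall
  simp only [mem_image, mem_univ, true_and] at hg2
  choose a ha using hg2
  refine ⟨fun v => if h : v ∈ A then a ⟨v, h⟩ else 0, fun v hv w hw h => ?_⟩
  simp only [hv, hw, dite_true] at h
  have h1 := ha ⟨v, hv⟩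
  have h2 := ha ⟨w, hw⟩
  have := hg (h1.symm.trans (h.trans h2))
  exact congrArg Subtype.val this

theorem reindex {κ : Type} [Fintype κ] (π : Fin 4 → Equiv.Perm (κ × Fin 16))
    (g : κ × Fin 16 → Fin 4 → ℝ) :
    ∑ j : κ, ∑ q : Fin 4 × Fin 16, g ((π q.1).symm (j, q.2)) q.1 = ∑ v, ∑ a, g v a := by
  rw [Finset.sum_comm (s := (univ : Finset (κ × Fin 16)))]
  simp only [Fintype.sum_prod_type (α₁ := Fin 4)]
  rw [Finset.sum_comm]
  refine Finset.sum_congr rfl fun a _ => ?_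
  rw [← Equiv.sum_comp (π a).symm, Fintype.sum_prod_type (α₁ := κ)]

theorem Hyp.sparse {n : ℕ} {p : ℝ} {f : (Fin n → ℝ) → ℝ} {K : ℝ} (H : Hyp n p f K)
    (κ : Type) [Fintype κ] [Nonempty κ] (z : κ → Fin n → ℝ) (hz : ∀ i, z i ∈ lpBall n p)
    (hs : ∀ c, 1024 * #{i | z i c ≠ 0} ≤ Fintype.card κ) :
    |∑ i, f (z i)| ≤ (24 + K / 4) * Fintype.card κ := by
  classical
  have hp := H.hp
  have hK : 0 ≤ K := (abs_nonneg _).trans (H.bd 0 (ball_zero hp))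
  obtain ⟨π, hπ⟩ := concentrator κ
  have hsel : ∀ c : Fin n, ∃ a : κ × Fin 16 → Fin 4, ∀ v w, z v.1 c ≠ 0 → z w.1 c ≠ 0 →
      (π (a v) v).1 = (π (a w) w).1 → v = w := by
    intro c
    obtain ⟨a, ha⟩ := exists_sel π hπ (({i | z i c ≠ 0} : Finset κ) ×ˢ univ) (by
      rw [card_product, card_univ, Fintype.card_fin]
      have := hs c
      omega)
    refine ⟨a, fun v w hv hw h => ha v ?_ w ?_ h⟩
    · simpa using hv
    · simpa using hw
  choose sel hsel using hsel
  let X : κ × Fin 16 → Fin 4 → Fin n → ℝ := fun v a c => if sel c v = a then z v.1 c else 0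
  have hX : ∀ v a, X v a ∈ lpBall n p := by
    intro v a
    refine ball_solid hp (fun c => ?_) (hz v.1)
    simp only [X]
    split_ifs
    · exact le_rfl
    · simp
  have hXsum : ∀ v, ∑ a, X v a = z v.1 := by
    intro v
    ext c
    simp [X]
  have hXPhi : ∀ v, ∑ a, ∑ c, |X v a c| ^ p ≤ 1 := by
    intro v
    rw [Finset.sum_comm]
    have h1 : ∀ c, ∑ a, |X v a c| ^ p = |z v.1 c| ^ p := by
      intro c
      rw [Finset.sum_eq_single (sel c v)]
      · simp [X]
      · intro b _ hb
        simp only [X, if_neg (Ne.symm hb), abs_zero]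
        exact Real.zero_rpow (by linarith)
      · simp
    simp only [h1]
    exact hz v.1
  have F1 : ∀ v, |f (z v.1) - ∑ a, f (X v a)| ≤ 8 := by
    intro v
    have h1 := H.avgF 2 (by simp) (X v) (hX v)
    have h2 := H.hom (hz v.1) (t := (1/2)^2) (by norm_num) (by norm_num)
    rw [hXsum] at h1
    norm_num at h1 h2
    rw [abs_le] at h1 h2 ⊢
    constructor <;> linarith
  let Y : κ → Fin 4 × Fin 16 → Fin n → ℝ := fun j q => X ((π q.1).symm (j, q.2)) q.1
  have hY : ∀ j q, Y j q ∈ lpBall n p := fun j q => hX _ _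
  let Φ : (Fin n → ℝ) → ℝ := fun x => ∑ c, |x c| ^ p
  have hΦ0 : ∀ x, 0 ≤ Φ x := fun x =>
    Finset.sum_nonneg fun c _ => Real.rpow_nonneg (abs_nonneg _) _
  have hone : ∀ j c q q', Y j q c ≠ 0 → Y j q' c ≠ 0 → q = q' := by
    intro j c q q' h h'
    simp only [Y, X, ne_eq, ite_eq_right_iff, Classical.not_imp] at h h'
    have key := hsel c _ _ h.2 h'.2 (by rw [h.1, h'.1]; simp)
    have e1 : q.1 = q'.1 := by rw [← h.1, ← h'.1, key]
    rw [e1] at key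
    have := (π q'.1).symm.injective key
    simp only [Prod.mk.injEq, true_and] at this
    exact Prod.ext e1 this
  have hΦY : ∀ j, Φ (∑ q, Y j q) ≤ ∑ q, Φ (Y j q) := by
    intro j
    simp only [Φ]
    rw [Finset.sum_comm (s := (univ : Finset (Fin 4 × Fin 16)))]
    refine Finset.sum_le_sum fun c _ => ?_
    rw [Finset.sum_apply]
    exact at_most_one hp _ (fun q q' => hone j c q q')
  have F2 : ∀ j, |∑ q, f (Y j q)| ≤ (2 + (∑ q, Φ (Y j q)) / 8) * K + 256 := by
    intro j
    set Z := ∑ q, Y j q with hZ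
    set u := 2 + Φ Z / 8 with hu
    have hZ64 : Φ Z ≤ 64 := by
      refine (hΦY j).trans ?_
      calc ∑ q, Φ (Y j q) ≤ ∑ q : Fin 4 × Fin 16, (1:ℝ) := Finset.sum_le_sum fun q _ => hY j q
        _ = 64 := by simp
    have hZ0 := hΦ0 Z
    have hu1 : 1 ≤ u := by linarith
    have hin : u⁻¹ • Z ∈ lpBall n p := ball_scale hp hu1 (by
      change Φ Z ≤ u ^ 2
      rw [hu]
      nlinarith [sq_nonneg (2 - Φ Z / 8)])
    have h1 := H.avgF 6 (by simp) (Y j) (hY j)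
    rw [← hZ] at h1
    have h2 := H.hom hin (t := u / 64) (by positivity) (by linarith)
    have e : (u / 64) • u⁻¹ • Z = ((1 / 2 : ℝ) ^ 6) • Z := by
      rw [smul_smul]
      congr 1
      field_simp
      norm_num
    rw [e] at h2
    have h3 := H.bd _ hin
    have h4 : |u * f (u⁻¹ • Z)| ≤ u * K := by
      rw [abs_mul, abs_of_pos (by linarith)]
      exact mul_le_mul_of_nonneg_left h3 (by linarith)
    have h5 : u * K ≤ (2 + (∑ q, Φ (Y j q)) / 8) * K := by
      refine mul_le_mul_of_nonneg_right ?_ hK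
      have := hΦY j
      linarith
    norm_num at h1 h2
    rw [abs_le] at h1 h2 h4 ⊢
    constructor <;> linarith
  have hsumPhi : ∑ j, ∑ q, Φ (Y j q) ≤ 16 * Fintype.card κ := by
    rw [show ∑ j, ∑ q, Φ (Y j q) = ∑ v, ∑ a, Φ (X v a) from reindex π fun v a => Φ (X v a)]
    calc ∑ v, ∑ a, Φ (X v a) ≤ ∑ v : κ × Fin 16, (1:ℝ) := Finset.sum_le_sum fun v _ => hXPhi v
      _ = 16 * Fintype.card κ := by simp; ring
  have hsumf : ∑ j, ∑ q, f (Y j q) = ∑ v, ∑ a, f (X v a) := reindex π fun v a => f (X v a)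
  have G1 : |∑ v : κ × Fin 16, f (z v.1) - ∑ v, ∑ a, f (X v a)| ≤ 128 * Fintype.card κ := by
    rw [← Finset.sum_sub_distrib]
    refine (Finset.abs_sum_le_sum_abs _ _).trans ?_
    calc _ ≤ ∑ v : κ × Fin 16, (8:ℝ) := Finset.sum_le_sum fun v _ => F1 v
      _ = _ := by simp; ring
  have G2 : |∑ j, ∑ q, f (Y j q)| ≤ (256 + 4 * K) * Fintype.card κ := by
    refine (Finset.abs_sum_le_sum_abs _ _).trans ?_
    calc _ ≤ ∑ j, ((2 + (∑ q, Φ (Y j q)) / 8) * K + 256) := Finset.sum_le_sum fun j _ => F2 j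
      _ = 2 * K * Fintype.card κ + (K / 8) * (∑ j, ∑ q, Φ (Y j q)) + 256 * Fintype.card κ := by
          rw [Finset.mul_sum, Finset.sum_add_distrib]
          simp only [add_mul, Finset.sum_add_distrib, sum_const, card_univ, nsmul_eq_mul]
          congr 1
          · congr 1
            · ring
            · exact Finset.sum_congr rfl fun j _ => by ring
          · ring
      _ ≤ 2 * K * Fintype.card κ + (K / 8) * (16 * Fintype.card κ) + 256 * Fintype.card κ := by
          gcongr
      _ = _ := by ring
  have e16 : ∑ v : κ × Fin 16, f (z v.1) = 16 * ∑ i, f (z i) := by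
    rw [Fintype.sum_prod_type, Finset.mul_sum]
    simp
  rw [e16] at G1
  rw [hsumf] at G2
  rw [abs_le] at G1 G2 ⊢
  constructor <;> linarith

theorem pair_sum {κ : Type} [Fintype κ] (g : κ → ℝ) :
    ∑ q : κ × κ, (g q.1 + g q.2) = 2 * Fintype.card κ * ∑ i, g i := by
  rw [Fintype.sum_prod_type]
  simp only [Finset.sum_add_distrib, sum_const, card_univ, nsmul_eq_mul]
  rw [← Finset.mul_sum]
  ring

theorem Hyp.iter {n : ℕ} {p : ℝ} {f : (Fin n → ℝ) → ℝ} {K : ℝ} (H : Hyp n p f K) (k : ℕ)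
    (ι : Type) [Fintype ι] [Nonempty ι] (x : ι → Fin n → ℝ) (hx : ∀ i, x i ∈ lpBall n p)
    (h0 : ∀ c, ∑ i, x i c = 0) :
    ∃ (κ : Type) (_ : Fintype κ) (_ : Nonempty κ) (y : κ → Fin n → ℝ),
      (∀ j, y j ∈ lpBall n p) ∧ (∀ c, ∑ j, y j c = 0) ∧
      (∀ c, (∑ j, y j c ^ 2) / Fintype.card κ = (∑ i, x i c ^ 2) / Fintype.card ι / 2 ^ k) ∧
      |(∑ i, f (x i)) / Fintype.card ι - (∑ j, f (y j)) / Fintype.card κ| ≤ k / 2 := by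
  induction k with
  | zero => exact ⟨ι, inferInstance, inferInstance, x, hx, h0, by simp, by simp⟩
  | succ k ih =>
    obtain ⟨κ, _, _, y, hy, hy0, hy2, hyf⟩ := ih
    have hM : (0:ℝ) < Fintype.card κ := by exact_mod_cast Fintype.card_pos
    refine ⟨κ × κ, inferInstance, inferInstance,
      fun q => (1 / 2 : ℝ) • (y q.1 + y q.2), fun q => ball_mid H.hp (hy _) (hy _), ?_, ?_, ?_⟩
    · intro c
      simp only [Pi.smul_apply, Pi.add_apply, smul_eq_mul]
      rw [← Finset.mul_sum, pair_sum (fun i => y i c), hy0]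
      simp
    · intro c
      have e : ∑ q : κ × κ, ((1 / 2 : ℝ) • (y q.1 + y q.2)) c ^ 2 =
          (Fintype.card κ / 2) * ∑ j, y j c ^ 2 := by
        have e1 : ∀ q : κ × κ, ((1 / 2 : ℝ) • (y q.1 + y q.2)) c ^ 2 =
            (1/4) * (y q.1 c ^ 2 + y q.2 c ^ 2) + (1/2) * (y q.1 c * y q.2 c) := by
          intro q
          simp only [Pi.smul_apply, Pi.add_apply, smul_eq_mul]
          ring
        have e2 : ∑ q : κ × κ, y q.1 c * y q.2 c = 0 := by
          rw [Fintype.sum_prod_type]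
          simp only [← Finset.mul_sum, hy0 c]
          simp
        rw [Finset.sum_congr rfl fun q _ => e1 q, Finset.sum_add_distrib, ← Finset.mul_sum,
          ← Finset.mul_sum, e2, pair_sum (fun i => y i c ^ 2)]
        ring
      rw [e, Fintype.card_prod, pow_succ, ← div_div, ← hy2]
      push_cast
      field_simp
    · have e : |2 * ∑ q : κ × κ, f ((1 / 2 : ℝ) • (y q.1 + y q.2)) -
          2 * Fintype.card κ * ∑ i, f (y i)| ≤ (Fintype.card κ : ℝ) ^ 2 := by
        rw [← pair_sum (fun i => f (y i)), Finset.mul_sum, ← Finset.sum_sub_distrib]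
        refine (Finset.abs_sum_le_sum_abs _ _).trans ?_
        calc _ ≤ ∑ q : κ × κ, (1:ℝ) := by
              refine Finset.sum_le_sum fun q _ => ?_
              rw [abs_sub_comm]
              exact H.mid _ (hy _) _ (hy _)
          _ = _ := by simp; ring
      have e3 : |(∑ j, f (y j)) / Fintype.card κ -
          (∑ q : κ × κ, f ((1 / 2 : ℝ) • (y q.1 + y q.2))) / Fintype.card (κ × κ)| ≤ 1 / 2 := by
        rw [Fintype.card_prod]
        push_cast
        have e4 : (∑ j, f (y j)) / Fintype.card κ -
          (∑ q : κ × κ, f ((1 / 2 : ℝ) • (y q.1 + y q.2))) /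
            ((Fintype.card κ : ℝ) * Fintype.card κ) =
          (-(1/2) * (2 * ∑ q : κ × κ, f ((1 / 2 : ℝ) • (y q.1 + y q.2)) -
          2 * Fintype.card κ * ∑ i, f (y i))) / (Fintype.card κ : ℝ) ^ 2 := by
          field_simp
          ring
        rw [e4, abs_div, abs_mul, abs_of_pos (show (0:ℝ) < (Fintype.card κ : ℝ)^2 by positivity),
          div_le_iff₀ (by positivity)]
        rw [show |-(1/2:ℝ)| = 1/2 by norm_num [abs_of_neg]]
        linarith
      push_cast
      rw [abs_le] at hyf e3 ⊢
      constructor <;> linarith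

theorem sigma_mem {n : ℕ} {p : ℝ} (hp : 2 ≤ p) (ι : Type) [Fintype ι] [Nonempty ι]
    (x : ι → Fin n → ℝ) (hx : ∀ i, x i ∈ lpBall n p) :
    (fun c => Real.sqrt ((∑ i, x i c ^ 2) / Fintype.card ι)) ∈ lpBall n p := by
  have hM : (0:ℝ) < Fintype.card ι := by exact_mod_cast Fintype.card_pos
  simp only [lpBall, Set.mem_ofPred_eq]
  have h1 : ∀ c, |Real.sqrt ((∑ i, x i c ^ 2) / Fintype.card ι)| ^ p ≤
      ∑ i, (Fintype.card ι : ℝ)⁻¹ * |x i c| ^ p := by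
    intro c
    rw [abs_of_nonneg (Real.sqrt_nonneg _), Real.sqrt_eq_rpow, ← Real.rpow_mul (by positivity)]
    have h := Real.rpow_arith_mean_le_arith_mean_rpow (univ : Finset ι)
      (fun _ => (Fintype.card ι : ℝ)⁻¹) (fun i => x i c ^ 2) (fun _ _ => by positivity)
      (by simp) (fun _ _ => by positivity) (p := p / 2) (by linarith)
    rw [← Finset.mul_sum] at h
    rw [div_eq_inv_mul, one_div_mul_eq_div]
    refine h.trans (Finset.sum_le_sum fun i _ => ?_)
    rw [← sq_abs, ← Real.rpow_natCast, ← Real.rpow_mul (abs_nonneg _)]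
    apply le_of_eq
    congr 2
    push_cast
    ring
  refine (Finset.sum_le_sum fun c _ => h1 c).trans ?_
  rw [Finset.sum_comm]
  simp only [← Finset.mul_sum]
  rw [inv_mul_le_iff₀ hM]
  calc _ ≤ ∑ i : ι, (1:ℝ) := Finset.sum_le_sum fun i _ => hx i
    _ = _ := by simp

theorem Hyp.meanzero {n : ℕ} {p : ℝ} {f : (Fin n → ℝ) → ℝ} {K : ℝ} (H : Hyp n p f K)
    (ι : Type) [Fintype ι] [Nonempty ι] (x : ι → Fin n → ℝ) (hx : ∀ i, x i ∈ lpBall n p)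
    (h0 : ∀ c, ∑ i, x i c = 0) :
    |(∑ i, f (x i)) / Fintype.card ι| ≤ 35 + 3 / 8 * K := by
  have hp := H.hp
  obtain ⟨κ, _, _, y, hy, hy0, hy2, hyf⟩ := H.iter 16 ι x hx h0
  have hM : (0:ℝ) < Fintype.card κ := by exact_mod_cast Fintype.card_pos
  have hσ := sigma_mem hp ι x hx
  set σ : Fin n → ℝ := fun c => Real.sqrt ((∑ i, x i c ^ 2) / Fintype.card ι) with hσdef
  have hσ0 : ∀ c, 0 ≤ σ c := fun c => Real.sqrt_nonneg _
  have hσ2 : ∀ c, ∑ j, y j c ^ 2 = σ c ^ 2 / 65536 * Fintype.card κ := by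
    intro c
    have h := hy2 c
    have e : σ c ^ 2 = (∑ i, x i c ^ 2) / Fintype.card ι := Real.sq_sqrt (by positivity)
    rw [← e, div_eq_iff hM.ne'] at h
    rw [h]
    norm_num
  let y1 : κ → Fin n → ℝ := fun j c => max (-(σ c / 8)) (min (σ c / 8) (y j c))
  let y2 : κ → Fin n → ℝ := fun j => y j - y1 j
  have hy1abs : ∀ j c, |8 * y1 j c| ≤ |σ c| := by
    intro j c
    have := hσ0 c
    rw [abs_of_nonneg this, abs_le]
    simp only [y1]
    have h1 : -(σ c / 8) ≤ max (-(σ c / 8)) (min (σ c / 8) (y j c)) := le_max_left _ _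
    have h2 : max (-(σ c / 8)) (min (σ c / 8) (y j c)) ≤ σ c / 8 :=
      max_le (by linarith) (min_le_left _ _)
    constructor <;> linarith
  have hw : ∀ j, (8:ℝ) • y1 j ∈ lpBall n p := fun j => ball_solid hp (fun c => hy1abs j c) hσ
  have hy1B : ∀ j, y1 j ∈ lpBall n p := by
    intro j
    have := ball_smul hp (hw j) (t := 1/8) (by norm_num [abs_le])
    rwa [smul_smul, show (1/8:ℝ) * 8 = 1 by norm_num, one_smul] at this
  have hclip : ∀ j c, |y2 j c| ≤ |y j c| ∧ (y2 j c ≠ 0 → σ c / 8 < |y j c|) := by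
    intro j c
    have := hσ0 c
    simp only [y2, y1, Pi.sub_apply]
    rcases le_total (y j c) (σ c / 8) with h | h
    · rw [min_eq_right h]
      rcases le_total (-(σ c / 8)) (y j c) with h' | h'
      · rw [max_eq_right h']; simp
      · rw [max_eq_left h']
        rw [abs_of_nonpos (show y j c ≤ 0 by linarith),
          abs_of_nonpos (show y j c - -(σ c / 8) ≤ 0 by linarith)]
        refine ⟨by linarith, fun hne => ?_⟩
        rcases lt_or_eq_of_le h' with h'' | h''
        · linarith
        · exact absurd (by linarith) hne
    · rw [min_eq_left h, max_eq_right (by linarith)]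
      rw [abs_of_nonneg (show 0 ≤ y j c by linarith),
          abs_of_nonneg (show 0 ≤ y j c - σ c / 8 by linarith)]
      refine ⟨by linarith, fun hne => ?_⟩
      rcases lt_or_eq_of_le h with h'' | h''
      · linarith
      · exact absurd (by linarith) hne
  have hy2B : ∀ j, y2 j ∈ lpBall n p := fun j => ball_solid hp (fun c => (hclip j c).1) (hy j)
  have hsp : ∀ c, 1024 * #{j | y2 j c ≠ 0} ≤ Fintype.card κ := by
    intro c
    by_cases hc : σ c = 0
    · have hz : ∑ j, y j c ^ 2 = 0 := by rw [hσ2, hc]; simp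
      have hz' : ∀ j, y2 j c = 0 := by
        intro j
        have h1 := (Finset.sum_eq_zero_iff_of_nonneg (fun j _ => sq_nonneg (y j c))).mp hz j
          (mem_univ j)
        have h2 := (hclip j c).1
        rw [pow_eq_zero_iff (by norm_num)] at h1
        rw [h1, abs_zero] at h2
        exact abs_nonpos_iff.mp h2
      simp [hz']
    · have hpos : 0 < σ c := lt_of_le_of_ne (hσ0 c) (Ne.symm hc)
      have h1 : (#{j | y2 j c ≠ 0} : ℝ) * (σ c / 8) ^ 2 ≤ ∑ j, y j c ^ 2 := by
        calc (#{j | y2 j c ≠ 0} : ℝ) * (σ c / 8) ^ 2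
            = ∑ j ∈ ({j | y2 j c ≠ 0} : Finset κ), (σ c / 8) ^ 2 := by simp
          _ ≤ ∑ j ∈ ({j | y2 j c ≠ 0} : Finset κ), y j c ^ 2 := by
              refine Finset.sum_le_sum fun j hj => ?_
              have h2 := (hclip j c).2 (by simpa using hj)
              rw [← sq_abs (y j c)]
              exact pow_le_pow_left₀ (by positivity) h2.le 2
          _ ≤ _ := Finset.sum_le_sum_of_subset_of_nonneg (subset_univ _)
              (fun _ _ _ => sq_nonneg _)
      rw [hσ2] at h1
      have h3 : (1024 * #{j | y2 j c ≠ 0} : ℝ) ≤ Fintype.card κ := by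
        have h4 : 0 < σ c ^ 2 / 65536 := by positivity
        refine le_of_mul_le_mul_left ?_ h4
        calc _ = (#{j | y2 j c ≠ 0} : ℝ) * (σ c / 8) ^ 2 := by ring
          _ ≤ _ := h1
      exact_mod_cast h3
  have hS := H.sparse κ y2 hy2B hsp
  have hdec : ∀ j, |f (y j) - f (y2 j)| ≤ 3 + K / 8 := by
    intro j
    have a1 := H.hom (hw j) (t := 1/8) (by norm_num) (by norm_num)
    rw [smul_smul, show (1/8:ℝ) * 8 = 1 by norm_num, one_smul] at a1
    have a2 := H.bd _ (hw j)
    have a3 := H.mid _ (hy1B j) _ (hy2B j)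
    rw [show y1 j + y2 j = y j by simp [y2]] at a3
    have a4 := H.mid _ (hy j) _ (ball_zero hp)
    rw [add_zero, H.f0] at a4
    rw [abs_le] at a1 a2 a3 a4 ⊢
    constructor <;> linarith
  have hdec' : |∑ j, f (y j) - ∑ j, f (y2 j)| ≤ (3 + K / 8) * Fintype.card κ := by
    rw [← Finset.sum_sub_distrib]
    refine (Finset.abs_sum_le_sum_abs _ _).trans ?_
    calc _ ≤ ∑ j : κ, (3 + K / 8) := Finset.sum_le_sum fun j _ => hdec j
      _ = _ := by simp; ring
  have hfin : |(∑ j, f (y j)) / Fintype.card κ| ≤ 27 + 3 / 8 * K := by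
    rw [abs_div, abs_of_pos hM, div_le_iff₀ hM]
    rw [abs_le] at hS hdec' ⊢
    constructor <;> linarith
  norm_num at hyf
  rw [abs_le] at hyf hfin ⊢
  constructor <;> linarith

theorem Hyp.bary {n : ℕ} {p : ℝ} {f : (Fin n → ℝ) → ℝ} {K : ℝ} (H : Hyp n p f K)
    (ι : Type) [Fintype ι] [Nonempty ι] (x : ι → Fin n → ℝ) (hx : ∀ i, x i ∈ lpBall n p) :
    |(∑ i, f (x i)) / Fintype.card ι - f ((Fintype.card ι : ℝ)⁻¹ • ∑ i, x i)|
      ≤ 72 + 3 / 4 * K := by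
  have hp := H.hp
  have hM : (0:ℝ) < Fintype.card ι := by exact_mod_cast Fintype.card_pos
  set b := (Fintype.card ι : ℝ)⁻¹ • ∑ i, x i with hb
  have hbB : b ∈ lpBall n p := by
    rw [hb, Finset.smul_sum]
    exact (ball_convex hp).sum_mem (fun _ _ => by positivity) (by simp) (fun i _ => hx i)
  have hnb := ball_neg hbB
  have h1 := H.meanzero ι (fun i => (1 / 2 : ℝ) • (x i + -b)) (fun i => ball_mid hp (hx i) hnb) (by
    intro c
    simp only [Pi.smul_apply, Pi.add_apply, Pi.neg_apply, smul_eq_mul, ← Finset.mul_sum,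
      Finset.sum_add_distrib, sum_const, card_univ, nsmul_eq_mul]
    simp only [hb, Pi.smul_apply, Finset.sum_apply, smul_eq_mul]
    field_simp
    ring)
  have h2 : |∑ i, f (x i) + Fintype.card ι * f (-b) -
      2 * ∑ i, f ((1 / 2 : ℝ) • (x i + -b))| ≤ Fintype.card ι := by
    have e : ∑ i, f (x i) + Fintype.card ι * f (-b) - 2 * ∑ i, f ((1 / 2 : ℝ) • (x i + -b)) =
        ∑ i, (f (x i) + f (-b) - 2 * f ((1 / 2 : ℝ) • (x i + -b))) := by
      rw [Finset.sum_sub_distrib, Finset.sum_add_distrib, Finset.mul_sum]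
      simp
    rw [e]
    refine (Finset.abs_sum_le_sum_abs _ _).trans ?_
    calc _ ≤ ∑ i : ι, (1:ℝ) := Finset.sum_le_sum fun i _ => H.mid _ (hx i) _ hnb
      _ = _ := by simp
  have h3 := H.mid _ hbB _ hnb
  rw [add_neg_cancel, smul_zero, H.f0] at h3
  rw [abs_div, abs_of_pos hM, div_le_iff₀ hM] at h1
  have h4 : |Fintype.card ι * f b + Fintype.card ι * f (-b)| ≤ Fintype.card ι := by
    rw [← mul_add, abs_mul, abs_of_pos hM]
    refine mul_le_of_le_one_right hM.le ?_
    simpa using h3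
  have e5 : (∑ i, f (x i)) / Fintype.card ι - f b =
      (∑ i, f (x i) - Fintype.card ι * f b) / Fintype.card ι := by
    field_simp
  rw [e5, abs_div, abs_of_pos hM, div_le_iff₀ hM]
  rw [abs_le] at h1 h2 h4 ⊢
  constructor <;> linarith

theorem Hyp.weighted {n : ℕ} {p : ℝ} {f : (Fin n → ℝ) → ℝ} {K : ℝ} (H : Hyp n p f K)
    (hf : ContinuousOn f (lpBall n p))
    (ι : Type) [Fintype ι] (w : ι → ℝ) (x : ι → Fin n → ℝ) (hw : ∀ i, 0 ≤ w i)
    (hw1 : ∑ i, w i = 1) (hx : ∀ i, x i ∈ lpBall n p) :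
    |∑ i, w i * f (x i) - f (∑ i, w i • x i)| ≤ 72 + 3 / 4 * K := by
  have hp := H.hp
  let k : ℕ → ι → ℕ := fun M i => ⌊w i * (M : ℝ)⌋₊
  have hk : ∀ M, ∑ i, k M i ≤ M := by
    intro M
    have : (∑ i, (k M i : ℝ)) ≤ M := by
      calc (∑ i, (k M i : ℝ)) ≤ ∑ i, w i * M :=
            Finset.sum_le_sum fun i _ => Nat.floor_le (mul_nonneg (hw i) (by positivity))
        _ = M := by rw [← Finset.sum_mul, hw1, one_mul]
    exact_mod_cast this
  have hfloor : ∀ i, Filter.Tendsto (fun M : ℕ => (k M i : ℝ) / M) Filter.atTop (nhds (w i)) :=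
    fun i => (tendsto_nat_floor_mul_div_atTop (hw i)).comp tendsto_natCast_atTop_atTop
  have hin : ∀ M : ℕ, 0 < M → (∑ i, ((k M i : ℝ) / M) • x i ∈ lpBall n p) ∧
      |∑ i, ((k M i : ℝ) / M) * f (x i) - f (∑ i, ((k M i : ℝ) / M) • x i)| ≤ 72 + 3 / 4 * K := by
    intro M hM
    let κ := (Σ i, Fin (k M i)) ⊕ Fin (M - ∑ i, k M i)
    have hcard : Fintype.card κ = M := by
      simp only [κ, Fintype.card_sum, Fintype.card_sigma, Fintype.card_fin]
      have := hk M
      omega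
    have hne : Nonempty κ := Fintype.card_pos_iff.mp (by omega)
    let y : κ → Fin n → ℝ := Sum.elim (fun s => x s.1) (fun _ => 0)
    have hy : ∀ j, y j ∈ lpBall n p := by
      rintro (s | s)
      · exact hx _
      · exact ball_zero hp
    have e1 : ∑ j, y j = ∑ i, (k M i : ℝ) • x i := by
      simp only [κ, y, Fintype.sum_sum_type, Sum.elim_inl, Sum.elim_inr, Fintype.sum_sigma]
      simp [← Nat.cast_smul_eq_nsmul ℝ]
    have e2 : ∑ j, f (y j) = ∑ i, (k M i : ℝ) * f (x i) := by
      simp only [κ, y, Fintype.sum_sum_type, Sum.elim_inl, Sum.elim_inr, Fintype.sum_sigma]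
      simp [H.f0]
    have h := H.bary κ y hy
    have e3 : (M : ℝ)⁻¹ • ∑ i, (k M i : ℝ) • x i = ∑ i, ((k M i : ℝ) / M) • x i := by
      rw [Finset.smul_sum]
      refine Finset.sum_congr rfl fun i _ => ?_
      rw [smul_smul, div_eq_inv_mul]
    have e4 : (∑ i, (k M i : ℝ) * f (x i)) / M = ∑ i, ((k M i : ℝ) / M) * f (x i) := by
      rw [Finset.sum_div]
      refine Finset.sum_congr rfl fun i _ => ?_
      ring
    rw [hcard, e1, e2, e3, e4] at h
    refine ⟨?_, h⟩
    have hb : (Fintype.card κ : ℝ)⁻¹ • ∑ j, y j ∈ lpBall n p := by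
      have hM' : (0:ℝ) < Fintype.card κ := by exact_mod_cast Fintype.card_pos
      rw [Finset.smul_sum]
      exact (ball_convex hp).sum_mem (fun _ _ => by positivity)
        (by rw [Finset.sum_const, card_univ, nsmul_eq_mul, mul_inv_cancel₀ hM'.ne'])
        (fun i _ => hy i)
    rwa [hcard, e1, e3] at hb
  have hbar : ∑ i, w i • x i ∈ lpBall n p :=
    (ball_convex hp).sum_mem (fun i _ => hw i) hw1 (fun i _ => hx i)
  have ht1 : Filter.Tendsto (fun M : ℕ => ∑ i, ((k M i : ℝ) / M) • x i) Filter.atTop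
      (nhds (∑ i, w i • x i)) :=
    tendsto_finsetSum _ fun i _ => (hfloor i).smul_const (x i)
  have ht2 : Filter.Tendsto (fun M : ℕ => ∑ i, ((k M i : ℝ) / M) * f (x i)) Filter.atTop
      (nhds (∑ i, w i * f (x i))) :=
    tendsto_finsetSum _ fun i _ => (hfloor i).mul_const (f (x i))
  have ht1' : Filter.Tendsto (fun M : ℕ => ∑ i, ((k M i : ℝ) / M) • x i) Filter.atTop
      (nhdsWithin (∑ i, w i • x i) (lpBall n p)) := by
    rw [tendsto_nhdsWithin_iff]
    refine ⟨ht1, ?_⟩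
    filter_upwards [Filter.eventually_gt_atTop 0] with M hM
    exact (hin M hM).1
  have ht3 := (hf _ hbar).tendsto.comp ht1'
  refine le_of_tendsto (ht2.sub ht3).abs ?_
  filter_upwards [Filter.eventually_gt_atTop 0] with M hM
  exact (hin M hM).2

theorem ball_compact {n : ℕ} {p : ℝ} (hp : 2 ≤ p) : IsCompact (lpBall n p) := by
  refine Metric.isCompact_of_isClosed_isBounded ?_ ?_
  · refine isClosed_le ?_ continuous_const
    refine continuous_finsetSum _ fun i _ => ?_
    exact (continuous_apply i).abs.rpow_const fun x => Or.inr (by linarith)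
  · rw [Metric.isBounded_iff_subset_closedBall 0]
    refine ⟨1, fun x hx => ?_⟩
    rw [mem_closedBall_zero_iff, pi_norm_le_iff_of_nonneg zero_le_one]
    intro i
    have h1 : |x i| ^ p ≤ 1 :=
      (Finset.single_le_sum (f := fun i => |x i| ^ p)
        (fun j _ => Real.rpow_nonneg (abs_nonneg _) _) (mem_univ i)).trans hx
    rw [Real.norm_eq_abs]
    by_contra hlt
    push Not at hlt
    have := Real.one_lt_rpow hlt (show 0 < p by linarith)
    linarith

theorem Hyp.sandwich {n : ℕ} {p : ℝ} {f : (Fin n → ℝ) → ℝ} {K : ℝ} (H : Hyp n p f K)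
    (hf : ContinuousOn f (lpBall n p)) :
    ∃ (c : ℝ) (a : Fin n → ℝ), ∀ x ∈ lpBall n p,
      |f x - (c + ∑ i, a i * x i)| ≤ 73 + 3 / 4 * K := by
  have hp := H.hp
  set C := 72 + 3 / 4 * K with hC
  set B := lpBall n p with hB
  have hBc : IsCompact B := ball_compact hp
  let U0 : Set ((Fin n → ℝ) × ℝ) := (fun x => (x, f x - C)) '' B
  let V0 : Set ((Fin n → ℝ) × ℝ) := (fun x => (x, f x + C + 1)) '' B
  have hU0 : IsCompact U0 := hBc.image_of_continuousOn (by fun_prop)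
  have hV0 : IsCompact V0 := hBc.image_of_continuousOn (by fun_prop)
  let P : Set ((Fin n → ℝ) × ℝ) := (B ×ˢ Set.univ) ∩ (fun q => f q.1 - q.2) ⁻¹' Set.Ici 0
  let Q : Set ((Fin n → ℝ) × ℝ) := (B ×ˢ Set.univ) ∩ (fun q => f q.1 - q.2) ⁻¹' Set.Iic (-1)
  have hcont : ContinuousOn (fun q : (Fin n → ℝ) × ℝ => f q.1 - q.2) (B ×ˢ Set.univ) := by
    refine ContinuousOn.sub (hf.comp continuousOn_fst fun q hq => hq.1) continuousOn_snd
  have hclosed : IsClosed (B ×ˢ (Set.univ : Set ℝ)) := hBc.isClosed.prod isClosed_univ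
  have hP : IsClosed P := hcont.preimage_isClosed_of_isClosed hclosed isClosed_Ici
  have hQ : IsClosed Q := hcont.preimage_isClosed_of_isClosed hclosed isClosed_Iic
  have hUP : convexHull ℝ U0 ⊆ P := by
    intro q hq
    obtain ⟨ι, _, w, z, hw, hw1, hz, rfl⟩ := mem_convexHull_iff_exists_fintype.mp hq
    choose x hx hxz using hz
    have hbar : ∑ i, w i • x i ∈ B :=
      (ball_convex hp).sum_mem (fun i _ => hw i) hw1 (fun i _ => hx i)
    have h := H.weighted hf ι w x hw hw1 hx
    have e1 : (∑ i, w i • z i).1 = ∑ i, w i • x i := by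
      rw [Prod.fst_sum]
      refine Finset.sum_congr rfl fun i _ => ?_
      rw [← hxz i]; rfl
    have e2 : (∑ i, w i • z i).2 = ∑ i, w i * f (x i) - C := by
      rw [Prod.snd_sum]
      have : ∀ i, (w i • z i).2 = w i * f (x i) - w i * C := by
        intro i
        rw [← hxz i]; simp; ring
      simp only [this]
      rw [Finset.sum_sub_distrib, ← Finset.sum_mul, hw1, one_mul]
    refine ⟨⟨by rw [e1]; exact hbar, trivial⟩, ?_⟩
    simp only [Set.mem_preimage, Set.mem_Ici]
    rw [e1, e2]
    rw [abs_le] at h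
    linarith
  have hVQ : convexHull ℝ V0 ⊆ Q := by
    intro q hq
    obtain ⟨ι, _, w, z, hw, hw1, hz, rfl⟩ := mem_convexHull_iff_exists_fintype.mp hq
    choose x hx hxz using hz
    have hbar : ∑ i, w i • x i ∈ B :=
      (ball_convex hp).sum_mem (fun i _ => hw i) hw1 (fun i _ => hx i)
    have h := H.weighted hf ι w x hw hw1 hx
    have e1 : (∑ i, w i • z i).1 = ∑ i, w i • x i := by
      rw [Prod.fst_sum]
      refine Finset.sum_congr rfl fun i _ => ?_
      rw [← hxz i]; rfl
    have e2 : (∑ i, w i • z i).2 = ∑ i, w i * f (x i) + (C + 1) := by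
      rw [Prod.snd_sum]
      have : ∀ i, (w i • z i).2 = w i * f (x i) + w i * (C + 1) := by
        intro i
        rw [← hxz i]; simp; ring
      simp only [this]
      rw [Finset.sum_add_distrib, ← Finset.sum_mul, hw1, one_mul]
    refine ⟨⟨by rw [e1]; exact hbar, trivial⟩, ?_⟩
    simp only [Set.mem_preimage, Set.mem_Iic]
    rw [e1, e2]
    rw [abs_le] at h
    linarith
  have hdisj : Disjoint (closure (convexHull ℝ U0)) (closure (convexHull ℝ V0)) := by
    rw [Set.disjoint_left]
    intro q hq hq'
    have h1 := (closure_minimal hUP hP hq).2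
    have h2 := (closure_minimal hVQ hQ hq').2
    simp only [Set.mem_preimage, Set.mem_Iic, Set.mem_Ici] at h1 h2
    linarith
  obtain ⟨g, u, v, hgu, huv, hgv⟩ := geometric_hahn_banach_compact_closed
    (convex_convexHull ℝ U0).closure
    (Metric.isCompact_of_isClosed_isBounded isClosed_closure
      (isBounded_convexHull.mpr hU0.isBounded).closure)
    (convex_convexHull ℝ V0).closure isClosed_closure hdisj
  have h1 : ∀ x ∈ B, g (x, f x - C) < u := fun x hx =>
    hgu _ (subset_closure (subset_convexHull ℝ _ ⟨x, hx, rfl⟩))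
  have h2 : ∀ x ∈ B, v < g (x, f x + C + 1) := fun x hx =>
    hgv _ (subset_closure (subset_convexHull ℝ _ ⟨x, hx, rfl⟩))
  set β := g (0, 1) with hβ
  have hdec : ∀ (x : Fin n → ℝ) (y : ℝ), g (x, y) = g (x, 0) + y * β := by
    intro x y
    rw [hβ, ← smul_eq_mul, ← map_smul, ← map_add]
    simp
  have hlin : ∀ x : Fin n → ℝ, g (x, 0) = ∑ i, g (Pi.single i 1, 0) * x i := by
    intro x
    have e : ((x, 0) : (Fin n → ℝ) × ℝ) = ∑ i, x i • ((Pi.single i 1, 0) : (Fin n → ℝ) × ℝ) := by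
      ext1
      · rw [Prod.fst_sum]
        simp only [Prod.smul_fst]
        exact pi_eq_sum_univ' x
      · rw [Prod.snd_sum]; simp
    rw [e, map_sum]
    refine Finset.sum_congr rfl fun i _ => ?_
    rw [map_smul, smul_eq_mul, mul_comm]
  have hK : 0 ≤ K := (abs_nonneg _).trans (H.bd 0 (ball_zero hp))
  have hβ0 : 0 < β := by
    have a1 := h1 0 (ball_zero hp)
    have a2 := h2 0 (ball_zero hp)
    rw [hdec] at a1 a2
    have a3 : 0 < (2 * C + 1) * β := by linarith
    exact pos_of_mul_pos_right a3 (by linarith)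
  refine ⟨u / β, fun i => -(g (Pi.single i 1, 0) / β), fun x hx => ?_⟩
  have a1 := h1 x hx
  have a2 := h2 x hx
  rw [hdec] at a1 a2
  have e : u / β + ∑ i, -(g (Pi.single i 1, 0) / β) * x i = (u - g (x, 0)) / β := by
    rw [hlin x, sub_div, Finset.sum_div, sub_eq_add_neg, ← Finset.sum_neg_distrib]
    congr 1
    refine Finset.sum_congr rfl fun i _ => ?_
    ring
  rw [e]
  have b1 : f x - C < (u - g (x, 0)) / β := by
    rw [lt_div_iff₀ hβ0]; linarith
  have b2 : (u - g (x, 0)) / β < f x + C + 1 := by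
    rw [div_lt_iff₀ hβ0]; linarith
  rw [abs_le]
  constructor <;> linarith

theorem Hyp.linear {n : ℕ} {p : ℝ} {f : (Fin n → ℝ) → ℝ} {K : ℝ} (H : Hyp n p f K)
    (hf : ContinuousOn f (lpBall n p)) :
    ∃ (a : Fin n → ℝ), ∀ x ∈ lpBall n p, |f x - ∑ i, a i * x i| ≤ 74 + 3 / 4 * K := by
  obtain ⟨c, a, h⟩ := H.sandwich hf
  refine ⟨a, fun x hx => ?_⟩
  have h1 := h x hx
  have h2 := h (-x) (ball_neg hx)
  have h3 := H.mid _ hx _ (ball_neg hx)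
  rw [add_neg_cancel, smul_zero, H.f0] at h3
  simp only [Pi.neg_apply, mul_neg, Finset.sum_neg_distrib] at h2
  rw [abs_le] at h1 h2 h3 ⊢
  constructor <;> linarith

theorem mid_of_diffBound {n : ℕ} {B : Set (Fin n → ℝ)} {f : (Fin n → ℝ) → ℝ}
    (hB : ∀ x ∈ B, ∀ y ∈ B, (1 / 2 : ℝ) • (x + y) ∈ B) (hd : diffBound 2 B f 1) :
    ∀ x ∈ B, ∀ y ∈ B, |f x + f y - 2 * f ((1 / 2 : ℝ) • (x + y))| ≤ 1 := by
  intro x hx y hy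
  have e0 : x + ((0:ℕ):ℝ) • ((1 / 2 : ℝ) • (y - x)) = x := by simp
  have e1 : x + ((1:ℕ):ℝ) • ((1 / 2 : ℝ) • (y - x)) = (1 / 2 : ℝ) • (x + y) := by
    ext i; simp; ring
  have e2 : x + ((2:ℕ):ℝ) • ((1 / 2 : ℝ) • (y - x)) = y := by
    ext i; simp
  have h := hd x ((1 / 2 : ℝ) • (y - x)) (by
    intro j hj
    interval_cases j
    · rwa [e0]
    · rw [e1]; exact hB x hx y hy
    · rwa [e2])
  rw [Finset.sum_range_succ, Finset.sum_range_succ, Finset.sum_range_one, e0, e1, e2] at h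
  norm_num at h
  norm_num
  rw [abs_le] at h ⊢
  constructor <;> linarith

theorem lp_case (p : ℝ) (hp : 2 ≤ p) (n : ℕ) (f : (Fin n → ℝ) → ℝ)
    (hf : ContinuousOn f (lpBall n p)) (hd : diffBound 2 (lpBall n p) f 1) :
    ∃ (c : ℝ) (a : Fin n → ℝ), ∀ x ∈ lpBall n p, |f x - (c + ∑ i, a i * x i)| ≤ 300 := by
  have hmid := mid_of_diffBound (fun x hx y hy => ball_mid hp hx hy) hd
  let S : Set ℝ := {K | ∃ a : Fin n → ℝ, ∀ x ∈ lpBall n p, |f x - f 0 - ∑ i, a i * x i| ≤ K}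
  have hnn : ∀ K ∈ S, 0 ≤ K := by
    rintro K ⟨a, ha⟩
    exact (abs_nonneg _).trans (ha 0 (ball_zero hp))
  have hbdd : BddBelow S := ⟨0, fun K hK => hnn K hK⟩
  have hne : S.Nonempty := by
    obtain ⟨C, hC⟩ := (ball_compact hp).exists_bound_of_continuousOn hf
    refine ⟨C + C, 0, fun x hx => ?_⟩
    have h1 := hC x hx
    have h2 := hC 0 (ball_zero hp)
    rw [Real.norm_eq_abs] at h1 h2
    simp only [Pi.zero_apply, zero_mul, Finset.sum_const_zero, sub_zero]
    rw [abs_le] at h1 h2 ⊢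
    constructor <;> linarith
  have hstep : ∀ K ∈ S, 74 + 3 / 4 * K ∈ S := by
    rintro K ⟨a, ha⟩
    have H : Hyp n p (fun x => f x - f 0 - ∑ i, a i * x i) K := by
      refine ⟨hp, fun x hx y hy => ?_, by simp, ha⟩
      have h := hmid x hx y hy
      have e : ∑ i, a i * ((1 / 2 : ℝ) • (x + y)) i =
          (1 / 2) * ((∑ i, a i * x i) + ∑ i, a i * y i) := by
        rw [← Finset.sum_add_distrib, Finset.mul_sum]
        refine Finset.sum_congr rfl fun i _ => ?_
        simp only [Pi.smul_apply, Pi.add_apply, smul_eq_mul]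
        ring
      rw [e]
      rw [abs_le] at h ⊢
      constructor <;> linarith
    obtain ⟨b, hb⟩ := H.linear (by fun_prop)
    refine ⟨a + b, fun x hx => ?_⟩
    have h := hb x hx
    simp only [Pi.add_apply, add_mul, Finset.sum_add_distrib]
    rwa [← sub_sub]
  have hinf : sInf S ≤ 296 := by
    have h1 : ∀ K ∈ S, (sInf S - 74) * (4 / 3) ≤ K := by
      intro K hK
      have := csInf_le hbdd (hstep K hK)
      linarith
    have := le_csInf hne h1
    linarith
  obtain ⟨K, hK, hlt⟩ := exists_lt_of_csInf_lt hne (show sInf S < 300 by linarith)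
  obtain ⟨a, ha⟩ := hK
  refine ⟨f 0, a, fun x hx => ?_⟩
  rw [← sub_sub]
  exact (ha x hx).trans hlt.le

theorem linf_case (n : ℕ) (f : (Fin n → ℝ) → ℝ)
    (hf : ContinuousOn f (lInftyBall n)) (hd : diffBound 2 (lInftyBall n) f 1) :
    ∃ (c : ℝ) (a : Fin n → ℝ), ∀ x ∈ lInftyBall n, |f x - (c + ∑ i, a i * x i)| ≤ 1602 := by
  have hp : (2:ℝ) ≤ (n:ℝ) + 2 := by
    have : (0:ℝ) ≤ n := by positivity
    linarith
  have hsub : lpBall n ((n:ℝ) + 2) ⊆ lInftyBall n := by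
    intro x hx i
    have h1 : |x i| ^ ((n:ℝ) + 2) ≤ 1 :=
      (Finset.single_le_sum (f := fun i => |x i| ^ ((n:ℝ) + 2))
        (fun j _ => Real.rpow_nonneg (abs_nonneg _) _) (mem_univ i)).trans hx
    by_contra hlt
    push Not at hlt
    have := Real.one_lt_rpow hlt (show 0 < (n:ℝ) + 2 by linarith)
    linarith
  obtain ⟨c, a, h⟩ := lp_case ((n:ℝ) + 2) hp n f (hf.mono hsub)
    (fun x k hk => hd x k fun j hj => hsub (hk j hj))
  have hmidB : ∀ x ∈ lInftyBall n, ∀ y ∈ lInftyBall n, (1 / 2 : ℝ) • (x + y) ∈ lInftyBall n := by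
    intro x hx y hy i
    have h1 := hx i
    have h2 := hy i
    simp only [Pi.smul_apply, Pi.add_apply, smul_eq_mul]
    rw [abs_le] at h1 h2 ⊢
    constructor <;> linarith
  refine ⟨c, a, fun x hx => ?_⟩
  have h0 : (0 : Fin n → ℝ) ∈ lInftyBall n := fun i => by simp
  have hm := mid_of_diffBound hmidB hd x hx 0 h0
  have hhalf : (1 / 2 : ℝ) • (x + 0) ∈ lpBall n ((n:ℝ) + 2) := by
    change ∑ i, |((1 / 2 : ℝ) • (x + 0)) i| ^ ((n:ℝ) + 2) ≤ 1
    calc ∑ i, |((1 / 2 : ℝ) • (x + 0)) i| ^ ((n:ℝ) + 2) ≤ ∑ i : Fin n, ((1:ℝ) / 2) ^ n := by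
          refine Finset.sum_le_sum fun i _ => ?_
          have h1 : |((1 / 2 : ℝ) • (x + 0)) i| ≤ 1 / 2 := by
            have := hx i
            simp only [Pi.smul_apply, add_zero, smul_eq_mul, abs_mul]
            rw [abs_of_pos (by norm_num : (0:ℝ) < 1 / 2)]
            linarith
          calc _ ≤ ((1:ℝ) / 2) ^ ((n:ℝ) + 2) :=
                Real.rpow_le_rpow (abs_nonneg _) h1 (by linarith)
            _ ≤ ((1:ℝ) / 2) ^ (n:ℝ) :=
                Real.rpow_le_rpow_of_exponent_ge (by norm_num) (by norm_num) (by linarith)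
            _ = _ := Real.rpow_natCast _ _
      _ = n * (1 / 2) ^ n := by simp
      _ ≤ 1 := by
          have h2 : (n:ℝ) ≤ 2 ^ n := by exact_mod_cast (Nat.lt_two_pow_self (n := n)).le
          rw [one_div, inv_pow, ← div_eq_mul_inv, div_le_one (by positivity)]
          exact h2
  have b1 := h _ hhalf
  have b2 := h 0 (ball_zero hp)
  have e : ∑ i, a i * ((1 / 2 : ℝ) • (x + 0)) i = (1 / 2) * ∑ i, a i * x i := by
    rw [Finset.mul_sum]
    refine Finset.sum_congr rfl fun i _ => ?_
    simp only [Pi.smul_apply, add_zero, smul_eq_mul]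
    ring
  rw [e] at b1
  simp only [Pi.zero_apply, mul_zero, Finset.sum_const_zero, add_zero] at b2
  rw [abs_le] at hm b1 b2 ⊢
  constructor <;> linarith

/-- Theorem 3.8(c): `w₂(ℓ_pⁿ) ≤ 1602` uniformly in `n` for all `2 ≤ p ≤ ∞`. -/
theorem whitney_lp_large_p_uniform :
    (∀ p : ℝ, 2 ≤ p → ∀ n : ℕ, 1 ≤ n →
      ∀ f : (Fin n → ℝ) → ℝ, ContinuousOn f (lpBall n p) → diffBound 2 (lpBall n p) f 1 →
        ∃ (c : ℝ) (a : Fin n → ℝ), ∀ x ∈ lpBall n p,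
          |f x - (c + ∑ i, a i * x i)| ≤ 1602) ∧
    (∀ n : ℕ, 1 ≤ n →
      ∀ f : (Fin n → ℝ) → ℝ, ContinuousOn f (lInftyBall n) → diffBound 2 (lInftyBall n) f 1 →
        ∃ (c : ℝ) (a : Fin n → ℝ), ∀ x ∈ lInftyBall n,
          |f x - (c + ∑ i, a i * x i)| ≤ 1602) := by
  refine ⟨fun p hp n _ f hf hd => ?_, fun n _ f hf hd => linf_case n f hf hd⟩
  obtain ⟨c, a, h⟩ := lp_case p hp n f hf hd
  exact ⟨c, a, fun x hx => (h x hx).trans (by norm_num)⟩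
end

section
/- There is an absolute constant C such that for every p with 1 < p ≤ 2, every finite-dimensional real normed space X that has type p with constant T ≥ 1, and every continuous function f : B_X → ℝ with ω₂(f;B_X) ≤ 1, there exists an affine function φ on X with sup_{x∈B_X} |f(x) − φ(x)| ≤ C (p−1)^{−1} (1 + |log(p−1)| + log T). (Theorem 3.11: w₂(X) ≤ C(p−1)^{−1}(1+|log(p−1)|+log T_p(X)).) -/
open Finset

/-- `X` has (Rademacher) type `p` with constant `T`. -/
def HasTypeConst (X : Type*) [NormedAddCommGroup X] [NormedSpace ℝ X] (p T : ℝ) : Prop :=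
  ∀ (k : ℕ) (x : Fin k → X),
    ((∑ ε : Fin k → Bool, ‖∑ i, (if ε i then (1 : ℝ) else -1) • x i‖ ^ p) / 2 ^ k) ^ (1 / p) ≤
      T * (∑ i, ‖x i‖ ^ p) ^ (1 / p)


section helpers

lemma wt_small {X : Type} [NormedAddCommGroup X] [NormedSpace ℝ X] (f : X → ℝ)
    (hodd : ∀ x, f (-x) = - f x)
    (hmid : ∀ x y, ‖x‖ ≤ 1 → ‖y‖ ≤ 1 → |f x + f y - 2 * f ((1/2 : ℝ) • (x + y))| ≤ 1)
    (D : ℝ) (hD : ∀ x, ‖x‖ ≤ 1 → |f x| ≤ D) (x : X) (hx : ‖x‖ ≤ 1) :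
    |f x| ≤ 2 * D * ‖x‖ + 1 := by
  have h0 : f 0 = 0 := by
    have := hodd 0
    rw [neg_zero] at this
    linarith
  have hD0 : 0 ≤ D := (abs_nonneg _).trans (hD 0 (by simp))
  have key : ∀ k : ℕ, ∀ x : X, ‖x‖ ≤ (1/2 : ℝ)^k → |f x| ≤ (1/2 : ℝ)^k * D + 1 := by
    intro k
    induction k with
    | zero => intro x hx; have := hD x (by simpa using hx); simp; linarith
    | succ k ih =>
      intro x hx
      have hn : ‖(2:ℝ) • x‖ ≤ (1/2 : ℝ)^k := by
        rw [norm_smul, Real.norm_eq_abs, abs_of_pos (by norm_num : (0:ℝ) < 2)]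
        rw [pow_succ] at hx
        linarith
      have h1 := ih _ hn
      have h2 := hmid ((2:ℝ) • x) 0 (hn.trans (pow_le_one₀ (by norm_num) (by norm_num))) (by simp)
      rw [add_zero, smul_smul, h0] at h2
      norm_num at h2
      rw [pow_succ]
      rw [abs_le] at *
      constructor <;> linarith
  by_cases hx0 : x = 0
  · subst hx0; simp [h0]
  obtain ⟨k, hk1, hk2⟩ := exists_nat_pow_near_of_lt_one (norm_pos_iff.mpr hx0) hx
    (by norm_num : (0:ℝ) < 1/2) (by norm_num)
  have := key k x hk2
  rw [pow_succ] at hk1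
  nlinarith

lemma wt_avg {X : Type} [NormedAddCommGroup X] [NormedSpace ℝ X] (f : X → ℝ)
    (hmid : ∀ x y, ‖x‖ ≤ 1 → ‖y‖ ≤ 1 → |f x + f y - 2 * f ((1/2 : ℝ) • (x + y))| ≤ 1)
    (m : ℕ) : ∀ (y : ℕ → X), (∀ i, ‖y i‖ ≤ 1) →
    ‖((1/2 : ℝ)^m) • ∑ i ∈ range (2^m), y i‖ ≤ 1 ∧
    |(1/2 : ℝ)^m * ∑ i ∈ range (2^m), f (y i) - f (((1/2 : ℝ)^m) • ∑ i ∈ range (2^m), y i)|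
      ≤ m / 2 := by
  induction m with
  | zero => intro y hy; simpa using hy 0
  | succ m ih =>
    intro y hy
    obtain ⟨a1, a2⟩ := ih y hy
    obtain ⟨b1, b2⟩ := ih (fun i => y (2^m + i)) (fun i => hy _)
    have e : 2^(m+1) = 2^m + 2^m := by ring
    rw [e, Finset.sum_range_add, Finset.sum_range_add]
    set u := ∑ i ∈ range (2^m), y i
    set v := ∑ i ∈ range (2^m), y (2^m + i)
    set u' := ∑ i ∈ range (2^m), f (y i)
    set v' := ∑ i ∈ range (2^m), f (y (2^m + i))
    have e2 : ((1/2 : ℝ)^(m+1)) • (u + v) =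
        (1/2 : ℝ) • (((1/2 : ℝ)^m) • u + ((1/2 : ℝ)^m) • v) := by
      rw [← smul_add, smul_smul]; congr 1; ring
    rw [e2]
    have h := hmid _ _ a1 b1
    constructor
    · rw [norm_smul, Real.norm_eq_abs, abs_of_pos (by norm_num : (0:ℝ) < 1/2)]
      have := norm_add_le (((1/2 : ℝ)^m) • u) (((1/2 : ℝ)^m) • v)
      linarith
    · push_cast
      rw [pow_succ]
      rw [abs_le] at *
      constructor <;> linarith

lemma wt_marg {ι : Type} [Fintype ι] {n : ℕ} (a φ : ι → ℝ) (ha : ∑ i, a i = 1) (i0 : Fin n) :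
    ∑ s : Fin n → ι, (∏ i, a (s i)) * φ (s i0) = ∑ j, a j * φ j := by
  classical
  have h : ∀ s : Fin n → ι, (∏ i, a (s i)) * φ (s i0)
      = ∏ i, (a (s i) * if i = i0 then φ (s i) else 1) := by
    intro s
    rw [Finset.prod_mul_distrib, Finset.prod_ite_eq' univ i0 (fun i => φ (s i))]
    simp
  simp_rw [h]
  rw [← Fintype.prod_sum (fun (i : Fin n) (j : ι) => a j * if i = i0 then φ j else 1)]
  rw [Finset.prod_eq_single i0]
  · simp
  · intro b _ hb; simp [hb, ha]
  · simp

lemma wt_tot {ι : Type} [Fintype ι] {n : ℕ} (a : ι → ℝ) (ha : ∑ i, a i = 1) :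
    ∑ s : Fin n → ι, (∏ i, a (s i)) = 1 := by
  classical
  rw [← Fintype.prod_sum (fun (_ : Fin n) (j : ι) => a j)]
  simp [ha]

lemma wt_margv {X : Type} [NormedAddCommGroup X] [NormedSpace ℝ X]
    {ι : Type} [Fintype ι] {n : ℕ} (a : ι → ℝ) (x : ι → X) (ha : ∑ i, a i = 1) (i0 : Fin n) :
    ∑ s : Fin n → ι, (∏ i, a (s i)) • x (s i0) = ∑ j, a j • x j := by
  classical
  have h : ∀ s : Fin n → ι, (∏ i, a (s i)) • x (s i0)
      = ∑ j, ((∏ i, a (s i)) * (if s i0 = j then 1 else 0)) • x j := by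
    intro s
    simp
  simp_rw [h]
  rw [Finset.sum_comm]
  refine Finset.sum_congr rfl fun j _ => ?_
  rw [← Finset.sum_smul, wt_marg a (fun k => if k = j then 1 else 0) ha i0]
  simp

/-- type p in first moment form -/
lemma wt_type {X : Type} [NormedAddCommGroup X] [NormedSpace ℝ X] {p T : ℝ} (hp : 1 < p)
    (hT : 1 ≤ T) (h : HasTypeConst X p T) (n : ℕ) (z : Fin n → X) (hz : ∀ i, ‖z i‖ ≤ 2) :
    (∑ ε : Fin n → Bool, ‖∑ i, (if ε i then (1 : ℝ) else -1) • z i‖) / 2 ^ n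
      ≤ 2 * T * (n : ℝ) ^ (1 / p) := by
  have hp0 : 0 < p := by linarith
  have h1 := h n z
  have h2 := Real.arith_mean_le_rpow_mean (univ : Finset (Fin n → Bool)) (fun _ => 1 / 2 ^ n)
    (fun ε => ‖∑ i, (if ε i then (1 : ℝ) else -1) • z i‖) (fun _ _ => by positivity)
    (by simp) (fun _ _ => norm_nonneg _) hp.le
  rw [← Finset.mul_sum, ← Finset.mul_sum] at h2
  rw [one_div_mul_eq_div, one_div_mul_eq_div] at h2
  refine (h2.trans h1).trans ?_
  have h3 : ∑ i, ‖z i‖ ^ p ≤ n * 2 ^ p := by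
    calc ∑ i, ‖z i‖ ^ p ≤ ∑ i : Fin n, (2:ℝ) ^ p :=
          Finset.sum_le_sum fun i _ => Real.rpow_le_rpow (norm_nonneg _) (hz i) hp0.le
      _ = n * 2 ^ p := by simp
  have h4 : (∑ i, ‖z i‖ ^ p) ^ (1 / p) ≤ (n : ℝ) ^ (1/p) * 2 := by
    calc (∑ i, ‖z i‖ ^ p) ^ (1 / p) ≤ (n * (2:ℝ) ^ p) ^ (1/p) :=
          Real.rpow_le_rpow (Finset.sum_nonneg fun i _ => by positivity) h3 (by positivity)
      _ = (n : ℝ) ^ (1/p) * 2 := by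
          rw [Real.mul_rpow (by positivity) (by positivity), ← Real.rpow_mul (by norm_num),
            mul_one_div_cancel hp0.ne', Real.rpow_one]
  nlinarith

/-- symmetrization -/
lemma wt_symm {X : Type} [NormedAddCommGroup X] [NormedSpace ℝ X] {p T : ℝ} (hp : 1 < p)
    (hT : 1 ≤ T) (h : HasTypeConst X p T) (n : ℕ) {ι : Type} [Fintype ι] (a : ι → ℝ)
    (ha0 : ∀ i, 0 ≤ a i) (ha : ∑ i, a i = 1) (x : ι → X) (hx : ∀ i, ‖x i‖ ≤ 1)
    (hbar : ∑ i, a i • x i = 0) :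
    ∑ s : Fin n → ι, (∏ i, a (s i)) * ‖∑ i, x (s i)‖ ≤ 2 * T * (n : ℝ) ^ (1 / p) := by
  classical
  set W : (Fin n → ι) → ℝ := fun s => ∏ i, a (s i) with hW
  have hW0 : ∀ s, 0 ≤ W s := fun s => Finset.prod_nonneg fun i _ => ha0 _
  have hW1 : ∑ s, W s = 1 := wt_tot a ha
  have hz : ∑ s, W s • ∑ i, x (s i) = 0 := by
    simp_rw [Finset.smul_sum]
    rw [Finset.sum_comm]
    refine Finset.sum_eq_zero fun i _ => ?_
    rw [hW, wt_margv a x ha i, hbar]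
  set S : ℝ := ∑ q : (Fin n → ι) × (Fin n → ι), W q.1 * W q.2 * ‖∑ i, (x (q.1 i) - x (q.2 i))‖
    with hS
  have step1 : ∑ s : Fin n → ι, W s * ‖∑ i, x (s i)‖ ≤ S := by
    rw [hS, Fintype.sum_prod_type]
    refine Finset.sum_le_sum fun s _ => ?_
    have e : ∑ i, x (s i) = ∑ s', W s' • ∑ i, (x (s i) - x (s' i)) := by
      simp_rw [Finset.sum_sub_distrib, smul_sub]
      rw [Finset.sum_sub_distrib, hz, ← Finset.sum_smul, hW1]
      simp
    simp_rw [mul_assoc]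
    rw [← Finset.mul_sum]
    refine mul_le_mul_of_nonneg_left ?_ (hW0 s)
    rw [e]
    refine (norm_sum_le _ _).trans (le_of_eq ?_)
    refine Finset.sum_congr rfl fun s' _ => ?_
    rw [norm_smul, Real.norm_eq_abs, abs_of_nonneg (hW0 s')]
  have step2 : ∀ ε : Fin n → Bool, S = ∑ q : (Fin n → ι) × (Fin n → ι),
      W q.1 * W q.2 * ‖∑ i, (if ε i then (1 : ℝ) else -1) • (x (q.1 i) - x (q.2 i))‖ := by
    intro ε
    have inv : Function.Involutive (fun q : (Fin n → ι) × (Fin n → ι) =>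
        ((fun i => if ε i then q.1 i else q.2 i, fun i => if ε i then q.2 i else q.1 i) :
          (Fin n → ι) × (Fin n → ι))) := by
      intro q
      ext i <;> by_cases hi : ε i <;> simp [hi]
    rw [hS, ← Equiv.sum_comp inv.toPerm]
    refine Finset.sum_congr rfl fun q _ => ?_
    simp only [Function.Involutive.coe_toPerm, hW]
    congr 1
    · rw [← Finset.prod_mul_distrib, ← Finset.prod_mul_distrib]
      refine Finset.prod_congr rfl fun i _ => ?_
      by_cases hi : ε i <;> simp [hi, mul_comm]
    · congr 1
      refine Finset.sum_congr rfl fun i _ => ?_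
      by_cases hi : ε i <;> simp [hi]
  have step3 : S = ∑ q : (Fin n → ι) × (Fin n → ι), W q.1 * W q.2 *
      ((∑ ε : Fin n → Bool, ‖∑ i, (if ε i then (1 : ℝ) else -1) • (x (q.1 i) - x (q.2 i))‖)
        / 2 ^ n) := by
    have : S = (∑ ε : Fin n → Bool, S) / 2 ^ n := by
      simp
    rw [this, Finset.sum_congr rfl fun ε _ => step2 ε, Finset.sum_comm, Finset.sum_div]
    refine Finset.sum_congr rfl fun q _ => ?_
    rw [← Finset.mul_sum, mul_div_assoc]
  refine step1.trans ?_
  rw [step3]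
  calc _ ≤ ∑ q : (Fin n → ι) × (Fin n → ι), W q.1 * W q.2 * (2 * T * (n : ℝ) ^ (1 / p)) := by
        refine Finset.sum_le_sum fun q _ => mul_le_mul_of_nonneg_left ?_
          (mul_nonneg (hW0 _) (hW0 _))
        refine wt_type hp hT h n _ fun i => ?_
        have := norm_sub_le (x (q.1 i)) (x (q.2 i))
        linarith [hx (q.1 i), hx (q.2 i)]
    _ = _ := by
        rw [← Finset.sum_mul, Fintype.sum_prod_type]
        simp_rw [← Finset.mul_sum, hW1, mul_one]
        rw [hW1, one_mul]

lemma wt_core {X : Type} [NormedAddCommGroup X] [NormedSpace ℝ X] {p T : ℝ} (hp : 1 < p)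
    (hT : 1 ≤ T) (h : HasTypeConst X p T) (f : X → ℝ)
    (hodd : ∀ x, f (-x) = - f x)
    (hmid : ∀ x y, ‖x‖ ≤ 1 → ‖y‖ ≤ 1 → |f x + f y - 2 * f ((1/2 : ℝ) • (x + y))| ≤ 1)
    (D : ℝ) (hD : ∀ x, ‖x‖ ≤ 1 → |f x| ≤ D)
    (m : ℕ) (hm : 8 * T * ((2:ℝ)^m) ^ (1 / p) ≤ 2 ^ m)
    {ι : Type} [Fintype ι] (a : ι → ℝ)
    (ha0 : ∀ i, 0 ≤ a i) (ha : ∑ i, a i = 1) (x : ι → X) (hx : ∀ i, ‖x i‖ ≤ 1)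
    (hbar : ∑ i, a i • x i = 0) :
    |∑ i, a i * f (x i)| ≤ D / 2 + (m / 2 + 1) := by
  have hD0 : 0 ≤ D := (abs_nonneg _).trans (hD 0 (by simp))
  have hs := wt_symm hp hT h (2^m) a ha0 ha x hx hbar
  set W : (Fin (2^m) → ι) → ℝ := fun s => ∏ i, a (s i) with hW
  have hW0 : ∀ s, 0 ≤ W s := fun s => Finset.prod_nonneg fun i _ => ha0 _
  have hW1 : ∑ s, W s = 1 := wt_tot a ha
  have e : ∑ i, a i * f (x i) = ∑ s, W s * ((1/2:ℝ)^m * ∑ i, f (x (s i))) := by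
    simp_rw [mul_left_comm (W _)]
    rw [← Finset.mul_sum]
    simp_rw [Finset.mul_sum univ _ (W _)]
    rw [Finset.sum_comm]
    simp_rw [hW]
    rw [Finset.sum_congr rfl fun i _ => wt_marg a (fun j => f (x j)) ha i]
    simp
  have pt : ∀ s : Fin (2^m) → ι, |(1/2:ℝ)^m * ∑ i, f (x (s i))|
      ≤ m / 2 + 1 + 2 * D * (1/2:ℝ)^m * ‖∑ i, x (s i)‖ := by
    intro s
    have := wt_avg f hmid m (fun i => if hi : i < 2^m then x (s ⟨i, hi⟩) else 0)
      (fun i => by split_ifs <;> simp [hx])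
    simp only [Finset.sum_range, Fin.is_lt, dite_true, Fin.eta] at this
    obtain ⟨h1, h2⟩ := this
    have h3 := wt_small f hodd hmid D hD _ h1
    rw [norm_smul, Real.norm_eq_abs, abs_of_pos (by positivity : (0:ℝ) < (1/2)^m)] at h3
    rw [abs_le] at *
    constructor <;> linarith
  rw [e]
  have hpow : (0:ℝ) < 2^m := by positivity
  have hinv : (1/2:ℝ)^m * 2^m = 1 := by rw [← mul_pow]; norm_num
  push_cast at hs
  calc |∑ s, W s * ((1/2:ℝ)^m * ∑ i, f (x (s i)))|
      ≤ ∑ s, W s * (m / 2 + 1 + 2 * D * (1/2:ℝ)^m * ‖∑ i, x (s i)‖) := by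
        refine (Finset.abs_sum_le_sum_abs _ _).trans (Finset.sum_le_sum fun s _ => ?_)
        rw [abs_mul, abs_of_nonneg (hW0 s)]
        exact mul_le_mul_of_nonneg_left (pt s) (hW0 s)
    _ = (m / 2 + 1) + 2 * D * (1/2:ℝ)^m * ∑ s, W s * ‖∑ i, x (s i)‖ := by
        simp_rw [mul_add, Finset.sum_add_distrib, ← Finset.sum_mul, hW1]
        rw [Finset.mul_sum]
        simp_rw [one_mul]
        congr 1
        · refine Finset.sum_congr rfl fun s _ => by ring
    _ ≤ (m / 2 + 1) + 2 * D * (1/2:ℝ)^m * (2 * T * ((2:ℝ)^m) ^ (1 / p)) := by gcongr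
    _ ≤ (m / 2 + 1) + 2 * D * (1/2:ℝ)^m * (2^m / 4) := by gcongr; linarith
    _ = _ := by linear_combination (D/2) * hinv

lemma wt_step {X : Type} [NormedAddCommGroup X] [NormedSpace ℝ X] {p T : ℝ} (hp : 1 < p)
    (hT : 1 ≤ T) (h : HasTypeConst X p T) (f : X → ℝ)
    (hodd : ∀ x, f (-x) = - f x)
    (hmid : ∀ x y, ‖x‖ ≤ 1 → ‖y‖ ≤ 1 → |f x + f y - 2 * f ((1/2 : ℝ) • (x + y))| ≤ 1)
    (D : ℝ) (hD : ∀ x, ‖x‖ ≤ 1 → |f x| ≤ D)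
    (m : ℕ) (hm : 8 * T * ((2:ℝ)^m) ^ (1 / p) ≤ 2 ^ m) :
    ∃ g : X →ₗ[ℝ] ℝ, ∀ x, ‖x‖ ≤ 1 → |f x - g x| ≤ D / 2 + (m / 2 + 1) := by
  set R := D / 2 + ((m:ℝ) / 2 + 1) with hR
  set S : Set (X × ℝ) := (fun x => (x, f x + R)) '' Metric.closedBall 0 1 with hS
  set P : PointedCone ℝ (X × ℝ) := Submodule.span {c : ℝ // 0 ≤ c} S with hP
  let F : (X × ℝ) →ₗ.[ℝ] ℝ :=
    ⟨LinearMap.range (LinearMap.inr ℝ X ℝ), (LinearMap.snd ℝ X ℝ).comp (Submodule.subtype _)⟩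
  have hmem : ∀ x : X, ‖x‖ ≤ 1 → (x, f x + R) ∈ P := fun x hx =>
    Submodule.subset_span ⟨x, by simpa using hx, rfl⟩
  have hnon : ∀ t : ℝ, ((0 : X), t) ∈ P → 0 ≤ t := by
    intro t ht
    obtain ⟨N, c, y, hy⟩ := Submodule.mem_span_set'.mp ht
    choose x hx1 hx2 using fun i => (y i).2
    simp only [← hx2] at hy
    have hy1 := congrArg Prod.fst hy
    have hy2 := congrArg Prod.snd hy
    simp only [Prod.fst_sum, Prod.snd_sum, Prod.smul_fst, Prod.smul_snd] at hy1 hy2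
    have hc0 : ∀ i, 0 ≤ (c i : ℝ) := fun i => (c i).2
    have hy1' : ∑ i, (c i : ℝ) • x i = 0 := hy1
    have hy2' : ∑ i, (c i : ℝ) * (f (x i) + R) = t := hy2
    set A := ∑ i, (c i : ℝ) with hA
    have hA0 : 0 ≤ A := Finset.sum_nonneg fun i _ => hc0 i
    rcases hA0.eq_or_lt with h0 | h0
    · have hz : ∀ i, (c i : ℝ) = 0 := by
        intro i
        exact (Finset.sum_eq_zero_iff_of_nonneg fun i _ => hc0 i).mp h0.symm i (mem_univ i)
      rw [← hy2']
      simp [hz]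
    · have := wt_core hp hT h f hodd hmid D hD m hm (fun i => (c i : ℝ) / A)
        (fun i => div_nonneg (hc0 i) hA0) (by rw [← Finset.sum_div]; exact div_self h0.ne') x
        (fun i => by simpa using hx1 i) (by
          have e : ∀ i, ((c i : ℝ) / A) • x i = A⁻¹ • ((c i : ℝ) • x i) := by
            intro i; rw [smul_smul]; congr 1; field_simp
          simp_rw [e]
          rw [← Finset.smul_sum, hy1', smul_zero])
      have e2 : ∑ i, (c i : ℝ) / A * f (x i) = (∑ i, (c i : ℝ) * f (x i)) / A := by
        rw [Finset.sum_div]; refine Finset.sum_congr rfl fun i _ => by ring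
      rw [e2, ← hR] at this
      have h3 := (abs_le.mp this).1
      rw [le_div_iff₀ h0] at h3
      rw [← hy2']
      simp_rw [mul_add, Finset.sum_add_distrib, ← Finset.sum_mul]
      linarith
  obtain ⟨G, hG1, hG2⟩ := riesz_extension P F (by
      rintro ⟨_, t, rfl⟩ ht
      exact hnon t ht) (by
      rintro ⟨y, r⟩
      by_cases hy : y = 0
      · refine ⟨⟨_, ⟨-r, rfl⟩⟩, ?_⟩
        subst hy
        have := P.zero_mem
        convert this using 1
        simp
      · set x := (‖y‖)⁻¹ • y with hx
        have hy' : ‖y‖ ≠ 0 := norm_ne_zero_iff.mpr hy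
        have hxn : ‖x‖ ≤ 1 := by
          rw [hx, norm_smul, norm_inv, norm_norm, inv_mul_cancel₀ hy']
        refine ⟨⟨_, ⟨‖y‖ * (f x + R) - r, rfl⟩⟩, ?_⟩
        have := P.smul_mem (norm_nonneg y) (hmem x hxn)
        convert this using 1
        ext
        · simp [hx, smul_smul, hy']
        · simp)
  have hG0 : ∀ t : ℝ, G (0, t) = t := fun t => hG1 ⟨_, ⟨t, rfl⟩⟩
  have hGx : ∀ x : X, ‖x‖ ≤ 1 → 0 ≤ G (x, 0) + (f x + R) := by
    intro x hx
    have := hG2 _ (hmem x hx)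
    have e : (x, f x + R) = (x, (0:ℝ)) + ((0:X), f x + R) := by simp
    rw [e, map_add, hG0] at this
    exact this
  refine ⟨-(G.comp (LinearMap.inl ℝ X ℝ)), fun x hx => ?_⟩
  have h1 := hGx x hx
  have h2 := hGx (-x) (by simpa using hx)
  have e : ((-x : X), (0:ℝ)) = -(x, (0:ℝ)) := by simp
  rw [e, map_neg, hodd] at h2
  simp only [LinearMap.neg_apply, LinearMap.comp_apply, LinearMap.inl_apply]
  rw [abs_le]
  constructor <;> linarith

lemma wt_iter {X : Type} [NormedAddCommGroup X] [NormedSpace ℝ X] {p T : ℝ} (hp : 1 < p)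
    (hT : 1 ≤ T) (h : HasTypeConst X p T) (f : X → ℝ)
    (hodd : ∀ x, f (-x) = - f x)
    (hmid : ∀ x y, ‖x‖ ≤ 1 → ‖y‖ ≤ 1 → |f x + f y - 2 * f ((1/2 : ℝ) • (x + y))| ≤ 1)
    (M : ℝ) (hM : ∀ x, ‖x‖ ≤ 1 → |f x| ≤ M)
    (m : ℕ) (hm : 8 * T * ((2:ℝ)^m) ^ (1 / p) ≤ 2 ^ m) :
    ∃ g : X →ₗ[ℝ] ℝ, ∀ x, ‖x‖ ≤ 1 → |f x - g x| ≤ m + 3 := by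
  have key : ∀ k : ℕ, ∃ g : X →ₗ[ℝ] ℝ, ∀ x, ‖x‖ ≤ 1 →
      |f x - g x| ≤ (1/2:ℝ)^k * M + (m + 2) := by
    intro k
    induction k with
    | zero =>
      refine ⟨0, fun x hx => ?_⟩
      have := hM x hx
      have hm0 : (0:ℝ) ≤ m := by positivity
      simp
      linarith
    | succ k ih =>
      obtain ⟨g, hg⟩ := ih
      obtain ⟨g', hg'⟩ := wt_step hp hT h (fun x => f x - g x)
        (fun x => by simp only [hodd, map_neg]; ring)
        (fun x y hx hy => by
          have := hmid x y hx hy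
          simp only [map_smul, map_add, smul_eq_mul]
          convert this using 2
          ring) _ hg m hm
      refine ⟨g + g', fun x hx => ?_⟩
      have := hg' x hx
      rw [LinearMap.add_apply, ← sub_sub]
      refine this.trans (le_of_eq ?_)
      ring
  have hM0 : 0 ≤ M := (abs_nonneg _).trans (hM 0 (by simp))
  obtain ⟨k, hk⟩ := exists_pow_lt_of_lt_one (by positivity : (0:ℝ) < 1 / (M + 1))
    (by norm_num : (1/2:ℝ) < 1)
  obtain ⟨g, hg⟩ := key k
  refine ⟨g, fun x hx => (hg x hx).trans ?_⟩
  rw [lt_div_iff₀ (by positivity)] at hk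
  have : (0:ℝ) < (1/2)^k := by positivity
  linarith

end helpers

/-- Theorem 3.11: `w₂(X) ≤ C (p−1)⁻¹ (1 + |log(p−1)| + log T_p(X))`. -/
theorem whitney_two_type_bound :
    ∃ C : ℝ, ∀ p : ℝ, 1 < p → p ≤ 2 →
      ∀ (X : Type) [NormedAddCommGroup X] [NormedSpace ℝ X], FiniteDimensional ℝ X →
        ∀ T : ℝ, 1 ≤ T → HasTypeConst X p T →
          ∀ f : X → ℝ, ContinuousOn f (Metric.closedBall 0 1) →
            diffBound 2 (Metric.closedBall 0 1) f 1 →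
            ∃ (c : ℝ) (g : X →ₗ[ℝ] ℝ), ∀ x ∈ Metric.closedBall (0 : X) 1,
              |f x - (c + g x)| ≤ C * (p - 1)⁻¹ * (1 + |Real.log (p - 1)| + Real.log T) := by
  refine ⟨11, ?_⟩
  intro p hp hp2 X _ _ _ T hT h f hf hd
  have hd' : ∀ x y : X, ‖x‖ ≤ 1 → ‖y‖ ≤ 1 →
      |f x + f y - 2 * f ((1/2 : ℝ) • (x + y))| ≤ 1 := by
    intro x y hx hy
    have e1 : x + (1:ℝ) • ((1/2:ℝ) • (y - x)) = (1/2 : ℝ) • (x + y) := by module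
    have e2 : x + (2:ℝ) • ((1/2:ℝ) • (y - x)) = y := by module
    have e0 : x + (0:ℝ) • ((1/2:ℝ) • (y - x)) = x := by module
    have := hd x ((1/2:ℝ) • (y - x)) (by
      intro j hj
      rw [mem_closedBall_zero_iff]
      interval_cases j
      · simpa using hx
      · rw [Nat.cast_one, e1, norm_smul, Real.norm_eq_abs, abs_of_pos (by norm_num)]
        have := norm_add_le x y
        linarith
      · rw [Nat.cast_ofNat, e2]; exact hy)
    simp only [Finset.sum_range_succ, Finset.sum_range_zero, Nat.cast_zero, Nat.cast_one,
      Nat.cast_ofNat, e0, e1, e2] at this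
    norm_num at this
    convert this using 2
    norm_num
    ring
  obtain ⟨M, hM⟩ := (isCompact_closedBall (0:X) 1).exists_bound_of_continuousOn hf
  have hp0 : 0 < p := by linarith
  have hp1 : 0 < p - 1 := by linarith
  set L : ℝ := p / (p - 1) * Real.logb 2 (8 * T) with hL
  obtain ⟨m, hm1, hm2⟩ : ∃ m : ℕ, L ≤ m ∧ (m:ℝ) ≤ L + 1 := by
    have hL0 : 0 ≤ L := mul_nonneg (by positivity) (Real.logb_nonneg (by norm_num) (by linarith))
    exact ⟨⌈L⌉₊, Nat.le_ceil _, (Nat.ceil_lt_add_one hL0).le⟩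
  have hm : 8 * T * ((2:ℝ)^m) ^ (1 / p) ≤ 2 ^ m := by
    have h8 : 8 * T = (2:ℝ) ^ (Real.logb 2 (8 * T)) :=
      (Real.rpow_logb (by norm_num) (by norm_num) (by linarith)).symm
    rw [h8, ← Real.rpow_natCast, ← Real.rpow_mul (by norm_num), ← Real.rpow_add (by norm_num)]
    refine Real.rpow_le_rpow_of_exponent_le (by norm_num) ?_
    have : Real.logb 2 (8 * T) = L * ((p - 1) / p) := by rw [hL]; field_simp
    rw [this]
    calc L * ((p-1)/p) + m * (1/p) ≤ m * ((p-1)/p) + m * (1/p) := by gcongr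
      _ = m := by field_simp; ring
  obtain ⟨g, hg⟩ := wt_iter hp hT h (fun x => (f x - f (-x)) / 2)
    (fun x => by simp only [neg_neg]; ring)
    (fun x y hx hy => by
      have h1 := hd' x y hx hy
      have h2 := hd' (-x) (-y) (by simpa using hx) (by simpa using hy)
      have e : (1/2:ℝ) • (-x + -y) = -((1/2:ℝ) • (x + y)) := by module
      rw [e] at h2
      rw [abs_le] at *
      constructor <;> linarith) M
    (fun x hx => by
      have h1 := hM x (by simpa using hx)
      have h2 := hM (-x) (by simpa using hx)
      rw [Real.norm_eq_abs] at h1 h2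
      rw [abs_le] at *
      constructor <;> linarith) m hm
  refine ⟨f 0, g, fun x hx => ?_⟩
  rw [mem_closedBall_zero_iff] at hx
  have h1 := hg x hx
  have h2 := hd' x (-x) hx (by simpa using hx)
  rw [add_neg_cancel, smul_zero] at h2
  have h3 : |f x - (f 0 + g x)| ≤ m + 3.5 := by
    rw [abs_le] at *
    constructor <;> linarith
  refine h3.trans ?_
  have hlT : 0 ≤ Real.log T := Real.log_nonneg hT
  have hlog : Real.logb 2 (8 * T) ≤ 3 + 2 * Real.log T := by
    rw [Real.logb_mul (by norm_num) (by linarith)]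
    have e8 : Real.logb 2 8 = 3 := by
      rw [show (8:ℝ) = 2 ^ (3:ℝ) by norm_num]
      exact Real.logb_rpow (by norm_num) (by norm_num)
    have : Real.logb 2 T ≤ 2 * Real.log T := by
      rw [Real.logb, div_le_iff₀ (Real.log_pos (by norm_num))]
      nlinarith [Real.log_two_gt_d9]
    linarith
  have hq : 1 ≤ (p - 1)⁻¹ := (one_le_inv₀ hp1).mpr (by linarith)
  have hL2 : L ≤ 2 * (p - 1)⁻¹ * (3 + 2 * Real.log T) := by
    rw [hL, div_eq_mul_inv]
    have := Real.logb_nonneg (by norm_num : (1:ℝ) < 2) (by linarith : 1 ≤ 8 * T)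
    gcongr
  have hab : 0 ≤ |Real.log (p - 1)| := abs_nonneg _
  have hpab : 0 ≤ (p - 1)⁻¹ * |Real.log (p - 1)| := by positivity
  have hplT : 0 ≤ (p - 1)⁻¹ * Real.log T := by positivity
  linarith
end

section
/- There is an absolute constant c > 0 such that for every n ≥ 1 there exist a norm ‖·‖ on ℝⁿ with closed unit ball B and a continuous function f : ℝⁿ → ℝ with ω₃(f;B) ≤ 1 such that every polynomial φ on ℝⁿ of total degree at most 2 satisfies sup_{x∈B} |f(x) − φ(x)| ≥ c √n. (Lower bound of Theorem 4.1: w₃^{(s)}(n) ≥ c√n.) -/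
open Finset

/-- A norm on `ι → ℝ`, given as a function with the norm axioms. -/
def IsNormFn {ι : Type*} [Fintype ι] (N : (ι → ℝ) → ℝ) : Prop :=
  (∀ x, 0 ≤ N x) ∧ (∀ x, N x = 0 ↔ x = 0) ∧ (∀ (a : ℝ) (x), N (a • x) = |a| * N x) ∧
  (∀ x y, N (x + y) ≤ N x + N y)

def IsQuad {E : Type*} [AddCommGroup E] [Module ℝ E] (φ : E → ℝ) : Prop :=
  ∃ (c : ℝ) (l : E →ₗ[ℝ] ℝ) (b : E →ₗ[ℝ] E →ₗ[ℝ] ℝ), ∀ x, φ x = c + l x + b x x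

lemma isQuad_eval {n : ℕ} (P : MvPolynomial (Fin n) ℝ) (hP : P.totalDegree ≤ 2) :
    IsQuad (fun x : Fin n → ℝ => MvPolynomial.eval x P) := by
  have hsum : ∀ (s : Finset (Fin n →₀ ℕ)), s ⊆ P.support →
      IsQuad (fun x : Fin n → ℝ => ∑ d ∈ s, P.coeff d * ∏ i ∈ d.support, x i ^ d i) := by
    intro s
    induction s using Finset.induction_on with
    | empty => intro _; exact ⟨0, 0, 0, by simp⟩
    | insert d s hd ih =>
      intro hs
      obtain ⟨c, l, b, h⟩ := ih (fun x hx => hs (Finset.mem_insert_of_mem hx))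
      have hdeg : (Finsupp.toMultiset d).card ≤ 2 := by
        have := MvPolynomial.le_totalDegree (hs (Finset.mem_insert_self d s))
        rw [Finsupp.card_toMultiset]
        exact this.trans hP
      have hprod : ∀ x : Fin n → ℝ, ∏ i ∈ d.support, x i ^ d i
          = ((Finsupp.toMultiset d).map x).prod := by
        intro x
        rw [Finsupp.toMultiset_map, Finsupp.prod_toMultiset,
          Finsupp.prod_mapDomain_index (by simp) (by intros; exact pow_add _ _ _)]
        rfl
      have key : IsQuad (fun x : Fin n → ℝ => ((Finsupp.toMultiset d).map x).prod) := by
        generalize Finsupp.toMultiset d = m at hdeg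
        have h3 : m.card = 0 ∨ m.card = 1 ∨ m.card = 2 := by omega
        rcases h3 with h3 | h3 | h3
        · rw [Multiset.card_eq_zero] at h3
          subst h3
          exact ⟨1, 0, 0, by simp⟩
        · obtain ⟨i, rfl⟩ := Multiset.card_eq_one.1 h3
          exact ⟨0, LinearMap.proj i, 0, by simp⟩
        · obtain ⟨i, j, rfl⟩ := Multiset.card_eq_two.1 h3
          exact ⟨0, 0, (LinearMap.mul ℝ ℝ).compl₁₂ (LinearMap.proj i) (LinearMap.proj j), by simp⟩
      obtain ⟨c', l', b', h'⟩ := key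
      refine ⟨c + P.coeff d * c', l + P.coeff d • l', b + P.coeff d • b', fun x => ?_⟩
      have h1 := h x
      have h2 := h' x
      simp only at h1 h2
      simp only [Finset.sum_insert hd, h1, hprod, h2, LinearMap.add_apply, LinearMap.smul_apply,
        smul_eq_mul]
      ring
  have := hsum P.support subset_rfl
  simpa only [MvPolynomial.eval_eq] using this

lemma transfer {E : Type*} [NormedAddCommGroup E] [NormedSpace ℝ E] [FiniteDimensional ℝ E]
    (n : ℕ) (hn : Module.finrank ℝ E ≤ n) (f : E → ℝ) (hf : Continuous f) (K D : ℝ) (hK : 0 < K)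
    (hd : diffBound 3 {x : E | ‖x‖ ≤ 1} f K)
    (hD : ∀ φ : E → ℝ, IsQuad φ → ∃ x, ‖x‖ ≤ 1 ∧ D ≤ |f x - φ x|) :
    ∃ (N : (Fin n → ℝ) → ℝ) (f : (Fin n → ℝ) → ℝ), IsNormFn N ∧ Continuous f ∧
        diffBound 3 {x | N x ≤ 1} f 1 ∧
        ∀ P : MvPolynomial (Fin n) ℝ, P.totalDegree ≤ 2 →
          ∃ x, N x ≤ 1 ∧ D / K ≤ |f x - MvPolynomial.eval x P| := by
  obtain ⟨p, rfl⟩ := Nat.exists_eq_add_of_le hn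
  have hr : Module.finrank ℝ (Fin (Module.finrank ℝ E + p) → ℝ)
      = Module.finrank ℝ (E × (Fin p → ℝ)) := by simp
  let e : (Fin (Module.finrank ℝ E + p) → ℝ) ≃ₗ[ℝ] (E × (Fin p → ℝ)) :=
    LinearEquiv.ofFinrankEq _ _ hr
  have he : Continuous e := e.toLinearMap.continuous_of_finiteDimensional
  refine ⟨fun v => ‖e v‖, fun v => f (e v).1 / K, ⟨fun x => norm_nonneg _, fun x => by simp,
    fun a x => by simp [norm_smul], fun x y => by simpa using norm_add_le (e x) (e y)⟩,
    by fun_prop, ?_, ?_⟩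
  · intro x h hx
    have := hd (e x).1 (e h).1 (fun j hj => by
      have := hx j hj
      simp only [Set.mem_ofPred_eq, map_add, map_smul] at this ⊢
      exact (norm_fst_le _).trans this)
    simp only [map_add, map_smul, Prod.fst_add, Prod.smul_fst]
    simp only [mul_div_assoc', ← Finset.sum_div]
    rw [abs_div, abs_of_pos hK, div_le_one hK]
    exact this
  · intro P hP
    obtain ⟨c, l, b, h⟩ := isQuad_eval P hP
    let g : E →ₗ[ℝ] (Fin (Module.finrank ℝ E + p) → ℝ) :=
      e.symm.toLinearMap ∘ₗ LinearMap.inl ℝ E (Fin p → ℝ)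
    obtain ⟨x, hx, hx'⟩ := hD (fun x => K * MvPolynomial.eval (g x) P)
      ⟨K * c, K • (l ∘ₗ g), K • b.compl₁₂ g g, fun x => by
        have := h (g x)
        simp only at this
        simp only [this]; simp; ring⟩
    refine ⟨g x, by simpa [g] using hx, ?_⟩
    have h2 : (e (g x)).1 = x := by simp [g]
    simp only [h2]
    rw [div_le_iff₀ hK]
    refine hx'.trans (le_of_eq ?_)
    conv_rhs => rw [← abs_of_pos hK, ← abs_mul, abs_of_pos hK]
    congr 1
    field_simp

lemma small_case (n : ℕ) (hn : 1 ≤ n) : 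
    ∃ (N : (Fin n → ℝ) → ℝ) (f : (Fin n → ℝ) → ℝ), IsNormFn N ∧ Continuous f ∧
        diffBound 3 {x | N x ≤ 1} f 1 ∧
        ∀ P : MvPolynomial (Fin n) ℝ, P.totalDegree ≤ 2 →
          ∃ x, N x ≤ 1 ∧ (1 / 8 : ℝ) / 8 ≤ |f x - MvPolynomial.eval x P| := by
  refine transfer (E := ℝ) n (by simpa using hn) (fun x => |x|) continuous_abs 8 (1/8) (by norm_num)
    ?_ ?_
  · intro x h hx
    have h0 := hx 0 (by norm_num)
    have h1 := hx 1 (by norm_num)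
    have h2 := hx 2 (by norm_num)
    have h3 := hx 3 (by norm_num)
    simp only [Set.mem_ofPred_eq, Real.norm_eq_abs] at h0 h1 h2 h3
    simp only [Finset.sum_range_succ, Finset.sum_range_zero]
    norm_num [Nat.choose] at *
    have := abs_nonneg x
    have := abs_nonneg (x + h)
    have := abs_nonneg (x + 2 * h)
    have := abs_nonneg (x + 3 * h)
    rw [abs_le]
    constructor <;> linarith
  · rintro φ ⟨c, l, b, h⟩
    by_contra! hc
    have hl : ∀ x : ℝ, φ x = c + x * l 1 + x * x * b 1 1 := by
      intro x
      rw [h x]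
      have e1 : l x = x * l 1 := by
        have := l.map_smul x 1
        simpa using this
      have e2 : b x x = x * x * b 1 1 := by
        have h1 := b.map_smul x 1
        simp only [smul_eq_mul, mul_one] at h1
        have h2 := (b 1).map_smul x 1
        simp only [smul_eq_mul, mul_one] at h2
        rw [h1]; simp [h2]; ring
      rw [e1, e2]
    have a1 := abs_lt.1 (hc (-1) (by simp))
    have a2 := abs_lt.1 (hc (-1/2) (by norm_num [abs_le]))
    have a3 := abs_lt.1 (hc 0 (by simp))
    have a4 := abs_lt.1 (hc (1/2) (by norm_num [abs_le]))
    have a5 := abs_lt.1 (hc 1 (by simp))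
    rw [hl] at a1 a2 a3 a4 a5
    norm_num [abs_of_pos, abs_of_neg] at a1 a2 a3 a4 a5
    linarith [a1.1, a1.2, a2.1, a2.2, a3.1, a3.2, a4.1, a4.2, a5.1, a5.2]

lemma hadamard (k : ℕ) : ∃ H : (Fin k → Bool) → (Fin k → Bool) → ℝ,
    (∀ i j, |H i j| = 1) ∧ (∀ i j, H i j = H j i) ∧
    (∀ i j, ∑ t, H i t * H t j = if i = j then (2 : ℝ) ^ k else 0) := by
  let h : Bool → Bool → ℝ := fun a b => if a && b then -1 else 1
  have h1 : ∀ a b, |h a b| = 1 := by intro a b; cases a <;> cases b <;> simp [h]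
  have h2 : ∀ a b, h a b = h b a := by intro a b; cases a <;> cases b <;> simp [h]
  have h3 : ∀ a b, ∑ t, h a t * h t b = if a = b then 2 else 0 := by
    intro a b; cases a <;> cases b <;> norm_num [h]
  refine ⟨fun s t => ∏ i, h (s i) (t i), fun i j => ?_, fun i j => ?_, fun i j => ?_⟩
  · simp [Finset.abs_prod, h1]
  · simp only [h2]
  · simp only [← Finset.prod_mul_distrib]
    have := Fintype.prod_sum (fun (q : Fin k) (t : Bool) => h (i q) t * h t (j q))
    rw [← this]
    simp only [h3]
    split_ifs with hij
    · subst hij; simp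
    · obtain ⟨q, hq⟩ := Function.ne_iff.1 hij
      exact Finset.prod_eq_zero (Finset.mem_univ q) (by simp [hq])

/-- The abstract conclusion extracted from a quadratic approximant. -/
def SplitBound {Z : Type*} [NormedAddCommGroup Z] [NormedSpace ℝ Z] (Y : Submodule ℝ Z)
    (δ : ℝ) : Prop :=
  ∃ β : Z →ₗ[ℝ] (Y →L[ℝ] ℝ) →ₗ[ℝ] ℝ, (∀ (a : Y) y, β a y = - y a) ∧
    ∀ (z : Z) (y : Y →L[ℝ] ℝ), ‖z‖ ≤ 1 → ‖y‖ ≤ 1 → ∃ g : Y, ‖z + (g : Z)‖ ≤ 2 ∧ |β z y - y g| ≤ δ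

lemma exists_subspace (k : ℕ) : ∃ Y : Submodule ℝ (PiLp 1 (fun _ : (Fin k → Bool) ⊕ (Fin k → Bool) => ℝ)),
    ∀ δ, SplitBound Y δ → Real.sqrt (2 ^ k) / 2 - 2 ≤ δ := by
  obtain ⟨H, H1, H2, H3⟩ := hadamard k
  set r : ℝ := Real.sqrt (2 ^ k) with hr
  have r0 : 0 < r := by positivity
  have rr : r * r = 2 ^ k := Real.mul_self_sqrt (by positivity)
  let Z := PiLp 1 (fun _ : (Fin k → Bool) ⊕ (Fin k → Bool) => ℝ)
  let pr : (Fin k → Bool) ⊕ (Fin k → Bool) → Z →L[ℝ] ℝ := fun i => PiLp.proj 1 _ i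
  have hpr : ∀ i z, pr i z = z i := fun i z => rfl
  -- the two families of functionals
  let Fy : (Fin k → Bool) → Z →L[ℝ] ℝ := fun i => ∑ j, H i j • pr (Sum.inr j)
  let Fw : (Fin k → Bool) → Z →L[ℝ] ℝ := fun i => ∑ j, H i j • pr (Sum.inl j)
  have hFy : ∀ i z, Fy i z = ∑ j, H i j * z (Sum.inr j) := by intro i z; simp [Fy, hpr]
  have hFw : ∀ i z, Fw i z = ∑ j, H i j * z (Sum.inl j) := by intro i z; simp [Fw, hpr]
  have hnorm : ∀ z : Z, ‖z‖ = ∑ i, |z (Sum.inl i)| + ∑ i, |z (Sum.inr i)| := by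
    intro z
    rw [PiLp.norm_eq_of_L1, Fintype.sum_sum_type]; rfl
  have bFy : ∀ i z, |Fy i z| ≤ ‖z‖ := by
    intro i z
    rw [hFy, hnorm]
    refine (Finset.abs_sum_le_sum_abs _ _).trans ?_
    simp only [abs_mul, H1, one_mul]
    have : 0 ≤ ∑ i, |z (Sum.inl i)| := Finset.sum_nonneg (fun _ _ => abs_nonneg _)
    linarith
  have bFw : ∀ i z, |Fw i z| ≤ ‖z‖ := by
    intro i z
    rw [hFw, hnorm]
    refine (Finset.abs_sum_le_sum_abs _ _).trans ?_
    simp only [abs_mul, H1, one_mul]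
    have : 0 ≤ ∑ i, |z (Sum.inr i)| := Finset.sum_nonneg (fun _ _ => abs_nonneg _)
    linarith
  let Y : Submodule ℝ Z := ⨅ i, LinearMap.ker ((Fw i - r • pr (Sum.inr i) : Z →L[ℝ] ℝ) : Z →ₗ[ℝ] ℝ)
  have memY : ∀ z, z ∈ Y ↔ ∀ i, Fw i z = r * z (Sum.inr i) := by
    intro z
    simp [Y, hpr, sub_eq_zero]
  have memY2 : ∀ z ∈ Y, ∀ i, Fy i z = r * z (Sum.inl i) := by
    intro z hz i
    rw [memY] at hz
    have : r * Fy i z = r * (r * z (Sum.inl i)) := by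
      rw [hFy, Finset.mul_sum]
      calc ∑ j, r * (H i j * z (Sum.inr j)) = ∑ j, ∑ t, H i j * H j t * z (Sum.inl t) := by
            refine Finset.sum_congr rfl fun j _ => ?_
            have := hz j
            rw [hFw] at this
            rw [mul_left_comm, ← this, Finset.mul_sum]
            simp only [mul_assoc]
        _ = ∑ t, (∑ j, H i j * H j t) * z (Sum.inl t) := by
            rw [Finset.sum_comm]; simp only [Finset.sum_mul]
        _ = _ := by simp [H3, ← rr, mul_assoc]
    exact mul_left_cancel₀ r0.ne' this
  let e : (Fin k → Bool) ⊕ (Fin k → Bool) → Z := fun i => PiLp.single 1 i (1 : ℝ)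
  have e_app : ∀ i j, (e i) j = if j = i then 1 else 0 := by
    intro i j; simp [e, Pi.single_apply]
  have e_norm : ∀ i, ‖e i‖ ≤ 1 := by intro i; rw [hnorm]; cases i <;> simp [e_app, apply_ite abs]
  let J : (Fin k → Bool) → Z := fun j => e (Sum.inl j) + ∑ i, (H i j / r) • e (Sum.inr i)
  have Jl : ∀ j i, (J j) (Sum.inl i) = if i = j then 1 else 0 := by
    intro j i; rw [← hpr]; simp only [J, map_add, map_sum, map_smul]; simp only [hpr, e_app]; simp
  have Jr : ∀ j i, (J j) (Sum.inr i) = H i j / r := by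
    intro j i; rw [← hpr]; simp only [J, map_add, map_sum, map_smul]; simp only [hpr, e_app]; simp
  have JY : ∀ j, J j ∈ Y := by
    intro j
    rw [memY]
    intro i
    rw [hFw]
    simp only [Jl, Jr]
    field_simp
    simp
  refine ⟨Y, ?_⟩
  rintro δ ⟨β, hβ, hb⟩
  let y : (Fin k → Bool) → (Y →L[ℝ] ℝ) := fun i => (Fy i).comp Y.subtypeL
  let w : (Fin k → Bool) → (Y →L[ℝ] ℝ) := fun i => (Fw i).comp Y.subtypeL
  have yn : ∀ i, ‖y i‖ ≤ 1 := fun i =>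
    ContinuousLinearMap.opNorm_le_bound _ zero_le_one (fun a => by
      simpa [y] using bFy i a)
  have wn : ∀ i, ‖w i‖ ≤ 1 := fun i =>
    ContinuousLinearMap.opNorm_le_bound _ zero_le_one (fun a => by
      simpa [w] using bFw i a)
  have hw : ∀ i, w i = ∑ j, (H i j / r) • y j := by
    intro i
    ext a
    simp only [w, y, _root_.sum_apply, _root_.smul_apply,
      ContinuousLinearMap.comp_apply, Submodule.subtypeL_apply, smul_eq_mul]
    rw [hFw]
    refine Finset.sum_congr rfl fun j _ => ?_
    rw [memY2 a a.2 j]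
    field_simp
  have b1 : ∀ i, |β (e (Sum.inl i)) (y i)| ≤ δ + 2 := by
    intro i
    obtain ⟨g, hg, hg'⟩ := hb (e (Sum.inl i)) (y i) (e_norm _) (yn i)
    have h1 : y i g = Fy i (e (Sum.inl i) + g) := by
      rw [map_add, hFy i (e _)]; simp [e_app, y]
    have h2 := (bFy i (e (Sum.inl i) + g)).trans hg
    rw [← h1] at h2
    rw [abs_le] at *
    constructor <;> linarith [h2.1, h2.2, hg'.1, hg'.2]
  have b2 : ∀ i, |β (e (Sum.inr i)) (w i)| ≤ δ + 2 := by
    intro i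
    obtain ⟨g, hg, hg'⟩ := hb (e (Sum.inr i)) (w i) (e_norm _) (wn i)
    have h1 : w i g = Fw i (e (Sum.inr i) + g) := by
      rw [map_add, hFw i (e _)]; simp [e_app, w]
    have h2 := (bFw i (e (Sum.inr i) + g)).trans hg
    rw [← h1] at h2
    rw [abs_le] at *
    constructor <;> linarith [h2.1, h2.2, hg'.1, hg'.2]
  have tr : ∑ i, β (e (Sum.inl i)) (y i) + ∑ i, β (e (Sum.inr i)) (w i) = ∑ j, β (J j) (y j) := by
    simp only [hw, J, map_add, map_sum, map_smul, LinearMap.add_apply, LinearMap.sum_apply,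
      LinearMap.smul_apply, Finset.sum_add_distrib]
    congr 1
    rw [Finset.sum_comm]
  have tr2 : ∀ j, β (J j) (y j) = - r := by
    intro j
    have := hβ ⟨J j, JY j⟩ (y j)
    simp only at this
    rw [this]
    simp only [y, ContinuousLinearMap.comp_apply, Submodule.subtypeL_apply]
    rw [memY2 _ (JY j), Jl]; simp
  simp only [tr2] at tr
  have c1 : ∑ i : Fin k → Bool, -(δ + 2) ≤ ∑ i, β (e (Sum.inl i)) (y i) :=
    Finset.sum_le_sum fun i _ => (abs_le.1 (b1 i)).1
  have c2 : ∑ i : Fin k → Bool, -(δ + 2) ≤ ∑ i, β (e (Sum.inr i)) (w i) :=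
    Finset.sum_le_sum fun i _ => (abs_le.1 (b2 i)).1
  simp only [Finset.sum_const, Finset.card_univ, Fintype.card_pi, Fintype.card_bool,
    Finset.prod_const, Fintype.card_fin, nsmul_eq_mul] at c1 c2 tr
  push_cast at c1 c2 tr
  have p0 : (0 : ℝ) < 2 ^ k := by positivity
  have : (2 : ℝ) ^ k * r ≤ 2 ^ k * (2 * (δ + 2)) := by nlinarith
  have := le_of_mul_le_mul_left this p0
  linarith

lemma diff_formula {X W : Type*} [AddCommGroup X] [Module ℝ X] [NormedAddCommGroup W]
    [NormedSpace ℝ W] (a : X → W) (x h : X) (y k : W →L[ℝ] ℝ)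
    (hk : ‖k‖ ≤ 2) (hy : ‖y‖ ≤ 1)
    (h3 : ‖a (x + (3 : ℝ) • h) - (3 : ℝ) • a (x + (2 : ℝ) • h) + (3 : ℝ) • a (x + h) - a x‖ ≤ 16)
    (h2 : ‖a (x + (3 : ℝ) • h) - (2 : ℝ) • a (x + (2 : ℝ) • h) + a (x + h)‖ ≤ 8) :
    |(y + (3 : ℝ) • k) (a (x + (3 : ℝ) • h)) - 3 * (y + (2 : ℝ) • k) (a (x + (2 : ℝ) • h))
      + 3 * (y + k) (a (x + h)) - y (a x)| ≤ 64 := by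
  have e1 : (y + (3 : ℝ) • k) (a (x + (3 : ℝ) • h)) - 3 * (y + (2 : ℝ) • k) (a (x + (2 : ℝ) • h))
      + 3 * (y + k) (a (x + h)) - y (a x) =
      y (a (x + (3 : ℝ) • h) - (3 : ℝ) • a (x + (2 : ℝ) • h) + (3 : ℝ) • a (x + h) - a x)
      + 3 * k (a (x + (3 : ℝ) • h) - (2 : ℝ) • a (x + (2 : ℝ) • h) + a (x + h)) := by
    simp only [map_add, map_sub, map_smul, _root_.add_apply, _root_.smul_apply, smul_eq_mul]
    ring
  rw [e1]
  have i1 := (y.le_opNorm _).trans (mul_le_mul hy h3 (norm_nonneg _) zero_le_one)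
  have i2 := (k.le_opNorm _).trans (mul_le_mul hk h2 (norm_nonneg _) zero_le_two)
  rw [Real.norm_eq_abs, abs_le] at i1 i2
  rw [abs_le]
  constructor <;> linarith [i1.1, i1.2, i2.1, i2.2]

lemma construct {Z : Type*} [NormedAddCommGroup Z] [NormedSpace ℝ Z] [FiniteDimensional ℝ Z]
    (Y : Submodule ℝ Z) (D : ℝ) (hY : ∀ δ, SplitBound Y δ → D ≤ δ) (n : ℕ)
    (hn : Module.finrank ℝ Z ≤ n) :
    ∃ (N : (Fin n → ℝ) → ℝ) (f : (Fin n → ℝ) → ℝ), IsNormFn N ∧ Continuous f ∧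
        diffBound 3 {x | N x ≤ 1} f 1 ∧
        ∀ P : MvPolynomial (Fin n) ℝ, P.totalDegree ≤ 2 →
          ∃ x, N x ≤ 1 ∧ (D - 1) / 64 ≤ |f x - MvPolynomial.eval x P| := by
  have hcl : IsClosed (Y : Set Z) := Y.closed_of_finiteDimensional
  obtain ⟨L, hL⟩ := Y.mkQ.exists_rightInverse_of_surjective (by simp)
  have hL' : ∀ x, Y.mkQ (L x) = x := fun x => LinearMap.congr_fun hL x
  have Lc : Continuous L := L.continuous_of_finiteDimensional
  obtain ⟨a, ha⟩ : ∃ a : C(Z ⧸ Y, Y), ∀ x, a x ∈ {a : Y | ‖L x + (a : Z)‖ < ‖x‖ + 1} := by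
    refine exists_continuous_forall_mem_convex_of_local_const
      (t := fun x => {a : Y | ‖L x + (a : Z)‖ < ‖x‖ + 1}) (fun x => ?_) (fun x => ?_)
    · have h1 : Convex ℝ (Metric.ball (-(L x)) (‖x‖ + 1)) := convex_ball _ _
      have h2 := h1.linear_preimage Y.subtype
      have h3 : {a : Y | ‖L x + (a : Z)‖ < ‖x‖ + 1}
          = Y.subtype ⁻¹' Metric.ball (-(L x)) (‖x‖ + 1) := by
        ext a
        simp [dist_eq_norm, add_comm]
      rw [h3]
      exact h2
    · obtain ⟨z, hz, hz'⟩ := Submodule.Quotient.norm_mk_lt x (zero_lt_one)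
      have hm : z - L x ∈ Y := by
        rw [← Submodule.Quotient.mk_eq_zero, Submodule.Quotient.mk_sub, hz]
        have := hL' x
        rw [Submodule.mkQ_apply] at this
        rw [this, sub_self]
      refine ⟨⟨z - L x, hm⟩, ?_⟩
      have c1 : Continuous fun x' => ‖L x' + (z - L x)‖ := by fun_prop
      have c2 : Continuous fun x' : Z ⧸ Y => ‖x'‖ + 1 := by fun_prop
      exact c1.continuousAt.eventually_lt c2.continuousAt (by simpa using hz')
  have hs : ∀ x, ‖x‖ ≤ 1 → ‖L x + (a x : Z)‖ ≤ 2 := by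
    intro x hx
    have : ‖L x + (a x : Z)‖ < ‖x‖ + 1 := ha x
    linarith
  refine transfer (E := (Z ⧸ Y) × (Y →L[ℝ] ℝ)) n ?_ (fun p => p.2 (a p.1)) (by fun_prop) 64 (D - 1)
    (by norm_num) ?_ ?_
  · have h1 : Module.finrank ℝ (Y →L[ℝ] ℝ) = Module.finrank ℝ Y := by
      rw [← (LinearMap.toContinuousLinearMap (𝕜 := ℝ) (E := Y) (F' := ℝ)).finrank_eq]
      exact Subspace.dual_finrank_eq
    rw [Module.finrank_prod, h1, Submodule.finrank_quotient_add_finrank]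
    exact hn
  · rintro ⟨x, y⟩ ⟨h, k⟩ hx
    have q0 := hx 0 (by norm_num)
    have q1 := hx 1 (by norm_num)
    have q2 := hx 2 (by norm_num)
    have q3 := hx 3 (by norm_num)
    simp only [Set.mem_ofPred_eq, Prod.smul_mk, Prod.mk_add_mk, Prod.norm_mk, sup_le_iff] at q0 q1 q2 q3
    norm_num at q0 q1 q2 q3
    have r0 := hs _ q0.1
    have r1 := hs _ q1.1
    have r2 := hs _ q2.1
    have r3 := hs _ q3.1
    have := diff_formula a x h y k (by
        have : k = (y + k) - y := by simp
        rw [this]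
        refine (norm_sub_le _ _).trans (by linarith [q0.2, q1.2])) q0.2 (by
        rw [Submodule.coe_norm]
        have : ((a (x + (3 : ℝ) • h) - (3 : ℝ) • a (x + (2 : ℝ) • h) + (3 : ℝ) • a (x + h) - a x : Y) : Z)
          = (L (x + (3 : ℝ) • h) + (a (x + (3 : ℝ) • h) : Z))
            - (3 : ℝ) • (L (x + (2 : ℝ) • h) + (a (x + (2 : ℝ) • h) : Z))
            + (3 : ℝ) • (L (x + h) + (a (x + h) : Z)) - (L x + (a x : Z)) := by
          simp only [map_add, map_smul, Submodule.coe_add, Submodule.coe_sub, Submodule.coe_smul]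
          module
        rw [this]
        refine (norm_sub_le _ _).trans ?_
        refine (add_le_add (norm_add_le _ _) le_rfl).trans ?_
        refine (add_le_add (add_le_add (norm_sub_le _ _) le_rfl) le_rfl).trans ?_
        simp only [norm_smul, Real.norm_ofNat]
        linarith) (by
        rw [Submodule.coe_norm]
        have : ((a (x + (3 : ℝ) • h) - (2 : ℝ) • a (x + (2 : ℝ) • h) + a (x + h) : Y) : Z)
          = (L (x + (3 : ℝ) • h) + (a (x + (3 : ℝ) • h) : Z))
            - (2 : ℝ) • (L (x + (2 : ℝ) • h) + (a (x + (2 : ℝ) • h) : Z))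
            + (L (x + h) + (a (x + h) : Z)) := by
          simp only [map_add, map_smul, Submodule.coe_add, Submodule.coe_sub, Submodule.coe_smul]
          module
        rw [this]
        refine (norm_add_le _ _).trans ?_
        refine (add_le_add (norm_sub_le _ _) le_rfl).trans ?_
        simp only [norm_smul, Real.norm_ofNat]
        linarith)
    refine le_of_eq_of_le ?_ this
    congr 1
    simp only [Finset.sum_range_succ, Finset.sum_range_zero, Prod.smul_mk, Prod.mk_add_mk]
    norm_num [Nat.choose]
    ring
  · rintro φ ⟨c, l, b, hφ⟩
    by_contra! hc
    suffices SplitBound Y (D - 1) by linarith [hY _ this]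
    let G : Z →ₗ[ℝ] Y := (LinearMap.id - L ∘ₗ Y.mkQ).codRestrict Y (fun z => by
      rw [← Submodule.Quotient.mk_eq_zero]
      have := hL' (Y.mkQ z)
      simp only [Submodule.mkQ_apply] at this
      simp [this])
    have hG : ∀ z, (G z : Z) = z - L (Y.mkQ z) := fun z => rfl
    let β : Z →ₗ[ℝ] (Y →L[ℝ] ℝ) →ₗ[ℝ] ℝ := LinearMap.mk₂ ℝ
      (fun z y => b (Y.mkQ z, 0) (0, y) + b (0, y) (Y.mkQ z, 0) - y (G z))
      (by
        intro z z' y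
        have : ((Y.mkQ (z + z'), 0) : (Z ⧸ Y) × (Y →L[ℝ] ℝ)) = (Y.mkQ z, 0) + (Y.mkQ z', 0) := by simp
        rw [this]; simp only [map_add, LinearMap.add_apply]; ring)
      (by
        intro t z y
        have : ((Y.mkQ (t • z), 0) : (Z ⧸ Y) × (Y →L[ℝ] ℝ)) = t • (Y.mkQ z, 0) := by simp
        rw [this]; simp only [map_smul, LinearMap.smul_apply, smul_eq_mul]; ring)
      (by
        intro z y y'
        have : ((0, y + y') : (Z ⧸ Y) × (Y →L[ℝ] ℝ)) = (0, y) + (0, y') := by simp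
        simp only [this, map_add, LinearMap.add_apply, _root_.add_apply]; ring)
      (by
        intro t z y
        have : ((0, t • y) : (Z ⧸ Y) × (Y →L[ℝ] ℝ)) = t • (0, y) := by simp
        simp only [this, map_smul, LinearMap.smul_apply, _root_.smul_apply, smul_eq_mul]; ring)
    have hβ : ∀ z y, β z y = b (Y.mkQ z, 0) (0, y) + b (0, y) (Y.mkQ z, 0) - y (G z) :=
      fun z y => rfl
    refine ⟨β, fun v y => ?_, fun z y hz hy => ?_⟩
    · have h0 : Y.mkQ (v : Z) = 0 := by simp
      have h1 : G v = v := by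
        apply Subtype.ext
        rw [hG, h0]; simp
      have h2 : ((0, 0) : (Z ⧸ Y) × (Y →L[ℝ] ℝ)) = 0 := rfl
      rw [hβ, h0, h1, h2]; simp
    · set x := Y.mkQ z with hxdef
      have hx : ‖x‖ ≤ 1 := (Submodule.Quotient.norm_mk_le Y z).trans hz
      have hx' : ‖-x‖ ≤ 1 := by rwa [norm_neg]
      have hy' : ‖-y‖ ≤ 1 := by rwa [ContinuousLinearMap.opNorm_neg]
      refine ⟨(1 / 2 : ℝ) • (a x - a (-x)) - G z, ?_, ?_⟩
      · have : z + (((1 / 2 : ℝ) • (a x - a (-x)) - G z : Y) : Z)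
            = (1 / 2 : ℝ) • ((L x + (a x : Z)) - (L (-x) + (a (-x) : Z))) := by
          simp only [Submodule.coe_sub, Submodule.coe_smul, hG, map_neg, ← hxdef]
          module
        rw [this, norm_smul]
        have := norm_sub_le (L x + (a x : Z)) (L (-x) + (a (-x) : Z))
        have := hs x hx
        have := hs _ hx'
        have h12 : ‖(1 / 2 : ℝ)‖ = 1 / 2 := by norm_num
        rw [h12]
        linarith
      · have s1 := abs_lt.1 (hc (x, y) (by rw [Prod.norm_mk]; exact sup_le hx hy))
        have s2 := abs_lt.1 (hc (x, -y) (by rw [Prod.norm_mk]; exact sup_le hx hy'))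
        have s3 := abs_lt.1 (hc (-x, y) (by rw [Prod.norm_mk]; exact sup_le hx' hy))
        have s4 := abs_lt.1 (hc (-x, -y) (by rw [Prod.norm_mk]; exact sup_le hx' hy'))
        have d1 : ((x, y) : (Z ⧸ Y) × (Y →L[ℝ] ℝ)) = (x, 0) + (0, y) := by simp
        have d2 : ((x, -y) : (Z ⧸ Y) × (Y →L[ℝ] ℝ)) = (x, 0) - (0, y) := by simp
        have d3 : ((-x, y) : (Z ⧸ Y) × (Y →L[ℝ] ℝ)) = -(x, 0) + (0, y) := by simp
        have d4 : ((-x, -y) : (Z ⧸ Y) × (Y →L[ℝ] ℝ)) = -(x, 0) - (0, y) := by simp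
        rw [hφ, d1] at s1
        rw [hφ, d2] at s2
        rw [hφ, d3] at s3
        rw [hφ, d4] at s4
        rw [← d1] at s1
        simp only [← d1, ← d2, ← d3, ← d4] at s1 s2 s3 s4
        rw [d1] at s1
        rw [d2] at s2
        rw [d3] at s3
        rw [d4] at s4
        simp only [map_add, map_sub, map_neg, LinearMap.add_apply, LinearMap.sub_apply,
          LinearMap.neg_apply, Prod.fst_add, Prod.snd_add, Prod.fst_sub, Prod.snd_sub,
          Prod.fst_neg, Prod.snd_neg, add_zero, zero_add, sub_zero, zero_sub, neg_zero,
          _root_.neg_apply] at s1 s2 s3 s4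
        rw [hβ, ← hxdef]
        simp only [map_sub, map_smul, smul_eq_mul]
        rw [abs_le]
        constructor <;> linarith [s1.1, s1.2, s2.1, s2.2, s3.1, s3.2, s4.1, s4.2]

/-- Lower bound of Theorem 4.1: `w₃^{(s)}(n) ≥ c √n`. -/
theorem whitney_three_symmetric_lower_bound :
    ∃ c : ℝ, 0 < c ∧ ∀ n : ℕ, 1 ≤ n →
      ∃ (N : (Fin n → ℝ) → ℝ) (f : (Fin n → ℝ) → ℝ), IsNormFn N ∧ Continuous f ∧
        diffBound 3 {x | N x ≤ 1} f 1 ∧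
        ∀ P : MvPolynomial (Fin n) ℝ, P.totalDegree ≤ 2 →
          ∃ x, N x ≤ 1 ∧ c * Real.sqrt n ≤ |f x - MvPolynomial.eval x P| := by
  refine ⟨1 / 2000, by norm_num, fun n hn => ?_⟩
  by_cases hs : Real.sqrt n < 24
  · obtain ⟨N, f, h1, h2, h3, h4⟩ := small_case n hn
    refine ⟨N, f, h1, h2, h3, fun P hP => ?_⟩
    obtain ⟨x, hx, hx'⟩ := h4 P hP
    exact ⟨x, hx, le_trans (by linarith) hx'⟩
  · push Not at hs
    have hn2 : 2 ≤ n := by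
      by_contra hlt
      have : n = 1 := by omega
      subst this
      norm_num at hs
    obtain ⟨k, hk1, hk2⟩ : ∃ k : ℕ, 2 * 2 ^ k ≤ n ∧ n < 4 * 2 ^ k := by
      have hl : 1 ≤ Nat.log 2 n := Nat.log_pos (by norm_num) hn2
      obtain ⟨k, hk⟩ := Nat.exists_eq_add_of_le hl
      have l1 := Nat.pow_log_le_self 2 (x := n) (by omega)
      have l2 := Nat.lt_pow_succ_log_self (b := 2) (by norm_num) n
      rw [hk] at l1 l2
      refine ⟨k, ?_, ?_⟩
      · calc 2 * 2 ^ k = 2 ^ (1 + k) := by ring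
          _ ≤ n := l1
      · calc n < 2 ^ (1 + k + 1) := l2
          _ = 4 * 2 ^ k := by ring
    obtain ⟨Y, hY⟩ := exists_subspace k
    obtain ⟨N, f, h1, h2, h3, h4⟩ := construct Y _ hY n (by
      rw [(WithLp.linearEquiv 1 ℝ ((Fin k → Bool) ⊕ (Fin k → Bool) → ℝ)).finrank_eq]
      simp
      omega)
    refine ⟨N, f, h1, h2, h3, fun P hP => ?_⟩
    obtain ⟨x, hx, hx'⟩ := h4 P hP
    refine ⟨x, hx, le_trans ?_ hx'⟩
    have hb : Real.sqrt n ≤ 2 * Real.sqrt (2 ^ k) := by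
      have : (n : ℝ) ≤ 2 ^ 2 * 2 ^ k := by
        have : (n : ℝ) ≤ ((4 * 2 ^ k : ℕ) : ℝ) := by exact_mod_cast hk2.le
        push_cast at this
        linarith
      refine (Real.sqrt_le_sqrt this).trans ?_
      rw [Real.sqrt_mul (by norm_num), Real.sqrt_sq (by norm_num)]
    linarith
end

section
/- There is an absolute constant C such that for every n ≥ 1, every n-dimensional real normed space X that has type 2 with constant T ≥ 1, and every continuous function f : B_X → ℝ with ω₃(f;B_X) ≤ 1, there exists a function φ(x) = c + x*(x) + q(x), where c ∈ ℝ, x* is a linear functional and q a quadratic form on X, with sup_{x∈B_X} |f(x) − φ(x)| ≤ C T² log(n+1). (Upper bound of Theorem 4.5: w₃(X) ≤ C T₂(X)² log(n+1).) -/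
open Finset

/-- `X` has (Rademacher) type 2 with constant `T`. -/
def HasType2Const (X : Type*) [NormedAddCommGroup X] [NormedSpace ℝ X] (T : ℝ) : Prop :=
  ∀ (k : ℕ) (x : Fin k → X),
    Real.sqrt ((∑ ε : Fin k → Bool, ‖∑ i, (if ε i then (1 : ℝ) else -1) • x i‖ ^ 2) / 2 ^ k) ≤
      T * Real.sqrt (∑ i, ‖x i‖ ^ 2)

section Gauss

open MeasureTheory ProbabilityTheory

/-- The linear map `g ↦ ∑ g i • x i`. -/
noncomputable def gmap {X : Type*} [NormedAddCommGroup X] [NormedSpace ℝ X] {N : ℕ}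
    (x : Fin N → X) : EuclideanSpace ℝ (Fin N) →L[ℝ] X :=
  ∑ i, (EuclideanSpace.proj i : EuclideanSpace ℝ (Fin N) →L[ℝ] ℝ).smulRight (x i)

lemma gmap_apply {X : Type*} [NormedAddCommGroup X] [NormedSpace ℝ X] {N : ℕ}
    (x : Fin N → X) (g : EuclideanSpace ℝ (Fin N)) : gmap x g = ∑ i, g i • x i := by
  simp [gmap]

variable {X : Type*} [NormedAddCommGroup X] [NormedSpace ℝ X] [FiniteDimensional ℝ X]
  [MeasurableSpace X] [BorelSpace X] {N : ℕ}

lemma gmap_law (x y : Fin N → X)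
    (h : ∀ l : X →L[ℝ] ℝ, ∑ i, l (x i) ^ 2 = ∑ i, l (y i) ^ 2) :
    (stdGaussian (EuclideanSpace ℝ (Fin N))).map (gmap x) =
      (stdGaussian (EuclideanSpace ℝ (Fin N))).map (gmap y) := by
  have : CompleteSpace X := FiniteDimensional.complete ℝ X
  have : SecondCountableTopology X := by
    have := FiniteDimensional.proper ℝ X
    infer_instance
  apply Measure.ext_of_charFunDual
  ext L
  have key : ∀ z : Fin N → X, ‖L.comp (gmap z)‖ ^ 2 = ∑ i, L (z i) ^ 2 := by
    intro z
    rw [(EuclideanSpace.basisFun (Fin N) ℝ).norm_dual]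
    refine Finset.sum_congr rfl fun i _ => ?_
    simp [gmap_apply, Pi.single_apply]
  simp_rw [charFunDual_map, charFunDual_stdGaussian, ]
  congr 3
  norm_cast
  rw [key, key, h]

lemma gmap_integral (x y : Fin N → X) (F : X → ℝ) (hF : Continuous F)
    (h : ∀ l : X →L[ℝ] ℝ, ∑ i, l (x i) ^ 2 = ∑ i, l (y i) ^ 2) :
    ∫ g, F (gmap x g) ∂(stdGaussian (EuclideanSpace ℝ (Fin N))) =
      ∫ g, F (gmap y g) ∂(stdGaussian (EuclideanSpace ℝ (Fin N))) := by
  rw [← integral_map (φ := gmap x) (f := F), gmap_law x y h, integral_map]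
  · exact (gmap y).continuous.aemeasurable
  · exact hF.measurable.aestronglyMeasurable
  · exact (gmap x).continuous.aemeasurable
  · exact hF.measurable.aestronglyMeasurable

lemma gmap_integrable (x : Fin N → X) (F : X → ℝ) (hF : Continuous F) (K : ℝ)
    (hK : ∀ x, |F x| ≤ K * ‖x‖ ^ 2) :
    Integrable (fun g => F (gmap x g)) (stdGaussian (EuclideanSpace ℝ (Fin N))) := by
  have h2 : MemLp id 2 (stdGaussian (EuclideanSpace ℝ (Fin N))) := IsGaussian.memLp_two_id
  have h3 : Integrable (fun g : EuclideanSpace ℝ (Fin N) => ‖g‖ ^ 2)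
      (stdGaussian (EuclideanSpace ℝ (Fin N))) := h2.integrable_norm_pow (by norm_num)
  refine (h3.const_mul (|K| * ‖gmap x‖ ^ 2)).mono'
    (hF.comp (gmap x).continuous).measurable.aestronglyMeasurable (ae_of_all _ fun g => ?_)
  rw [Real.norm_eq_abs]
  have := (gmap x).le_opNorm g
  calc |F (gmap x g)| ≤ K * ‖gmap x g‖ ^ 2 := hK _
    _ ≤ |K| * ‖gmap x g‖ ^ 2 := by gcongr; exact le_abs_self K
    _ ≤ |K| * (‖gmap x‖ * ‖g‖) ^ 2 := by gcongr
    _ = _ := by ring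

lemma gauss_sq (i : Fin N) :
    ∫ g, (g i) ^ 2 ∂(stdGaussian (EuclideanSpace ℝ (Fin N))) = 1 := by
  have h := variance_dual_stdGaussian
    (EuclideanSpace.proj i : EuclideanSpace ℝ (Fin N) →L[ℝ] ℝ)
  have h0 := integral_strongDual_stdGaussian
    (EuclideanSpace.proj i : EuclideanSpace ℝ (Fin N) →L[ℝ] ℝ)
  rw [variance_of_integral_eq_zero (by fun_prop) h0] at h
  rw [(EuclideanSpace.basisFun (Fin N) ℝ).norm_dual] at h
  simpa [Pi.single_apply] using h

lemma gauss_sq_integrable (i : Fin N) :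
    Integrable (fun g => (g i) ^ 2) (stdGaussian (EuclideanSpace ℝ (Fin N))) := by
  by_contra h
  have := gauss_sq i
  rw [integral_undef h] at this
  norm_num at this

lemma gauss_type2 {T : ℝ} (hT : 1 ≤ T) (hX : HasType2Const X T) (x : Fin N → X) :
    ∫ g, ‖gmap x g‖ ^ 2 ∂(stdGaussian (EuclideanSpace ℝ (Fin N))) ≤ T ^ 2 * ∑ i, ‖x i‖ ^ 2 := by
  set μ := stdGaussian (EuclideanSpace ℝ (Fin N)) with hμ
  set s : Bool → ℝ := fun b => if b then (1 : ℝ) else -1 with hs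
  have hs2 : ∀ b, s b ^ 2 = 1 := by intro b; cases b <;> simp [hs]
  have hcont : Continuous (fun z : X => ‖z‖ ^ 2) := by fun_prop
  have hinteg : ∀ y : Fin N → X, Integrable (fun g => ‖gmap y g‖ ^ 2) μ := fun y =>
    gmap_integrable y (fun z => ‖z‖ ^ 2) hcont 1 (fun z => by simp)
  have h1 : ∀ ε : Fin N → Bool, ∫ g, ‖gmap x g‖ ^ 2 ∂μ =
      ∫ g, ‖gmap (fun i => s (ε i) • x i) g‖ ^ 2 ∂μ := by
    intro ε
    refine gmap_integral x _ (fun z => ‖z‖ ^ 2) hcont fun l => ?_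
    refine Finset.sum_congr rfl fun i _ => ?_
    simp [mul_pow, hs2]
  have h2 : (2 : ℝ) ^ N * ∫ g, ‖gmap x g‖ ^ 2 ∂μ =
      ∫ g, ∑ ε : Fin N → Bool, ‖gmap (fun i => s (ε i) • x i) g‖ ^ 2 ∂μ := by
    rw [integral_finsetSum _ (fun ε _ => hinteg _), Finset.sum_congr rfl (fun ε _ => (h1 ε).symm)]
    simp
  have h3 : ∀ g : EuclideanSpace ℝ (Fin N),
      ∑ ε : Fin N → Bool, ‖gmap (fun i => s (ε i) • x i) g‖ ^ 2 ≤
        2 ^ N * (T ^ 2 * ∑ i, (g i) ^ 2 * ‖x i‖ ^ 2) := by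
    intro g
    have h := hX N (fun i => g i • x i)
    have h' := (Real.sqrt_le_left (by positivity)).1 h
    rw [mul_pow, Real.sq_sqrt (by positivity), div_le_iff₀ (by positivity)] at h'
    calc _ = ∑ ε : Fin N → Bool, ‖∑ i, (if ε i then (1 : ℝ) else -1) • g i • x i‖ ^ 2 := by
          refine Finset.sum_congr rfl fun ε _ => ?_
          rw [gmap_apply]
          congr 2
          refine Finset.sum_congr rfl fun i _ => ?_
          rw [smul_comm]
      _ ≤ _ := h'
      _ = _ := by simp [norm_smul, mul_pow]; ring
  have h4 : ∫ g, ∑ ε : Fin N → Bool, ‖gmap (fun i => s (ε i) • x i) g‖ ^ 2 ∂μ ≤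
      ∫ g, 2 ^ N * (T ^ 2 * ∑ i, (g i) ^ 2 * ‖x i‖ ^ 2) ∂μ := by
    refine integral_mono (integrable_finsetSum _ fun ε _ => hinteg _) ?_ h3
    refine Integrable.const_mul (Integrable.const_mul ?_ _) _
    exact integrable_finsetSum _ fun i _ => (gauss_sq_integrable i).mul_const _
  have h5 : ∫ g, 2 ^ N * (T ^ 2 * ∑ i, (g i) ^ 2 * ‖x i‖ ^ 2) ∂μ =
      2 ^ N * (T ^ 2 * ∑ i, ‖x i‖ ^ 2) := by
    rw [integral_const_mul, integral_const_mul,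
      integral_finsetSum _ (fun i _ => (gauss_sq_integrable i).mul_const _)]
    simp_rw [integral_mul_const]
    congr 2
    exact Finset.sum_congr rfl fun i _ => by rw [gauss_sq]; simp
  rw [← h2, h5] at h4
  exact le_of_mul_le_mul_left h4 (by positivity)

end Gauss

section Tree

open MeasureTheory ProbabilityTheory

variable {X : Type*} [NormedAddCommGroup X] [NormedSpace ℝ X] [FiniteDimensional ℝ X]
  [MeasurableSpace X] [BorelSpace X] {N : ℕ}

lemma sum_ite_norm (x : Fin N → X) (A : Finset (Fin N)) :
    ∑ i, ‖if i ∈ A then x i else 0‖ ^ 2 = ∑ i ∈ A, ‖x i‖ ^ 2 := by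
  rw [← Finset.sum_subset (Finset.subset_univ A)]
  · exact Finset.sum_congr rfl fun i hi => by simp [hi]
  · intro i _ hi
    simp [hi]

lemma even_tree {T D K : ℝ} (hT : 1 ≤ T) (hD : 0 ≤ D) (hX : HasType2Const X T) (F : X → ℝ)
    (hF : Continuous F) (hK : ∀ x, |F x| ≤ K * ‖x‖ ^ 2)
    (hom : ∀ (s : ℝ) x, F (s • x) = s ^ 2 * F x)
    (par : ∀ u v, |F (u + v) + F (u - v) - 2 * F u - 2 * F v| ≤ D * (‖u‖ ^ 2 + ‖v‖ ^ 2))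
    (x : Fin N → X) (k : ℕ) : ∀ A : Finset (Fin N), A.card ≤ 2 ^ k →
    |∫ g, F (gmap (fun i => if i ∈ A then x i else 0) g)
        ∂(stdGaussian (EuclideanSpace ℝ (Fin N))) - ∑ i ∈ A, F (x i)| ≤
      k * (D * T ^ 2) * ∑ i ∈ A, ‖x i‖ ^ 2 := by
  set μ := stdGaussian (EuclideanSpace ℝ (Fin N)) with hμ
  have F0 : F 0 = 0 := by simpa using hom 0 0
  have hcont : Continuous (fun z : X => ‖z‖ ^ 2) := by fun_prop
  have hinteg : ∀ y : Fin N → X, Integrable (fun g => ‖gmap y g‖ ^ 2) μ := fun y =>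
    gmap_integrable y (fun z => ‖z‖ ^ 2) hcont 1 (fun z => by simp)
  have hintF : ∀ y : Fin N → X, Integrable (fun g => F (gmap y g)) μ := fun y =>
    gmap_integrable y F hF K hK
  induction k with
  | zero =>
    intro A hA
    have : A.card = 0 ∨ A.card = 1 := by omega
    rcases this with h | h
    · rw [Finset.card_eq_zero] at h
      subst h
      simp [gmap_apply, F0]
    · obtain ⟨j, rfl⟩ := Finset.card_eq_one.1 h
      have : ∀ g : EuclideanSpace ℝ (Fin N),
          F (gmap (fun i => if i ∈ ({j} : Finset (Fin N)) then x i else 0) g) =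
            g j ^ 2 * F (x j) := by
        intro g
        rw [gmap_apply, ← hom]
        congr 1
        simp
      simp_rw [this, integral_mul_const, hμ, gauss_sq]
      simp
  | succ k ih =>
    intro A hA
    by_cases hc : A.card ≤ 2 ^ k
    · refine (ih A hc).trans ?_
      have : 0 ≤ (D * T ^ 2) * ∑ i ∈ A, ‖x i‖ ^ 2 := by positivity
      push_cast
      nlinarith
    · obtain ⟨A1, hA1, hcard⟩ := Finset.exists_subset_card_eq (le_of_not_ge hc)
      have hA2 : (A \ A1).card ≤ 2 ^ k := by
        rw [Finset.card_sdiff_of_subset hA1]; rw [pow_succ] at hA; omega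
      have i1 := ih A1 hcard.le
      have i2 := ih (A \ A1) hA2
      have e1 : ∑ i ∈ A, F (x i) = ∑ i ∈ A1, F (x i) + ∑ i ∈ A \ A1, F (x i) := by
        rw [add_comm, Finset.sum_sdiff hA1]
      have e2 : ∑ i ∈ A, ‖x i‖ ^ 2 = ∑ i ∈ A1, ‖x i‖ ^ 2 + ∑ i ∈ A \ A1, ‖x i‖ ^ 2 := by
        rw [add_comm, Finset.sum_sdiff hA1]
      set x1 : Fin N → X := fun i => if i ∈ A1 then x i else 0 with hx1
      set x2 : Fin N → X := fun i => if i ∈ A \ A1 then x i else 0 with hx2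
      set xA : Fin N → X := fun i => if i ∈ A then x i else 0 with hxA
      have gA : ∀ g, gmap xA g = gmap x1 g + gmap x2 g := by
        intro g
        simp_rw [gmap_apply, ← Finset.sum_add_distrib, ← smul_add]
        refine Finset.sum_congr rfl fun i _ => ?_
        congr 1
        by_cases h1 : i ∈ A1
        · simp [hxA, hx1, hx2, h1, hA1 h1]
        · by_cases h2 : i ∈ A <;> simp [hxA, hx1, hx2, h1, h2]
      have gB : ∀ g, gmap (fun i => x1 i - x2 i) g = gmap x1 g - gmap x2 g := by
        intro g
        simp_rw [gmap_apply, ← Finset.sum_sub_distrib, ← smul_sub]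
      have hflip : ∫ g, F (gmap xA g) ∂μ = ∫ g, F (gmap (fun i => x1 i - x2 i) g) ∂μ := by
        refine gmap_integral _ _ F hF fun l => ?_
        refine Finset.sum_congr rfl fun i _ => ?_
        by_cases h1 : i ∈ A1
        · simp [hxA, hx1, hx2, h1, hA1 h1]
        · by_cases h2 : i ∈ A <;> simp [hxA, hx1, hx2, h1, h2]
      have n1 : ∫ g, ‖gmap x1 g‖ ^ 2 ∂μ ≤ T ^ 2 * ∑ i ∈ A1, ‖x i‖ ^ 2 := by
        refine (gauss_type2 hT hX x1).trans (le_of_eq ?_)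
        congr 1
        exact sum_ite_norm x A1
      have n2 : ∫ g, ‖gmap x2 g‖ ^ 2 ∂μ ≤ T ^ 2 * ∑ i ∈ A \ A1, ‖x i‖ ^ 2 := by
        refine (gauss_type2 hT hX x2).trans (le_of_eq ?_)
        congr 1
        exact sum_ite_norm x (A \ A1)
      have main : |∫ g, (F (gmap xA g) + F (gmap (fun i => x1 i - x2 i) g)
            - 2 * F (gmap x1 g) - 2 * F (gmap x2 g)) ∂μ| ≤
          ∫ g, D * (‖gmap x1 g‖ ^ 2 + ‖gmap x2 g‖ ^ 2) ∂μ := by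
        refine (abs_integral_le_integral_abs).trans ?_
        refine integral_mono ?_ (((hinteg x1).add (hinteg x2)).const_mul D) fun g => ?_
        · exact ((((hintF xA).add (hintF _)).sub ((hintF x1).const_mul 2)).sub
            ((hintF x2).const_mul 2)).abs
        · simp only [gA, gB]
          exact par _ _
      have j1 := hintF xA
      have j2 := hintF (fun i => x1 i - x2 i)
      have j3 := (hintF x1).const_mul 2
      have j4 := (hintF x2).const_mul 2
      have eI : ∫ g, (F (gmap xA g) + F (gmap (fun i => x1 i - x2 i) g)
            - 2 * F (gmap x1 g) - 2 * F (gmap x2 g)) ∂μ =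
          ∫ g, F (gmap xA g) ∂μ + ∫ g, F (gmap (fun i => x1 i - x2 i) g) ∂μ
            - 2 * ∫ g, F (gmap x1 g) ∂μ - 2 * ∫ g, F (gmap x2 g) ∂μ := by
        rw [integral_sub, integral_sub, integral_add, integral_const_mul, integral_const_mul]
        · exact j1
        · exact j2
        · exact j1.add j2
        · exact j3
        · exact (j1.add j2).sub j3
        · exact j4
      rw [eI, integral_const_mul, integral_add (hinteg x1) (hinteg x2), ← hflip] at main
      have nn : D * (∫ g, ‖gmap x1 g‖ ^ 2 ∂μ + ∫ g, ‖gmap x2 g‖ ^ 2 ∂μ) ≤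
          D * (T ^ 2 * ∑ i ∈ A1, ‖x i‖ ^ 2 + T ^ 2 * ∑ i ∈ A \ A1, ‖x i‖ ^ 2) := by gcongr
      have m' := main.trans nn
      have p1 : 0 ≤ D * T ^ 2 * ∑ i ∈ A1, ‖x i‖ ^ 2 := by positivity
      have p2 : 0 ≤ D * T ^ 2 * ∑ i ∈ A \ A1, ‖x i‖ ^ 2 := by positivity
      rw [e1, e2]
      push_cast
      rw [abs_le] at *
      constructor <;> nlinarith [i1.1, i1.2, i2.1, i2.2, m'.1, m'.2]

lemma even_dual {T D K : ℝ} (hT : 1 ≤ T) (hD : 0 ≤ D) (hX : HasType2Const X T) (F : X → ℝ)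
    (hF : Continuous F) (hK : ∀ x, |F x| ≤ K * ‖x‖ ^ 2)
    (hom : ∀ (s : ℝ) x, F (s • x) = s ^ 2 * F x)
    (par : ∀ u v, |F (u + v) + F (u - v) - 2 * F u - 2 * F v| ≤ D * (‖u‖ ^ 2 + ‖v‖ ^ 2))
    (x : Fin N → X) (hx : ∀ i, ‖x i‖ ≤ 1) (a : Fin N → ℝ) (k : ℕ) (hk : N ≤ 2 ^ k)
    (ha : ∀ l : X →L[ℝ] ℝ, ∑ i, a i * l (x i) ^ 2 = 0) :
    |∑ i, a i * F (x i)| ≤ k * (D * T ^ 2) * ∑ i, |a i| := by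
  set y : Fin N → X := fun i => √(max (a i) 0) • x i with hy
  set z : Fin N → X := fun i => √(max (-a i) 0) • x i with hz
  have h1 := even_tree hT hD hX F hF hK hom par y k univ (by simpa using hk)
  have h2 := even_tree hT hD hX F hF hK hom par z k univ (by simpa using hk)
  simp only [Finset.mem_univ, if_true] at h1 h2
  have hmax : ∀ t : ℝ, max t 0 - max (-t) 0 = t := by
    intro t; rcases le_total t 0 with h | h <;> simp [h]
  have hmax' : ∀ t : ℝ, max t 0 + max (-t) 0 = |t| := by
    intro t; rcases le_total t 0 with h | h <;> simp [h, abs_of_nonneg, abs_of_nonpos]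
  have sq : ∀ t : ℝ, √(max t 0) ^ 2 = max t 0 := fun t => Real.sq_sqrt (le_max_right _ _)
  rw [gmap_integral y z F hF] at h1
  · have e1 : ∑ i, a i * F (x i) = ∑ i, F (y i) - ∑ i, F (z i) := by
      rw [← Finset.sum_sub_distrib]
      refine Finset.sum_congr rfl fun i _ => ?_
      simp only [hy, hz, hom, sq]
      rw [← sub_mul, hmax]
    have e2 : ∑ i, ‖y i‖ ^ 2 + ∑ i, ‖z i‖ ^ 2 ≤ ∑ i, |a i| := by
      rw [← Finset.sum_add_distrib]
      refine Finset.sum_le_sum fun i _ => ?_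
      simp only [hy, hz, norm_smul, mul_pow, Real.norm_eq_abs, sq_abs, sq]
      rw [← add_mul, hmax']
      have : ‖x i‖ ^ 2 ≤ 1 := pow_le_one₀ (norm_nonneg _) (hx i)
      nlinarith [abs_nonneg (a i)]
    have e3 : k * (D * T ^ 2) * (∑ i, ‖y i‖ ^ 2 + ∑ i, ‖z i‖ ^ 2) ≤
      k * (D * T ^ 2) * ∑ i, |a i| := by gcongr
    rw [e1]
    rw [abs_le] at *
    constructor <;> linarith [h1.1, h1.2, h2.1, h2.2]
  · intro l
    rw [← sub_eq_zero, ← Finset.sum_sub_distrib, ← ha l]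
    refine Finset.sum_congr rfl fun i _ => ?_
    simp only [hy, hz, map_smul, smul_eq_mul, mul_pow, sq]
    rw [← sub_mul, hmax]

end Tree

section Approx

lemma odd_tree {X : Type*} [NormedAddCommGroup X] {ι : Type*} [DecidableEq ι]
    {D : ℝ} (hD : 0 ≤ D) (F : X → ℝ) (F0 : F 0 = 0)
    (add : ∀ u v, |F (u + v) - F u - F v| ≤ D * (‖u‖ + ‖v‖))
    (z : ι → X) (k : ℕ) : ∀ A : Finset ι, A.card ≤ 2 ^ k →
    |F (∑ i ∈ A, z i) - ∑ i ∈ A, F (z i)| ≤ k * D * ∑ i ∈ A, ‖z i‖ := by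
  induction k with
  | zero =>
    intro A hA
    have : A.card = 0 ∨ A.card = 1 := by omega
    rcases this with h | h
    · rw [Finset.card_eq_zero] at h
      subst h
      simp [F0]
    · obtain ⟨j, rfl⟩ := Finset.card_eq_one.1 h
      simp
  | succ k ih =>
    intro A hA
    by_cases hc : A.card ≤ 2 ^ k
    · refine (ih A hc).trans ?_
      have : 0 ≤ D * ∑ i ∈ A, ‖z i‖ := by positivity
      push_cast
      nlinarith
    · obtain ⟨A1, hA1, hcard⟩ := Finset.exists_subset_card_eq (le_of_not_ge hc)
      have hA2 : (A \ A1).card ≤ 2 ^ k := by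
        rw [Finset.card_sdiff_of_subset hA1]; rw [pow_succ] at hA; omega
      have i1 := ih A1 hcard.le
      have i2 := ih (A \ A1) hA2
      have e1 : ∑ i ∈ A, F (z i) = ∑ i ∈ A1, F (z i) + ∑ i ∈ A \ A1, F (z i) := by
        rw [add_comm, Finset.sum_sdiff hA1]
      have e2 : ∑ i ∈ A, ‖z i‖ = ∑ i ∈ A1, ‖z i‖ + ∑ i ∈ A \ A1, ‖z i‖ := by
        rw [add_comm, Finset.sum_sdiff hA1]
      have e3 : ∑ i ∈ A, z i = ∑ i ∈ A1, z i + ∑ i ∈ A \ A1, z i := by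
        rw [add_comm, Finset.sum_sdiff hA1]
      have m := add (∑ i ∈ A1, z i) (∑ i ∈ A \ A1, z i)
      have n1 : D * (‖∑ i ∈ A1, z i‖ + ‖∑ i ∈ A \ A1, z i‖) ≤
          D * (∑ i ∈ A1, ‖z i‖ + ∑ i ∈ A \ A1, ‖z i‖) := by
        gcongr <;> exact norm_sum_le _ _
      have m' := m.trans n1
      rw [e1, e2, e3]
      push_cast
      rw [abs_le] at *
      constructor <;> nlinarith [i1.1, i1.2, i2.1, i2.2, m'.1, m'.2]

lemma odd_dual {X : Type*} [NormedAddCommGroup X] [NormedSpace ℝ X] {N : ℕ}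
    {D : ℝ} (hD : 0 ≤ D) (F : X → ℝ)
    (hom : ∀ (s : ℝ) x, F (s • x) = s * F x)
    (add : ∀ u v, |F (u + v) - F u - F v| ≤ D * (‖u‖ + ‖v‖))
    (x : Fin N → X) (hx : ∀ i, ‖x i‖ ≤ 1) (a : Fin N → ℝ) (k : ℕ) (hk : N ≤ 2 ^ k)
    (ha : ∑ i, a i • x i = 0) :
    |∑ i, a i * F (x i)| ≤ k * D * ∑ i, |a i| := by
  have F0 : F 0 = 0 := by simpa using hom 0 0
  have h := odd_tree hD F F0 add (fun i => a i • x i) k univ (by simpa using hk)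
  simp only [ha, F0, hom, zero_sub, abs_neg, norm_smul, Real.norm_eq_abs] at h
  refine h.trans ?_
  gcongr with i _
  exact mul_le_of_le_one_right (abs_nonneg _) (hx i)

/-- Finite-dimensional duality. -/
lemma finite_duality {V : Type*} [AddCommGroup V] [Module ℝ V] {N : ℕ}
    (e : Fin N → V →ₗ[ℝ] ℝ) (b : Fin N → ℝ) {M : ℝ} (hM : 0 ≤ M)
    (H : ∀ a : Fin N → ℝ, (∀ w, ∑ i, a i * e i w = 0) → |∑ i, a i * b i| ≤ M * ∑ i, |a i|) :
    ∃ w, ∀ i, |b i - e i w| ≤ M := by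
  by_contra hcon
  push Not at hcon
  let R : Submodule ℝ (Fin N → ℝ) := LinearMap.range (LinearMap.pi e)
  have hdis : Disjoint (Metric.closedBall b M) (R : Set (Fin N → ℝ)) := by
    rw [Set.disjoint_left]
    rintro z hz ⟨w, rfl⟩
    obtain ⟨i, hi⟩ := hcon w
    rw [Metric.mem_closedBall, dist_comm, dist_pi_le_iff hM] at hz
    have := hz i
    rw [Real.dist_eq] at this
    simp at this
    linarith
  obtain ⟨f, u, v, h1, huv, h2⟩ := geometric_hahn_banach_compact_closed
    (convex_closedBall b M) (isCompact_closedBall b M) R.convex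
    (Submodule.closed_of_finiteDimensional R) hdis
  have hR : ∀ z ∈ R, f z = 0 := by
    intro z hz
    by_contra hne
    have := h2 (((v - 1) / f z) • z) (R.smul_mem _ hz)
    rw [map_smul, smul_eq_mul, div_mul_cancel₀ _ hne] at this
    linarith
  have hv : v < 0 := by simpa using h2 0 R.zero_mem
  set a : Fin N → ℝ := fun i => f (Pi.single i 1) with ha
  have hf : ∀ z, f z = ∑ i, a i * z i := by
    intro z
    conv_lhs => rw [← Finset.univ_sum_single z]
    rw [map_sum]
    refine Finset.sum_congr rfl fun i _ => ?_
    have : (Pi.single i (z i) : Fin N → ℝ) = z i • Pi.single i 1 := by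
      rw [← Pi.single_smul]; simp
    rw [this, map_smul, smul_eq_mul, mul_comm]
  have ha0 : ∀ w, ∑ i, a i * e i w = 0 := by
    intro w
    have := hR (LinearMap.pi e w) ⟨w, rfl⟩
    rw [hf] at this
    simpa using this
  have hb := H a ha0
  have hz := h1 (fun i => b i + M * SignType.sign (a i)) (by
    rw [Metric.mem_closedBall, dist_pi_le_iff hM]
    intro i
    rw [Real.dist_eq]
    simp only [add_sub_cancel_left, abs_mul, abs_of_nonneg hM]
    refine mul_le_of_le_one_right hM ?_
    rcases lt_trichotomy (a i) 0 with h | h | h <;> simp [h])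
  rw [hf] at hz
  have : ∑ i, a i * (b i + M * SignType.sign (a i)) = ∑ i, a i * b i + M * ∑ i, |a i| := by
    rw [Finset.mul_sum, ← Finset.sum_add_distrib]
    refine Finset.sum_congr rfl fun i _ => ?_
    rw [← self_mul_sign (a i)]; ring
  rw [this] at hz
  linarith [(abs_le.1 hb).1]

lemma approx_aux {d : ℕ} {S : Type*}
    (e : S → (Fin d → ℝ) →ₗ[ℝ] ℝ) (sep : ∀ w, (∀ s, e s w = 0) → w = 0) (b : S → ℝ)
    {M : ℝ} (hM : 0 ≤ M)
    (H : ∀ N : ℕ, N ≤ d + 1 → ∀ p : Fin N → S, ∀ a : Fin N → ℝ,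
      (∀ w, ∑ i, a i * e (p i) w = 0) → |∑ i, a i * b (p i)| ≤ M * ∑ i, |a i|) :
    ∃ w, ∀ s, |b s - e s w| ≤ M := by
  classical
  let t : S → Set (Fin d → ℝ) := fun s => {w | |b s - e s w| ≤ M}
  have tpre : ∀ s, t s = e s ⁻¹' (Set.Icc (b s - M) (b s + M)) := by
    intro s
    ext w
    simp only [t, Set.mem_ofPred_eq, Set.mem_preimage, Set.mem_Icc, abs_le]
    constructor <;> rintro ⟨h1, h2⟩ <;> constructor <;> linarith
  have tconv : ∀ s, Convex ℝ (t s) := by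
    intro s
    rw [tpre]
    exact (convex_Icc _ _).linear_preimage (e s)
  have tclosed : ∀ s, IsClosed (t s) := by
    intro s
    rw [tpre]
    exact isClosed_Icc.preimage (LinearMap.continuous_of_finiteDimensional (e s))
  have hfin : ∀ I : Finset S, (⋂ s ∈ I, t s).Nonempty := by
    intro I
    refine Convex.helly_theorem' (𝕜 := ℝ) (fun i _ => tconv i) fun J _ hJ => ?_
    rw [Module.finrank_fin_fun] at hJ
    let eq := J.equivFin
    obtain ⟨w, hw⟩ := finite_duality (fun i => e (eq.symm i)) (fun i => b (eq.symm i)) hM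
      (H J.card hJ (fun i => eq.symm i))
    refine ⟨w, ?_⟩
    simp only [Set.mem_iInter]
    intro s hs
    have := hw (eq ⟨s, hs⟩)
    simp only [Equiv.symm_apply_apply] at this
    exact this
  obtain ⟨κ, a, ainj, hspan, hli⟩ := exists_linearIndependent' ℝ e
  have : Finite κ := hli.finite
  have := Fintype.ofFinite κ
  let L : (Fin d → ℝ) →ₗ[ℝ] (κ → ℝ) := LinearMap.pi fun j => e (a j)
  have hL : LinearMap.ker L = ⊥ := by
    rw [LinearMap.ker_eq_bot']
    intro w hw
    apply sep
    intro s
    have hmem : e s ∈ Submodule.span ℝ (Set.range (e ∘ a)) := by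
      rw [hspan]; exact Submodule.subset_span ⟨s, rfl⟩
    have hle : Submodule.span ℝ (Set.range (e ∘ a)) ≤
        LinearMap.ker (LinearMap.applyₗ (R := ℝ) (M₂ := ℝ) w) := by
      rw [Submodule.span_le]
      rintro _ ⟨j, rfl⟩
      have := congrFun hw j
      simpa [L] using this
    simpa using hle hmem
  have hemb := LinearMap.isClosedEmbedding_of_injective hL
  have hcomp : IsCompact (⋂ s ∈ (univ.image a), t s) := by
    have : (⋂ s ∈ (univ.image a), t s) =
        L ⁻¹' (Set.pi Set.univ fun j => Set.Icc (b (a j) - M) (b (a j) + M)) := by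
      ext w
      simp only [tpre, Set.mem_iInter, Finset.mem_image, Finset.mem_univ, true_and,
        Set.mem_preimage, Set.mem_pi, Set.mem_univ, true_imp_iff, L, LinearMap.pi_apply]
      constructor
      · intro h j
        exact h (a j) ⟨j, rfl⟩
      · rintro h _ ⟨j, rfl⟩
        exact h j
    rw [this]
    exact hemb.isCompact_preimage (isCompact_univ_pi fun j => isCompact_Icc)
  obtain ⟨w, hw⟩ := hcomp.inter_iInter_nonempty t tclosed fun u => by
    obtain ⟨w, hw⟩ := hfin (univ.image a ∪ u)
    simp only [Set.mem_iInter, Finset.mem_union] at hw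
    refine ⟨w, ?_, ?_⟩ <;> simp only [Set.mem_iInter]
    · exact fun i hi => hw i (Or.inl hi)
    · exact fun i hi => hw i (Or.inr hi)
  refine ⟨w, fun s => ?_⟩
  have := Set.mem_iInter.1 hw.2 s
  exact this

lemma approx {V : Type*} [AddCommGroup V] [Module ℝ V] [FiniteDimensional ℝ V] {S : Type*}
    (e : S → V →ₗ[ℝ] ℝ) (sep : ∀ w, (∀ s, e s w = 0) → w = 0) (b : S → ℝ)
    {M : ℝ} (hM : 0 ≤ M)
    (H : ∀ N : ℕ, N ≤ Module.finrank ℝ V + 1 → ∀ p : Fin N → S, ∀ a : Fin N → ℝ,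
      (∀ w, ∑ i, a i * e (p i) w = 0) → |∑ i, a i * b (p i)| ≤ M * ∑ i, |a i|) :
    ∃ w, ∀ s, |b s - e s w| ≤ M := by
  let φ := (Module.finBasis ℝ V).equivFun
  obtain ⟨w, hw⟩ := approx_aux (fun s => (e s).comp φ.symm.toLinearMap)
    (fun w hw => by simpa using sep (φ.symm w) hw) b hM
    (fun N hN p a ha => H N hN p a fun w => by simpa using ha (φ w))
  exact ⟨φ.symm w, hw⟩

end Approx

section Diff

variable {X : Type*} [NormedAddCommGroup X] [NormedSpace ℝ X]

lemma third_diff {f : X → ℝ} (hf : diffBound 3 (Metric.closedBall 0 1) f 1) (x h p1 p2 p3 : X)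
    (e1 : p1 = x + h) (e2 : p2 = x + (2 : ℝ) • h) (e3 : p3 = x + (3 : ℝ) • h)
    (n0 : ‖x‖ ≤ 1) (n1 : ‖p1‖ ≤ 1) (n2 : ‖p2‖ ≤ 1) (n3 : ‖p3‖ ≤ 1) :
    |f p3 - 3 * f p2 + 3 * f p1 - f x| ≤ 1 := by
  have := hf x h (by
    intro j hj
    rw [mem_closedBall_zero_iff]
    interval_cases j
    · simpa using n0
    · simpa [← e1] using n1
    · simpa [← e2] using n2
    · simpa [← e3] using n3)
  simp [Finset.sum_range_succ, ← e1, ← e2, ← e3, Nat.choose] at this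
  rw [abs_le] at *
  constructor <;> linarith [this.1, this.2]

lemma mixed_diff {f : X → ℝ} (hf : diffBound 3 (Metric.closedBall 0 1) f 1) (a b c : X)
    (hn : 2 * ‖a‖ + ‖b‖ + ‖c‖ ≤ 1) :
    |f (a + b + c) - f (a + b) - f (a + c) - f (b + c) + f a + f b + f c - f 0| ≤ 7 := by
  have nb : ∀ α β γ : ℝ, |α| ≤ 2 → |β| ≤ 1 → |γ| ≤ 1 → ‖α • a + β • b + γ • c‖ ≤ 1 := by
    intro α β γ h1 h2 h3
    calc ‖α • a + β • b + γ • c‖ ≤ ‖α • a‖ + ‖β • b‖ + ‖γ • c‖ := norm_add₃_le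
      _ = |α| * ‖a‖ + |β| * ‖b‖ + |γ| * ‖c‖ := by simp [norm_smul]
      _ ≤ 2 * ‖a‖ + 1 * ‖b‖ + 1 * ‖c‖ := by gcongr
      _ ≤ 1 := by linarith
  have key : ∀ x y z : ℝ, 0 ≤ x → x ≤ 1 → 0 ≤ y → y ≤ 1 → 0 ≤ z → z ≤ 1 →
      |f ((-2 * x) • a + (-y / 2) • b + (0 : ℝ) • c)
        - 3 * f ((-x) • a + (0 : ℝ) • b + (z / 3) • c)
        + 3 * f ((0 : ℝ) • a + (y / 2) • b + (2 * z / 3) • c)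
        - f (x • a + y • b + z • c)| ≤ 1 := by
    intro x y z x0 x1 y0 y1 z0 z1
    refine third_diff hf (x • a + y • b + z • c) (-(x • a + (y / 2) • b + (z / 3) • c)) _ _ _
      ?_ ?_ ?_ ?_ ?_ ?_ ?_
    · module
    · module
    · module
    all_goals
      apply nb <;> rw [abs_le] <;> constructor <;> linarith
  have k1 := key 1 0 0 (by norm_num) (by norm_num) (by norm_num) (by norm_num) (by norm_num)
    (by norm_num)
  have k2 := key 0 1 0 (by norm_num) (by norm_num) (by norm_num) (by norm_num) (by norm_num)
    (by norm_num)
  have k3 := key 0 0 1 (by norm_num) (by norm_num) (by norm_num) (by norm_num) (by norm_num)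
    (by norm_num)
  have k4 := key 1 1 0 (by norm_num) (by norm_num) (by norm_num) (by norm_num) (by norm_num)
    (by norm_num)
  have k5 := key 1 0 1 (by norm_num) (by norm_num) (by norm_num) (by norm_num) (by norm_num)
    (by norm_num)
  have k6 := key 0 1 1 (by norm_num) (by norm_num) (by norm_num) (by norm_num) (by norm_num)
    (by norm_num)
  have k7 := key 1 1 1 (by norm_num) (by norm_num) (by norm_num) (by norm_num) (by norm_num)
    (by norm_num)
  simp only [mul_one, mul_zero, neg_zero, zero_div, zero_smul, add_zero, zero_add, one_smul]
    at k1 k2 k3 k4 k5 k6 k7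
  rw [abs_le] at *
  constructor <;>
    linarith [k1.1, k1.2, k2.1, k2.2, k3.1, k3.2, k4.1, k4.2, k5.1, k5.2, k6.1, k6.2, k7.1, k7.2]

lemma self_bound {α : Type*} (S : Set α) (g : α → ℝ) (K0 : ℝ) (h0 : ∀ x ∈ S, g x ≤ K0)
    (step : ∀ K, (∀ x ∈ S, g x ≤ K) → ∀ x ∈ S, g x ≤ 3 / 4 * K + 33 / 4) :
    ∀ x ∈ S, g x ≤ 33 := by
  intro x hx
  have hb : BddAbove (g '' S) := ⟨K0, by rintro _ ⟨y, hy, rfl⟩; exact h0 y hy⟩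
  have h1 : ∀ y ∈ S, g y ≤ sSup (g '' S) := fun y hy => le_csSup hb ⟨y, hy, rfl⟩
  have h2 : sSup (g '' S) ≤ 3 / 4 * sSup (g '' S) + 33 / 4 := by
    refine csSup_le (Set.Nonempty.image g ⟨x, hx⟩) ?_
    rintro _ ⟨y, hy, rfl⟩
    exact step _ h1 y hy
  have := h1 x hx
  linarith

lemma even_1d (ψ : ℝ → ℝ) (K0 : ℝ) (hK : ∀ t ∈ Set.Icc (0 : ℝ) 1, |ψ t| ≤ K0) (h1 : ψ 1 = 0)
    (dbl : ∀ s ∈ Set.Icc (0 : ℝ) (1 / 2), |ψ (2 * s) - 4 * ψ s| ≤ 1)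
    (par : ∀ t ∈ Set.Icc (1 / 2 : ℝ) 1,
      |ψ t + ψ (1 - t) - 2 * ψ (1 / 2) - 2 * ψ (t - 1 / 2)| ≤ 7) :
    ∀ t ∈ Set.Icc (0 : ℝ) 1, |ψ t| ≤ 33 := by
  refine self_bound _ (fun t => |ψ t|) K0 hK fun K hK t ht => ?_
  have hhalf : ∀ s ∈ Set.Icc (0 : ℝ) (1 / 2), |ψ s| ≤ (K + 1) / 4 := by
    intro s hs
    have a1 := dbl s hs
    have a2 := hK (2 * s) ⟨by linarith [hs.1], by linarith [hs.2]⟩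
    rw [abs_le] at *
    constructor <;> linarith [a1.1, a1.2, a2.1, a2.2]
  have K0' : 0 ≤ K := (abs_nonneg _).trans (hK t ht)
  rcases le_total t (1 / 2) with h | h
  · have := hhalf t ⟨ht.1, h⟩
    linarith
  · have a0 := dbl (1 / 2) ⟨by norm_num, le_rfl⟩
    rw [show (2 : ℝ) * (1 / 2) = 1 by norm_num, h1] at a0
    have a1 := par t ⟨h, ht.2⟩
    have a2 := hhalf (1 - t) ⟨by linarith [ht.2], by linarith⟩
    have a3 := hhalf (t - 1 / 2) ⟨by linarith, by linarith [ht.2]⟩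
    rw [abs_le] at *
    constructor <;> linarith [a0.1, a0.2, a1.1, a1.2, a2.1, a2.2, a3.1, a3.2]

lemma odd_1d (ψ : ℝ → ℝ) (K0 : ℝ) (hK : ∀ t ∈ Set.Icc (0 : ℝ) 1, |ψ t| ≤ K0) (h1 : ψ 1 = 0)
    (dbl : ∀ s ∈ Set.Icc (0 : ℝ) (1 / 2), |ψ (2 * s) - 2 * ψ s| ≤ 1)
    (add : ∀ t ∈ Set.Icc (1 / 2 : ℝ) 1, |ψ t - ψ (1 / 2) - ψ (t - 1 / 2)| ≤ 7 / 2) :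
    ∀ t ∈ Set.Icc (0 : ℝ) 1, |ψ t| ≤ 33 := by
  refine self_bound _ (fun t => |ψ t|) K0 hK fun K hK t ht => ?_
  have hhalf : ∀ s ∈ Set.Icc (0 : ℝ) (1 / 2), |ψ s| ≤ (K + 1) / 2 := by
    intro s hs
    have a1 := dbl s hs
    have a2 := hK (2 * s) ⟨by linarith [hs.1], by linarith [hs.2]⟩
    rw [abs_le] at *
    constructor <;> linarith [a1.1, a1.2, a2.1, a2.2]
  have K0' : 0 ≤ K := (abs_nonneg _).trans (hK t ht)
  rcases le_total t (1 / 2) with h | h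
  · have := hhalf t ⟨ht.1, h⟩
    linarith
  · have a0 := dbl (1 / 2) ⟨by norm_num, le_rfl⟩
    rw [show (2 : ℝ) * (1 / 2) = 1 by norm_num, h1] at a0
    have a1 := add t ⟨h, ht.2⟩
    have a3 := hhalf (t - 1 / 2) ⟨by linarith, by linarith [ht.2]⟩
    rw [abs_le] at *
    constructor <;> linarith [a0.1, a0.2, a1.1, a1.2, a3.1, a3.2]

lemma even_struct (f : X → ℝ) (K0 : ℝ) (hK0 : ∀ x, ‖x‖ ≤ 1 → |f x| ≤ K0)
    (hc : ContinuousOn f (Metric.closedBall 0 1)) (ev : ∀ x, f (-x) = f x) (f0 : f 0 = 0)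
    (par : ∀ u v, ‖u‖ ≤ 1 / 4 → ‖v‖ ≤ 1 / 4 →
      |f (u + v) + f (u - v) - 2 * f u - 2 * f v| ≤ 7)
    (dbl : ∀ u, ‖u‖ ≤ 1 / 2 → |f ((2 : ℝ) • u) - 4 * f u| ≤ 1) :
    ∃ (F : X → ℝ) (K : ℝ), Continuous F ∧ (∀ x, |F x| ≤ K * ‖x‖ ^ 2) ∧
      (∀ (s : ℝ) x, F (s • x) = s ^ 2 * F x) ∧
      (∀ u v, |F (u + v) + F (u - v) - 2 * F u - 2 * F v| ≤ 13120 * (‖u‖ ^ 2 + ‖v‖ ^ 2)) ∧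
      ∀ x, ‖x‖ ≤ 1 → |f x - F x| ≤ 533 := by
  set F : X → ℝ := fun x => 16 * ‖x‖ ^ 2 * f ((1 / (4 * ‖x‖)) • x) with hF
  have nrm : ∀ x : X, ‖(1 / (4 * ‖x‖)) • x‖ ≤ 1 / 4 := by
    intro x
    rcases eq_or_ne x 0 with rfl | hx
    · simp
    · have : ‖x‖ ≠ 0 := norm_ne_zero_iff.2 hx
      rw [norm_smul, Real.norm_of_nonneg (by positivity)]
      apply le_of_eq
      field_simp
  have hK : ∀ x, |F x| ≤ (16 * K0) * ‖x‖ ^ 2 := by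
    intro x
    have := hK0 _ ((nrm x).trans (by norm_num))
    simp only [hF]
    rw [abs_mul, abs_of_nonneg (by positivity)]
    nlinarith [sq_nonneg ‖x‖]
  have F0 : F 0 = 0 := by simp [hF]
  have hom : ∀ (s : ℝ) x, F (s • x) = s ^ 2 * F x := by
    intro s x
    rcases eq_or_ne s 0 with rfl | hs
    · simp [F0]
    rcases eq_or_ne x 0 with rfl | hx
    · simp [F0]
    have hx' : ‖x‖ ≠ 0 := norm_ne_zero_iff.2 hx
    simp only [hF, norm_smul, Real.norm_eq_abs, mul_pow, sq_abs, smul_smul]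
    rcases lt_or_gt_of_ne hs with h | h
    · rw [abs_of_neg h, show 1 / (4 * (-s * ‖x‖)) * s = -(1 / (4 * ‖x‖)) by field_simp,
        neg_smul, ev]
      ring
    · rw [abs_of_pos h, show 1 / (4 * (s * ‖x‖)) * s = (1 / (4 * ‖x‖)) by field_simp]
      ring
  have near : ∀ x, ‖x‖ ≤ 1 / 4 → |f x - F x| ≤ 33 := by
    intro x hx
    rcases eq_or_ne x 0 with rfl | hx0
    · simp [F0, f0]
    have hx' : ‖x‖ ≠ 0 := norm_ne_zero_iff.2 hx0
    set y := (1 / (4 * ‖x‖)) • x with hy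
    have hyn : ‖y‖ ≤ 1 / 4 := nrm x
    have hbd : ∀ t ∈ Set.Icc (0 : ℝ) 1, ‖t • y‖ ≤ t * (1 / 4) := by
      intro t ht
      rw [norm_smul, Real.norm_of_nonneg ht.1]
      exact mul_le_mul_of_nonneg_left hyn ht.1
    have := even_1d (fun t => f (t • y) - t ^ 2 * f y) (2 * K0) ?_ ?_ ?_ ?_ (4 * ‖x‖)
      ⟨by positivity, by linarith⟩
    · have e : (4 * ‖x‖) • y = x := by
        rw [hy, smul_smul]
        rw [show 4 * ‖x‖ * (1 / (4 * ‖x‖)) = 1 by field_simp, one_smul]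
      simp only [e] at this
      have e2 : F x = (4 * ‖x‖) ^ 2 * f y := by simp only [hF]; ring
      rw [e2]; exact this
    · intro t ht
      have b1 := hK0 (t • y) (by linarith [hbd t ht, ht.2])
      have b2 := hK0 y (by linarith)
      have b3 : t ^ 2 ≤ 1 := pow_le_one₀ ht.1 ht.2
      have b4 : |t ^ 2 * f y| ≤ K0 := by
        rw [abs_mul, abs_of_nonneg (sq_nonneg t)]
        nlinarith [abs_nonneg (f y)]
      calc _ ≤ |f (t • y)| + |t ^ 2 * f y| := abs_sub _ _
        _ ≤ _ := by linarith
    · simp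
    · intro s hs
      have := dbl (s • y) (by linarith [hbd s ⟨hs.1, by linarith [hs.2]⟩, hs.2])
      rw [smul_smul] at this
      convert this using 2
      ring
    · intro t ht
      have := par ((1 / 2 : ℝ) • y) ((t - 1 / 2) • y)
        (by linarith [hbd (1 / 2) ⟨by norm_num, by norm_num⟩])
        (by linarith [hbd (t - 1 / 2) ⟨by linarith [ht.1], by linarith [ht.2]⟩, ht.2])
      rw [← add_smul, ← sub_smul] at this
      rw [show (1 / 2 + (t - 1 / 2) : ℝ) = t by ring,
        show (1 / 2 - (t - 1 / 2) : ℝ) = 1 - t by ring] at this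
      convert this using 2
      ring
  refine ⟨F, 16 * K0, ?_, hK, hom, ?_, ?_⟩
  · rw [continuous_iff_continuousAt]
    intro x
    rcases eq_or_ne x 0 with rfl | hx
    · rw [ContinuousAt, F0]
      refine squeeze_zero_norm hK ?_
      have : Continuous fun x : X => 16 * K0 * ‖x‖ ^ 2 := by fun_prop
      have h := this.tendsto 0
      simpa using h
    · have hx' : ‖x‖ ≠ 0 := norm_ne_zero_iff.2 hx
      have c1 : ContinuousAt (fun x : X => (1 / (4 * ‖x‖)) • x) x := by
        refine ContinuousAt.smul (ContinuousAt.div continuousAt_const ?_ ?_) continuousAt_id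
        · fun_prop
        · positivity
      have c2 : ContinuousAt f ((1 / (4 * ‖x‖)) • x) := by
        apply hc.continuousAt
        apply Metric.closedBall_mem_nhds_of_mem
        rw [mem_ball_zero_iff]
        linarith [nrm x]
      have c3 : ContinuousAt (fun x : X => f ((1 / (4 * ‖x‖)) • x)) x :=
        ContinuousAt.comp (f := fun x : X => (1 / (4 * ‖x‖)) • x) (g := f) c2 c1
      exact ContinuousAt.mul (by fun_prop) c3
  · intro u v
    have small : ∀ u v, ‖u‖ ≤ 1 / 8 → ‖v‖ ≤ 1 / 8 →
        |F (u + v) + F (u - v) - 2 * F u - 2 * F v| ≤ 205 := by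
      intro u v hu hv
      have a0 := par u v (by linarith) (by linarith)
      have a1 := near (u + v) (by linarith [norm_add_le u v])
      have a2 := near (u - v) (by linarith [norm_sub_le u v])
      have a3 := near u (by linarith)
      have a4 := near v (by linarith)
      rw [abs_le] at *
      constructor <;>
        linarith [a0.1, a0.2, a1.1, a1.2, a2.1, a2.2, a3.1, a3.2, a4.1, a4.2]
    set m := max ‖u‖ ‖v‖ with hm
    have hmu : ‖u‖ ≤ m := le_max_left _ _
    have hmv : ‖v‖ ≤ m := le_max_right _ _
    have hm2 : m ^ 2 ≤ ‖u‖ ^ 2 + ‖v‖ ^ 2 := by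
      rcases max_choice ‖u‖ ‖v‖ with h | h <;> rw [hm, h] <;> nlinarith [sq_nonneg ‖u‖, sq_nonneg ‖v‖]
    rcases eq_or_lt_of_le ((norm_nonneg u).trans hmu) with h0 | hpos
    · have hu : u = 0 := norm_le_zero_iff.1 (by linarith)
      have hv : v = 0 := norm_le_zero_iff.1 (by linarith)
      simp [hu, hv, F0]
    · have sc : ∀ w : X, ‖w‖ ≤ m → ‖(1 / (8 * m)) • w‖ ≤ 1 / 8 := by
        intro w hw
        rw [norm_smul, Real.norm_of_nonneg (by positivity), div_mul_eq_mul_div,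
          div_le_div_iff₀ (by positivity) (by norm_num)]
        linarith
      have := small _ _ (sc u hmu) (sc v hmv)
      rw [← smul_add, ← smul_sub, hom, hom, hom, hom] at this
      have e : (1 / (8 * m)) ^ 2 * F (u + v) + (1 / (8 * m)) ^ 2 * F (u - v)
          - 2 * ((1 / (8 * m)) ^ 2 * F u) - 2 * ((1 / (8 * m)) ^ 2 * F v) =
          (F (u + v) + F (u - v) - 2 * F u - 2 * F v) / (64 * m ^ 2) := by
        field_simp
        ring
      rw [e, abs_div, abs_of_pos (by positivity : (0 : ℝ) < 64 * m ^ 2),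
        div_le_iff₀ (by positivity)] at this
      linarith
  · intro x hx
    have h4 : ‖(1 / 4 : ℝ) • x‖ ≤ 1 / 4 := by rw [norm_smul]; norm_num; linarith
    have a1 := near _ h4
    have a2 := dbl _ (h4.trans (by norm_num))
    have a3 := dbl ((1 / 2 : ℝ) • x) (by rw [norm_smul]; norm_num; linarith)
    rw [hom] at a1
    rw [smul_smul, show (2 * (1 / 4) : ℝ) = 1 / 2 by norm_num] at a2
    rw [smul_smul, show (2 * (1 / 2) : ℝ) = 1 by norm_num, one_smul] at a3
    rw [abs_le] at *
    constructor <;> linarith [a1.1, a1.2, a2.1, a2.2, a3.1, a3.2]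

lemma odd_struct (f : X → ℝ) (K0 : ℝ) (hK0 : ∀ x, ‖x‖ ≤ 1 → |f x| ≤ K0)
    (od : ∀ x, f (-x) = -f x)
    (add : ∀ u v, ‖u‖ ≤ 1 / 8 → ‖v‖ ≤ 1 / 8 → |f (u + v) - f u - f v| ≤ 7 / 2)
    (dbl : ∀ u, ‖u‖ ≤ 1 / 2 → |f ((2 : ℝ) • u) - 2 * f u| ≤ 1) :
    ∃ F : X → ℝ, (∀ (s : ℝ) x, F (s • x) = s * F x) ∧
      (∀ u v, |F (u + v) - F u - F v| ≤ 820 * (‖u‖ + ‖v‖)) ∧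
      ∀ x, ‖x‖ ≤ 1 → |f x - F x| ≤ 135 := by
  have f0 : f 0 = 0 := by
    have := od 0
    rw [neg_zero] at this
    linarith
  set F : X → ℝ := fun x => 4 * ‖x‖ * f ((1 / (4 * ‖x‖)) • x) with hF
  have nrm : ∀ x : X, ‖(1 / (4 * ‖x‖)) • x‖ ≤ 1 / 4 := by
    intro x
    rcases eq_or_ne x 0 with rfl | hx
    · simp
    · have : ‖x‖ ≠ 0 := norm_ne_zero_iff.2 hx
      rw [norm_smul, Real.norm_of_nonneg (by positivity)]
      apply le_of_eq
      field_simp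
  have F0 : F 0 = 0 := by simp [hF]
  have hom : ∀ (s : ℝ) x, F (s • x) = s * F x := by
    intro s x
    rcases eq_or_ne s 0 with rfl | hs
    · simp [F0]
    rcases eq_or_ne x 0 with rfl | hx
    · simp [F0]
    have hx' : ‖x‖ ≠ 0 := norm_ne_zero_iff.2 hx
    simp only [hF, norm_smul, Real.norm_eq_abs, smul_smul]
    rcases lt_or_gt_of_ne hs with h | h
    · rw [abs_of_neg h, show 1 / (4 * (-s * ‖x‖)) * s = -(1 / (4 * ‖x‖)) by field_simp,
        neg_smul, od]
      ring
    · rw [abs_of_pos h, show 1 / (4 * (s * ‖x‖)) * s = (1 / (4 * ‖x‖)) by field_simp]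
      ring
  have near : ∀ x, ‖x‖ ≤ 1 / 4 → |f x - F x| ≤ 33 := by
    intro x hx
    rcases eq_or_ne x 0 with rfl | hx0
    · simp [F0, f0]
    have hx' : ‖x‖ ≠ 0 := norm_ne_zero_iff.2 hx0
    set y := (1 / (4 * ‖x‖)) • x with hy
    have hyn : ‖y‖ ≤ 1 / 4 := nrm x
    have hbd : ∀ t ∈ Set.Icc (0 : ℝ) 1, ‖t • y‖ ≤ t * (1 / 4) := by
      intro t ht
      rw [norm_smul, Real.norm_of_nonneg ht.1]
      exact mul_le_mul_of_nonneg_left hyn ht.1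
    have := odd_1d (fun t => f (t • y) - t * f y) (2 * K0) ?_ ?_ ?_ ?_ (4 * ‖x‖)
      ⟨by positivity, by linarith⟩
    · have e : (4 * ‖x‖) • y = x := by
        rw [hy, smul_smul]
        rw [show 4 * ‖x‖ * (1 / (4 * ‖x‖)) = 1 by field_simp, one_smul]
      simp only [e] at this
      exact this
    · intro t ht
      have b1 := hK0 (t • y) (by linarith [hbd t ht, ht.2])
      have b2 := hK0 y (by linarith)
      have b4 : |t * f y| ≤ K0 := by
        rw [abs_mul, abs_of_nonneg ht.1]
        nlinarith [abs_nonneg (f y), ht.2]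
      calc _ ≤ |f (t • y)| + |t * f y| := abs_sub _ _
        _ ≤ _ := by linarith
    · simp
    · intro s hs
      have := dbl (s • y) (by linarith [hbd s ⟨hs.1, by linarith [hs.2]⟩, hs.2])
      rw [smul_smul] at this
      convert this using 2
      ring
    · intro t ht
      have := add ((1 / 2 : ℝ) • y) ((t - 1 / 2) • y)
        (by linarith [hbd (1 / 2) ⟨by norm_num, by norm_num⟩])
        (by linarith [hbd (t - 1 / 2) ⟨by linarith [ht.1], by linarith [ht.2]⟩, ht.2])
      rw [← add_smul] at this
      rw [show (1 / 2 + (t - 1 / 2) : ℝ) = t by ring] at this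
      convert this using 2
      ring
  refine ⟨F, hom, ?_, ?_⟩
  · intro u v
    have small : ∀ u v, ‖u‖ ≤ 1 / 8 → ‖v‖ ≤ 1 / 8 →
        |F (u + v) - F u - F v| ≤ 205 / 2 := by
      intro u v hu hv
      have a0 := add u v (by linarith) (by linarith)
      have a1 := near (u + v) (by linarith [norm_add_le u v])
      have a3 := near u (by linarith)
      have a4 := near v (by linarith)
      rw [abs_le] at *
      constructor <;>
        linarith [a0.1, a0.2, a1.1, a1.2, a3.1, a3.2, a4.1, a4.2]
    set m := ‖u‖ + ‖v‖ with hm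
    have hmu : ‖u‖ ≤ m := by linarith [norm_nonneg v]
    have hmv : ‖v‖ ≤ m := by linarith [norm_nonneg u]
    rcases eq_or_lt_of_le ((norm_nonneg u).trans hmu) with h0 | hpos
    · have hu : u = 0 := norm_le_zero_iff.1 (by linarith)
      have hv : v = 0 := norm_le_zero_iff.1 (by linarith)
      simp [hu, hv, F0, ← h0]
    · have sc : ∀ w : X, ‖w‖ ≤ m → ‖(1 / (8 * m)) • w‖ ≤ 1 / 8 := by
        intro w hw
        rw [norm_smul, Real.norm_of_nonneg (by positivity), div_mul_eq_mul_div,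
          div_le_div_iff₀ (by positivity) (by norm_num)]
        linarith
      have := small _ _ (sc u hmu) (sc v hmv)
      rw [← smul_add, hom, hom, hom] at this
      have e : (1 / (8 * m)) * F (u + v) - (1 / (8 * m)) * F u - (1 / (8 * m)) * F v =
          (F (u + v) - F u - F v) / (8 * m) := by
        ring
      rw [e, abs_div, abs_of_pos (by positivity : (0 : ℝ) < 8 * m),
        div_le_iff₀ (by positivity)] at this
      linarith
  · intro x hx
    have h4 : ‖(1 / 4 : ℝ) • x‖ ≤ 1 / 4 := by rw [norm_smul]; norm_num; linarith
    have a1 := near _ h4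
    have a2 := dbl _ (h4.trans (by norm_num))
    have a3 := dbl ((1 / 2 : ℝ) • x) (by rw [norm_smul]; norm_num; linarith)
    rw [hom] at a1
    rw [smul_smul, show (2 * (1 / 4) : ℝ) = 1 / 2 by norm_num] at a2
    rw [smul_smul, show (2 * (1 / 2) : ℝ) = 1 by norm_num, one_smul] at a3
    rw [abs_le] at *
    constructor <;> linarith [a1.1, a1.2, a2.1, a2.2, a3.1, a3.2]

end Diff

section Assemble

/-- The space of symmetric bilinear forms. -/
def symForms (X : Type*) [AddCommGroup X] [Module ℝ X] :
    Submodule ℝ (X →ₗ[ℝ] X →ₗ[ℝ] ℝ) where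
  carrier := {B | ∀ x y, B x y = B y x}
  add_mem' := by
    intro a b ha hb x y
    simp [ha x y, hb x y]
  zero_mem' := by intro x y; simp
  smul_mem' := by
    intro c a ha x y
    simp [ha x y]

variable {X : Type*} [NormedAddCommGroup X] [NormedSpace ℝ X] [FiniteDimensional ℝ X]

lemma even_approx {T : ℝ} (hT : 1 ≤ T) (hX : HasType2Const X T) (F : X → ℝ) {D K : ℝ}
    (hD : 0 ≤ D) (hF : Continuous F) (hK : ∀ x, |F x| ≤ K * ‖x‖ ^ 2)
    (hom : ∀ (s : ℝ) x, F (s • x) = s ^ 2 * F x)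
    (par : ∀ u v, |F (u + v) + F (u - v) - 2 * F u - 2 * F v| ≤ D * (‖u‖ ^ 2 + ‖v‖ ^ 2))
    (k : ℕ) (hk : Module.finrank ℝ X * Module.finrank ℝ X + 1 ≤ 2 ^ k) :
    ∃ B : X →ₗ[ℝ] X →ₗ[ℝ] ℝ, (∀ x y, B x y = B y x) ∧
      ∀ x, ‖x‖ ≤ 1 → |F x - B x x| ≤ k * (D * T ^ 2) := by
  letI : MeasurableSpace X := borel X
  haveI : BorelSpace X := ⟨rfl⟩
  let e : {x : X // ‖x‖ ≤ 1} → symForms X →ₗ[ℝ] ℝ := fun x =>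
    { toFun := fun B => B.1 x.1 x.1
      map_add' := by intro a b; simp
      map_smul' := by intro a b; simp }
  have hdim : Module.finrank ℝ (symForms X) ≤ Module.finrank ℝ X * Module.finrank ℝ X := by
    refine (Submodule.finrank_le _).trans (le_of_eq ?_)
    rw [Module.finrank_linearMap, Module.finrank_linearMap]
    simp
  have sep : ∀ w : symForms X, (∀ s, e s w = 0) → w = 0 := by
    rintro ⟨B, hB⟩ h
    have hB' : ∀ x y, B x y = B y x := hB
    have h0 : ∀ x, B x x = 0 := by
      intro x
      rcases eq_or_ne x 0 with rfl | hx
      · simp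
      have hx' : ‖x‖ ≠ 0 := norm_ne_zero_iff.2 hx
      have := h ⟨(‖x‖⁻¹) • x, by rw [norm_smul]; simp [hx']⟩
      simpa [e, hx] using this
    have : B = 0 := by
      ext x y
      have h1 := h0 (x + y)
      simp only [map_add, LinearMap.add_apply, h0] at h1
      have h2 := hB' x y
      simp
      linarith
    exact Subtype.ext this
  have H : ∀ N : ℕ, N ≤ Module.finrank ℝ (symForms X) + 1 → ∀ p : Fin N → {x : X // ‖x‖ ≤ 1},
      ∀ a : Fin N → ℝ, (∀ w, ∑ i, a i * e (p i) w = 0) →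
      |∑ i, a i * F (p i).1| ≤ k * (D * T ^ 2) * ∑ i, |a i| := by
    intro N hN p a ha
    refine even_dual hT hD hX F hF hK hom par (fun i => (p i).1) (fun i => (p i).2) a k
      (by omega) fun l => ?_
    have := ha ⟨(l : X →ₗ[ℝ] ℝ).smulRight (l : X →ₗ[ℝ] ℝ), by
      intro x y
      simp [mul_comm]⟩
    simpa [e, pow_two] using this
  letI : AddCommGroup (symForms X) := Module.addCommMonoidToAddCommGroup ℝ
  obtain ⟨w, hw⟩ := approx (V := symForms X) e sep (fun x : {x : X // ‖x‖ ≤ 1} => F x.1)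
    (M := k * (D * T ^ 2)) (by positivity) H
  exact ⟨w.1, w.2, fun x hx => hw ⟨x, hx⟩⟩

lemma odd_approx (F : X → ℝ) {D : ℝ}
    (hD : 0 ≤ D) (hom : ∀ (s : ℝ) x, F (s • x) = s * F x)
    (add : ∀ u v, |F (u + v) - F u - F v| ≤ D * (‖u‖ + ‖v‖))
    (k : ℕ) (hk : Module.finrank ℝ X + 1 ≤ 2 ^ k) :
    ∃ g : X →ₗ[ℝ] ℝ, ∀ x, ‖x‖ ≤ 1 → |F x - g x| ≤ k * D := by
  let e : {x : X // ‖x‖ ≤ 1} → (X →ₗ[ℝ] ℝ) →ₗ[ℝ] ℝ := fun x => LinearMap.applyₗ x.1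
  have hdim : Module.finrank ℝ (X →ₗ[ℝ] ℝ) = Module.finrank ℝ X := by
    rw [Module.finrank_linearMap]
    simp
  have sep : ∀ w : X →ₗ[ℝ] ℝ, (∀ s, e s w = 0) → w = 0 := by
    intro g h
    ext x
    rcases eq_or_ne x 0 with rfl | hx
    · simp
    have hx' : ‖x‖ ≠ 0 := norm_ne_zero_iff.2 hx
    have := h ⟨(‖x‖⁻¹) • x, by rw [norm_smul]; simp [hx']⟩
    simpa [e, hx] using this
  have H : ∀ N : ℕ, N ≤ Module.finrank ℝ (X →ₗ[ℝ] ℝ) + 1 →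
      ∀ p : Fin N → {x : X // ‖x‖ ≤ 1},
      ∀ a : Fin N → ℝ, (∀ w, ∑ i, a i * e (p i) w = 0) →
      |∑ i, a i * F (p i).1| ≤ k * D * ∑ i, |a i| := by
    intro N hN p a ha
    refine odd_dual hD F hom add (fun i => (p i).1) (fun i => (p i).2) a k (by omega) ?_
    rw [← Module.forall_dual_apply_eq_zero_iff ℝ]
    intro l
    have := ha l
    simpa [e] using this
  obtain ⟨w, hw⟩ := approx (V := X →ₗ[ℝ] ℝ) e sep (fun x : {x : X // ‖x‖ ≤ 1} => F x.1)
    (M := k * D) (by positivity) H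
  exact ⟨w, fun x hx => hw ⟨x, hx⟩⟩

lemma log_bound (n : ℕ) (hn : 1 ≤ n) :
    ∃ k : ℕ, n * n + 1 ≤ 2 ^ k ∧ (k : ℝ) ≤ 5 * Real.log (n + 1) := by
  refine ⟨Nat.clog 2 (n * n + 1), Nat.le_pow_clog (by norm_num) _, ?_⟩
  set k := Nat.clog 2 (n * n + 1) with hk
  have h1 : 2 ^ (k - 1) < n * n + 1 := Nat.pow_pred_clog_lt_self (by norm_num) (by nlinarith)
  have hkpos : 0 < k := Nat.clog_pos (by norm_num) (by nlinarith)
  have h2 : 2 ^ k ≤ 2 * ((n + 1) ^ 2) := by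
    obtain ⟨j, hj⟩ : ∃ j, k = j + 1 := ⟨k - 1, by omega⟩
    rw [hj] at h1 ⊢
    simp only [Nat.add_sub_cancel] at h1
    rw [pow_succ]
    nlinarith
  have h3 : (2 : ℝ) ^ k ≤ 2 * ((n : ℝ) + 1) ^ 2 := by exact_mod_cast h2
  have h4 := Real.log_le_log (by positivity) h3
  rw [Real.log_pow, Real.log_mul (by norm_num) (by positivity), Real.log_pow] at h4
  have h5 : Real.log 2 ≤ Real.log (n + 1) := by
    apply Real.log_le_log (by norm_num)
    have : (1 : ℝ) ≤ n := by exact_mod_cast hn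
    linarith
  have h6 := Real.log_two_gt_d9
  push_cast at h4
  have h7 : (0 : ℝ) ≤ k := by positivity
  nlinarith

end Assemble

/-- Upper bound of Theorem 4.5: `w₃(X) ≤ C T₂(X)² log(n+1)`. -/
theorem whitney_three_type2_upper_bound :
    ∃ C : ℝ, ∀ n : ℕ, 1 ≤ n →
      ∀ (X : Type) [NormedAddCommGroup X] [NormedSpace ℝ X], FiniteDimensional ℝ X →
        Module.finrank ℝ X = n → ∀ T : ℝ, 1 ≤ T → HasType2Const X T →
          ∀ f : X → ℝ, ContinuousOn f (Metric.closedBall 0 1) →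
            diffBound 3 (Metric.closedBall 0 1) f 1 →
            ∃ (c : ℝ) (g : X →ₗ[ℝ] ℝ) (B : X →ₗ[ℝ] X →ₗ[ℝ] ℝ), (∀ x y, B x y = B y x) ∧
              ∀ x ∈ Metric.closedBall (0 : X) 1,
                |f x - (c + g x + B x x)| ≤ C * T ^ 2 * Real.log (n + 1) := by
  refine ⟨72000, ?_⟩
  intro n hn X _ _ hfd hdim T hT hX f hc hf
  obtain ⟨K0, hK0⟩ : ∃ K0, ∀ x : X, ‖x‖ ≤ 1 → |f x| ≤ K0 := by
    have := FiniteDimensional.proper ℝ X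
    obtain ⟨K0, h⟩ := (isCompact_closedBall (0 : X) 1).exists_bound_of_continuousOn hc
    exact ⟨K0, fun x hx => h x (mem_closedBall_zero_iff.2 hx)⟩
  have hcneg : ContinuousOn (fun x => f (-x)) (Metric.closedBall (0 : X) 1) := by
    refine hc.comp continuous_neg.continuousOn ?_
    intro x hx
    simpa using hx
  have hdbl : ∀ u : X, ‖u‖ ≤ 1 / 2 →
      |f ((2 : ℝ) • u) - 3 * f u + 3 * f 0 - f (-u)| ≤ 1 := by
    intro u hu
    refine third_diff hf (-u) u 0 u ((2 : ℝ) • u) (by module) (by module) (by module) ?_ ?_ ?_ ?_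
    · rw [norm_neg]; linarith
    · simp
    · linarith
    · rw [norm_smul]; norm_num; linarith
  obtain ⟨F, K, hF, hK, homF, parF, nearF⟩ := even_struct
    (fun x => (f x + f (-x)) / 2 - f 0) (2 * K0)
    (by
      intro x hx
      have a1 := hK0 x hx
      have a2 := hK0 (-x) (by rwa [norm_neg])
      have a3 := hK0 0 (by simp)
      rw [abs_le] at *
      constructor <;> linarith [a1.1, a1.2, a2.1, a2.2, a3.1, a3.2])
    (((hc.add hcneg).div_const 2).sub continuousOn_const)
    (by intro x; simp only [neg_neg]; ring)
    (by simp)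
    (by
      intro u v hu hv
      have m1 := mixed_diff hf u v (-u) (by rw [norm_neg]; linarith)
      have m2 := mixed_diff hf (-u) (-v) u (by rw [norm_neg, norm_neg]; linarith)
      rw [show u + v + -u = v by abel, show u + -u = 0 by abel,
        show v + -u = -(u - v) by abel] at m1
      rw [show -u + -v + u = -v by abel, show -u + u = 0 by abel,
        show -v + u = u - v by abel, show -u + -v = -(u + v) by abel] at m2
      rw [abs_le] at *
      constructor <;> linarith [m1.1, m1.2, m2.1, m2.2])
    (by
      intro u hu
      have m1 := hdbl u hu
      have m2 := hdbl (-u) (by rwa [norm_neg])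
      rw [smul_neg, neg_neg] at m2
      rw [abs_le] at *
      constructor <;> linarith [m1.1, m1.2, m2.1, m2.2])
  obtain ⟨G, homG, addG, nearG⟩ := odd_struct
    (fun x => (f x - f (-x)) / 2) K0
    (by
      intro x hx
      have a1 := hK0 x hx
      have a2 := hK0 (-x) (by rwa [norm_neg])
      rw [abs_le] at *
      constructor <;> linarith [a1.1, a1.2, a2.1, a2.2])
    (by intro x; simp only [neg_neg]; ring)
    (by
      intro u v hu hv
      have m1 := mixed_diff hf u v (-(u + v))
        (by rw [norm_neg]; linarith [norm_add_le u v])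
      rw [show u + v + -(u + v) = 0 by abel, show u + -(u + v) = -v by abel,
        show v + -(u + v) = -u by abel] at m1
      rw [abs_le] at *
      constructor <;> linarith [m1.1, m1.2])
    (by
      intro u hu
      have m1 := hdbl u hu
      have m2 := hdbl (-u) (by rwa [norm_neg])
      rw [smul_neg, neg_neg] at m2
      rw [abs_le] at *
      constructor <;> linarith [m1.1, m1.2, m2.1, m2.2])
  obtain ⟨k, hk, hklog⟩ := log_bound n hn
  obtain ⟨B, hBsym, hB⟩ := even_approx hT hX F (by norm_num) hF hK homF parF k
    (by rw [hdim]; exact hk)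
  obtain ⟨g, hg⟩ := odd_approx G (by norm_num) homG addG k (by rw [hdim]; nlinarith)
  refine ⟨f 0, g, B, hBsym, fun x hx => ?_⟩
  rw [mem_closedBall_zero_iff] at hx
  have b1 := nearF x hx
  have b2 := nearG x hx
  have b3 := hB x hx
  have b4 := hg x hx
  have hlog : (1 / 2 : ℝ) ≤ Real.log (n + 1) := by
    have h5 : Real.log 2 ≤ Real.log (n + 1) := by
      apply Real.log_le_log (by norm_num)
      have : (1 : ℝ) ≤ n := by exact_mod_cast hn
      linarith
    linarith [Real.log_two_gt_d9]
  have hT2 : 1 ≤ T ^ 2 := one_le_pow₀ hT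
  have c1 : (k : ℝ) * (13120 * T ^ 2) ≤ (5 * Real.log (n + 1)) * (13120 * T ^ 2) := by gcongr
  have c2 : Real.log (n + 1) ≤ T ^ 2 * Real.log (n + 1) := by nlinarith
  have total : |f x - (f 0 + g x + B x x)| ≤ 533 + 135 + k * (13120 * T ^ 2) + k * 820 := by
    rw [abs_le] at *
    constructor <;> linarith [b1.1, b1.2, b2.1, b2.2, b3.1, b3.2, b4.1, b4.2]
  linarith
end
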